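/- arXiv:0708.1547 — 3 statements merged into one kernel-verified Lean document; each statement's English description precedes it below -/
import Mathlib

section
/- Let n ≥ 3. There is a constant C depending only on n such that for every τ ∈ ℂ with Im τ < 0 and every Schwartz function ψ on ℝⁿ, the resolvent R⁻(τ)ψ := F^{−1}(ξ ↦ (4π²|ξ|² − τ)^{−1} ψ̂(ξ)) satisfies ‖R⁻(τ)ψ‖_{L^{2n/(n−2)}(ℝⁿ)} ≤ C ‖⟨x⟩ψ‖_{L²(ℝⁿ)}, with C uniform over the entire open lower half-plane {Im τ < 0}. -/
open MeasureTheory Complex FourierTransform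
open scoped ENNReal Real

noncomputable section

open SchwartzMap LineDeriv Laplacian Filter Topology
open scoped ContDiff NNReal

/-!
By the Sobolev inequality it suffices to find `w` with `|w| = |u|`, `u = R⁻(τ)ψ`, and
`‖∇w‖₂ ≤ C ‖⟨x⟩ψ‖₂`. Pairing the equation `-Δu - τu = ψ` with `u` and `iu` and using Hardy's
inequality does this for `w = u` when `Re τ ≤ |Im τ|`. Otherwise take `k` real with `k² = Re τ` and
the sign of `-Im τ`, and put `w = e^{ikρ} u` with `ρ = √(η² + |x|²)`, `η` small against `1/|k|`.
This removes the oscillation of `u`: with `c = -Im τ / (2k) ≥ 0`, the term `k² - τ` left over from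
the phase becomes `2ick`. Pairing the conjugated equation with the Morawetz multiplier
`(x·∇ + (n-1)/2 + cρ) w`, the terms of size `k` cancel, and what remains controls `‖∇w‖₂²` with a
constant free of `k` and `c`; the errors are absorbed by Hardy's inequality.
-/

section TemperateGrowth

variable {E F : Type*} [NormedAddCommGroup E] [NormedSpace ℝ E] [NormedAddCommGroup F]
  [NormedSpace ℝ F]

theorem iteratedDerivWithin_eq_of_hasDerivWithinAt {g : ℕ → ℝ → F} {s : Set ℝ}
    (hs : UniqueDiffOn ℝ s) (hg : ∀ m, ∀ t ∈ s, HasDerivWithinAt (g m) (g (m + 1) t) s t) (m : ℕ) :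
    ∀ t ∈ s, iteratedDerivWithin m (g 0) s t = g m t := by
  induction m with
  | zero => simp
  | succ m ih =>
    intro t ht
    rw [iteratedDerivWithin_succ, derivWithin_congr ih (ih t ht)]
    exact (hg m t ht).derivWithin (hs t ht)

theorem hasTemperateGrowth_comp_of_hasDerivWithinAt {f : E → ℝ}
    (hf : f.HasTemperateGrowth) {s : Set ℝ} (hs : UniqueDiffOn ℝ s) (hfs : ∀ x, f x ∈ s)
    {g : ℕ → ℝ → F} (hg : ∀ m, ∀ t ∈ s, HasDerivWithinAt (g m) (g (m + 1) t) s t)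
    (hbound : ∀ m, ∃ C, ∀ t ∈ s, ‖g m t‖ ≤ C) : (g 0 ∘ f).HasTemperateGrowth := by
  have hiter := iteratedDerivWithin_eq_of_hasDerivWithinAt hs hg
  choose C hC using hbound
  refine hf.comp' (Set.range_subset_iff.2 hfs) hs ?_ fun N =>
    ⟨0, ∑ m ∈ Finset.range (N + 1), |C m|, by positivity, fun m hm t ht => ?_⟩
  · exact contDiffOn_of_differentiableOn_deriv fun m _ t ht =>
      ((hg m t ht).congr (hiter m) (hiter m t ht)).differentiableWithinAt
  · rw [norm_iteratedFDerivWithin_eq_norm_iteratedDerivWithin, hiter m t ht, pow_zero, mul_one]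
    exact ((hC m t ht).trans (le_abs_self _)).trans <| Finset.single_le_sum
      (f := fun m => |C m|) (fun _ _ => abs_nonneg _) (Finset.mem_range_succ_iff.2 hm)

theorem hasTemperateGrowth_cexp_mul_I {θ : E → ℝ} (hθ : θ.HasTemperateGrowth) :
    (fun x => cexp (θ x * I)).HasTemperateGrowth := by
  have hderiv (m : ℕ) (t : ℝ) : HasDerivAt (fun t : ℝ => I ^ m * cexp (t * I))
      (I ^ (m + 1) * cexp (t * I)) t := by
    convert! (((hasDerivAt_id t).ofReal_comp.mul_const I).cexp.const_mul (I ^ m)) using 1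
    simp only [id_eq, ofReal_one, one_mul]
    ring
  have h := hasTemperateGrowth_comp_of_hasDerivWithinAt hθ uniqueDiffOn_univ
    (fun x => Set.mem_univ _) (g := fun m t => I ^ m * cexp (t * I))
    (fun m t _ => (hderiv m t).hasDerivWithinAt)
    (fun m => ⟨1, fun t _ => by simp [Complex.norm_exp_ofReal_mul_I]⟩)
  simpa [Function.comp_def] using h

theorem exists_pos_le_norm_ofReal_sub {τ : ℂ} (hτ : -τ ∈ slitPlane) :
    ∃ ε > 0, ∀ t : ℝ, 0 ≤ t → ε ≤ ‖(t : ℂ) - τ‖ := by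
  have hclosed : IsClosed (Complex.ofReal '' Set.Ici 0) :=
    Complex.isUniformEmbedding_ofReal.isClosedEmbedding.isClosedMap _ isClosed_Ici
  have hmem : τ ∉ Complex.ofReal '' Set.Ici 0 := by
    rintro ⟨t, ht, rfl⟩
    rcases hτ with h | h
    · exact ((neg_re _).symm.trans_gt h).not_ge (neg_nonpos.2 ht)
    · simp at h
  obtain ⟨ε, hε, h⟩ := Metric.isOpen_iff.1 hclosed.isOpen_compl τ hmem
  refine ⟨ε, hε, fun t ht => not_lt.1 fun hlt => h (?_ : (t : ℂ) ∈ _) ⟨t, ht, rfl⟩⟩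
  rwa [mem_ball_iff_norm]

theorem hasTemperateGrowth_inv_ofReal_sub {f : E → ℝ}
    (hf : f.HasTemperateGrowth) (hf0 : ∀ x, 0 ≤ f x) {τ : ℂ} (hτ : -τ ∈ slitPlane) :
    (fun x => ((f x : ℂ) - τ)⁻¹).HasTemperateGrowth := by
  obtain ⟨ε, hε, hle⟩ := exists_pos_le_norm_ofReal_sub hτ
  let g (m : ℕ) (t : ℝ) : ℂ := (-1) ^ m * m.factorial * ((t : ℂ) - τ)⁻¹ ^ (m + 1)
  have hderiv (m : ℕ) (t : ℝ) (ht : 0 ≤ t) : HasDerivAt (g m) (g (m + 1) t) t := by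
    have hne : (t : ℂ) - τ ≠ 0 := norm_pos_iff.1 (hε.trans_le (hle t ht))
    convert! ((((hasDerivAt_id t).ofReal_comp.sub_const τ).inv hne).pow (m + 1)).const_mul
      ((-1 : ℂ) ^ m * m.factorial) using 1
    simp only [g, Nat.factorial_succ, id, Pi.inv_apply, div_eq_mul_inv, ← inv_pow]
    push_cast
    ring
  have h := hasTemperateGrowth_comp_of_hasDerivWithinAt hf (uniqueDiffOn_Ici 0) hf0
    (fun m t ht => (hderiv m t ht).hasDerivWithinAt)
    (fun m => ⟨m.factorial * ε⁻¹ ^ (m + 1), fun t ht => by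
      simp only [g, norm_mul, norm_pow, norm_neg, norm_one, one_pow, one_mul, norm_inv,
        Complex.norm_natCast]
      gcongr
      exact hle t ht⟩)
  simpa [Function.comp_def, g] using h

end TemperateGrowth

section RegularizedNorm

/-- The smooth regularization `√(η² + ‖x‖²)` of the norm; for `η = 1` it is the Japanese bracket
`⟨x⟩`. -/
def regNorm {E : Type*} [Norm E] (η : ℝ) (x : E) : ℝ := √(η ^ 2 + ‖x‖ ^ 2)

section Norm

variable {E : Type*} [NormedAddCommGroup E] {η : ℝ}

theorem regNorm_sq (η : ℝ) (x : E) : regNorm η x ^ 2 = η ^ 2 + ‖x‖ ^ 2 :=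
  Real.sq_sqrt (by positivity)

theorem regNorm_pos (hη : 0 < η) (x : E) : 0 < regNorm η x :=
  Real.sqrt_pos.2 (by positivity)

theorem le_regNorm (η : ℝ) (x : E) : η ≤ regNorm η x :=
  Real.le_sqrt_of_sq_le (by linarith [sq_nonneg ‖x‖])

theorem norm_le_regNorm (η : ℝ) (x : E) : ‖x‖ ≤ regNorm η x :=
  Real.le_sqrt_of_sq_le (by linarith [sq_nonneg η])

theorem regNorm_eq_mul_rpow (hη : 0 < η) [NormedSpace ℝ E] (x : E) :
    regNorm η x = η * (1 + ‖η⁻¹ • x‖ ^ 2) ^ (1 / 2 : ℝ) := by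
  rw [← Real.sqrt_eq_rpow, regNorm, norm_smul, Real.norm_of_nonneg (inv_nonneg.2 hη.le),
    ← Real.sqrt_sq hη.le, ← Real.sqrt_mul (sq_nonneg _), Real.sqrt_sq hη.le]
  congr 1
  field_simp

end Norm

variable {E : Type*} [NormedAddCommGroup E] [InnerProductSpace ℝ E] {η : ℝ}

theorem hasFDerivAt_regNorm (hη : 0 < η) (x : E) :
    HasFDerivAt (regNorm η) ((regNorm η x)⁻¹ • innerSL ℝ x) x := by
  have h := ((hasStrictFDerivAt_norm_sq x).hasFDerivAt.const_add (η ^ 2)).sqrt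
    (by positivity : η ^ 2 + ‖x‖ ^ 2 ≠ 0)
  refine h.congr_fderiv ?_
  ext v
  simp only [regNorm, one_div, mul_inv_rev, _root_.smul_apply, coe_innerSL_apply, nsmul_eq_mul,
    Nat.cast_ofNat, smul_eq_mul]
  ring

theorem hasFDerivAt_regNorm_inv (hη : 0 < η) (x : E) :
    HasFDerivAt (fun x : E => (regNorm η x)⁻¹) (-(regNorm η x)⁻¹ ^ 3 • innerSL ℝ x) x := by
  refine ((hasDerivAt_inv (regNorm_pos hη x).ne').comp_hasFDerivAt x
    (hasFDerivAt_regNorm hη x)).congr_fderiv ?_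
  rw [smul_smul]
  congr 1
  ring

theorem hasTemperateGrowth_regNorm_rpow (hη : 0 < η) (r : ℝ) :
    (fun x : E => regNorm η x ^ r).HasTemperateGrowth := by
  have hscale (x : E) :
      regNorm η x ^ r = η ^ r * (1 + ‖(η⁻¹ • ContinuousLinearMap.id ℝ E) x‖ ^ 2) ^ (r / 2) := by
    rw [regNorm_eq_mul_rpow hη, Real.mul_rpow hη.le (by positivity),
      ← Real.rpow_mul (by positivity), one_div_mul_eq_div]
    rfl
  simp only [hscale]
  exact (Function.HasTemperateGrowth.const _).mul
    ((Function.hasTemperateGrowth_one_add_norm_sq_rpow E (r / 2)).comp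
      (ContinuousLinearMap.hasTemperateGrowth _))

theorem hasTemperateGrowth_regNorm (hη : 0 < η) :
    (regNorm η : E → ℝ).HasTemperateGrowth := by
  simpa using hasTemperateGrowth_regNorm_rpow (E := E) hη 1

theorem hasTemperateGrowth_regNorm_inv (hη : 0 < η) :
    (fun x : E => (regNorm η x)⁻¹).HasTemperateGrowth := by
  simpa [Real.rpow_neg_one] using hasTemperateGrowth_regNorm_rpow (E := E) hη (-1)

end RegularizedNorm

section EulerOperator

variable {E F : Type*} [NormedAddCommGroup E] [NormedSpace ℝ E] [NormedAddCommGroup F]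
  [NormedSpace ℝ F]

theorem lineDerivOp_smulLeftCLM {𝕜 : Type*} [RCLike 𝕜] [NormedSpace 𝕜 F]
    [IsScalarTower ℝ 𝕜 F] {a : E → 𝕜} (ha : a.HasTemperateGrowth) (f : 𝓢(E, F)) (v x : E) :
    ∂_{v} (smulLeftCLM F a f) x = fderiv ℝ a x v • f x + a x • ∂_{v} f x := by
  have hda : HasFDerivAt a (fderiv ℝ a x) x :=
    (ha.1.differentiable (by simp)).differentiableAt.hasFDerivAt
  rw [lineDerivOp_apply_eq_fderiv, smulLeftCLM_apply ha, lineDerivOp_apply_eq_fderiv]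
  refine (congrArg (fun L => L v) (hda.smul (f.hasFDerivAt x)).fderiv).trans ?_
  simp [add_comm]

/-- The Euler operator `f ↦ x · ∇f`, the generator of dilations, on Schwartz functions. -/
def eulerDeriv (f : 𝓢(E, F)) : 𝓢(E, F) :=
  bilinLeftCLM (ContinuousLinearMap.id ℝ (E →L[ℝ] F)) Function.HasTemperateGrowth.id
    (fderivCLM ℝ E F f)

theorem eulerDeriv_apply (f : 𝓢(E, F)) (x : E) : eulerDeriv f x = fderiv ℝ f x x := rfl

theorem eulerDeriv_eq_lineDerivOp (f : 𝓢(E, F)) (x : E) : eulerDeriv f x = ∂_{x} f x := by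
  rw [eulerDeriv_apply, lineDerivOp_apply_eq_fderiv]

theorem lineDerivOp_eulerDeriv (f : 𝓢(E, F)) (v x : E) :
    ∂_{v} (eulerDeriv f) x = ∂_{v} f x + eulerDeriv (∂_{v} f) x := by
  have hdf := (fderivCLM ℝ E F f).hasFDerivAt x
  have hsymm := second_derivative_symmetric (fun y => f.hasFDerivAt y) hdf
  have hX : HasFDerivAt (eulerDeriv f) _ x := hdf.clm_apply (hasFDerivAt_id x)
  have hv : HasFDerivAt (∂_{v} f : 𝓢(E, F)) _ x := hdf.clm_apply (hasFDerivAt_const v x)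
  rw [lineDerivOp_apply_eq_fderiv, eulerDeriv_apply, hX.fderiv, hv.fderiv,
    lineDerivOp_apply_eq_fderiv]
  simp [hsymm x v]

end EulerOperator

section IntegrationByParts

variable {E F : Type*} [NormedAddCommGroup E] [InnerProductSpace ℝ E] [NormedAddCommGroup F]

theorem sum_inner_smul_lineDerivOp [NormedSpace ℝ F] {ι : Type*} [Fintype ι]
    (b : OrthonormalBasis ι ℝ E) (f : 𝓢(E, F)) (x v : E) :
    ∑ i, inner ℝ (b i) v • ∂_{b i} f x = ∂_{v} f x := by
  simp only [lineDerivOp_apply_eq_fderiv, ← map_smul, ← map_sum, b.sum_repr']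

variable [InnerProductSpace ℝ F] [FiniteDimensional ℝ E]

/-- The squared Euclidean (Hilbert–Schmidt) norm `|∇f|²` of the gradient of a Schwartz function,
computed in the standard orthonormal basis. -/
def gradSq (f : 𝓢(E, F)) (x : E) : ℝ := ∑ i, ‖∂_{stdOrthonormalBasis ℝ E i} f x‖ ^ 2

theorem gradSq_nonneg (f : 𝓢(E, F)) (x : E) : 0 ≤ gradSq f x :=
  Finset.sum_nonneg fun _ _ => sq_nonneg _

theorem continuous_gradSq (f : 𝓢(E, F)) : Continuous (gradSq f) :=
  continuous_finsetSum _ fun i _ => (∂_{stdOrthonormalBasis ℝ E i} f).continuous.norm.pow 2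

theorem norm_lineDerivOp_le (f : 𝓢(E, F)) (v x : E) :
    ‖∂_{v} f x‖ ≤ √(gradSq f x) * ‖v‖ := by
  set b := stdOrthonormalBasis ℝ E
  calc ‖∂_{v} f x‖ = ‖∑ i, inner ℝ (b i) v • ∂_{b i} f x‖ := by
        rw [sum_inner_smul_lineDerivOp]
    _ ≤ ∑ i, ‖∂_{b i} f x‖ * ‖inner ℝ (b i) v‖ := by
        refine (norm_sum_le _ _).trans_eq (Finset.sum_congr rfl fun i _ => ?_)
        rw [norm_smul, mul_comm]
    _ ≤ √(∑ i, ‖∂_{b i} f x‖ ^ 2) * √(∑ i, ‖inner ℝ (b i) v‖ ^ 2) :=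
        Real.sum_mul_le_sqrt_mul_sqrt _ _ _
    _ = √(gradSq f x) * ‖v‖ := by
        rw [b.sum_sq_norm_inner_right, Real.sqrt_sq (norm_nonneg _)]
        rfl

theorem norm_fderiv_le_sqrt_gradSq (f : 𝓢(E, F)) (x : E) : ‖fderiv ℝ f x‖ ≤ √(gradSq f x) :=
  ContinuousLinearMap.opNorm_le_bound _ (Real.sqrt_nonneg _) fun v => by
    simpa only [lineDerivOp_apply_eq_fderiv] using norm_lineDerivOp_le f v x

theorem norm_eulerDeriv_le (f : 𝓢(E, F)) (x : E) :
    ‖eulerDeriv f x‖ ≤ √(gradSq f x) * ‖x‖ := by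
  rw [eulerDeriv_eq_lineDerivOp]
  exact norm_lineDerivOp_le f x x

theorem sum_inner_lineDerivOp_smulLeftCLM {a : E → ℝ} (ha : a.HasTemperateGrowth) (f : 𝓢(E, F))
    (x : E) :
    ∑ i, inner ℝ (∂_{stdOrthonormalBasis ℝ E i} f x)
        (∂_{stdOrthonormalBasis ℝ E i} (smulLeftCLM F a f) x) =
      a x * gradSq f x + inner ℝ (∂_{gradient a x} f x) (f x) := by
  set b := stdOrthonormalBasis ℝ E
  rw [← sum_inner_smul_lineDerivOp b, gradSq, Finset.mul_sum, sum_inner, ← Finset.sum_add_distrib]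
  refine Finset.sum_congr rfl fun i _ => ?_
  rw [lineDerivOp_smulLeftCLM ha, inner_add_right, real_inner_smul_right, real_inner_smul_right,
    real_inner_smul_left, real_inner_self_eq_norm_sq, real_inner_comm (gradient a x),
    inner_gradient_left]
  ring

variable [MeasurableSpace E] [BorelSpace E]

theorem integrable_inner_schwartz (f g : 𝓢(E, F)) : Integrable fun x => inner ℝ (f x) (g x) :=
  (pairing (innerSL ℝ) f g).integrable

theorem integrable_mul_inner_schwartz {a : E → ℝ} (ha : a.HasTemperateGrowth) (f g : 𝓢(E, F)) :
    Integrable fun x => a x * inner ℝ (f x) (g x) := by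
  simpa [smulLeftCLM_apply_apply ha, real_inner_smul_left] using
    integrable_inner_schwartz (smulLeftCLM F a f) g

theorem integrable_norm_sq_schwartz (f : 𝓢(E, F)) : Integrable fun x => ‖f x‖ ^ 2 := by
  simpa using integrable_inner_schwartz f f

theorem integrable_mul_norm_sq_schwartz {a : E → ℝ} (ha : a.HasTemperateGrowth) (f : 𝓢(E, F)) :
    Integrable fun x => a x * ‖f x‖ ^ 2 := by
  simpa using integrable_mul_inner_schwartz ha f f

theorem integrable_gradSq (f : 𝓢(E, F)) : Integrable (gradSq f) :=
  integrable_finsetSum _ fun _ _ => integrable_norm_sq_schwartz _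

theorem integrable_mul_gradSq {a : E → ℝ} (ha : a.HasTemperateGrowth) (f : 𝓢(E, F)) :
    Integrable fun x => a x * gradSq f x := by
  simpa only [gradSq, Finset.mul_sum] using
    integrable_finsetSum _ fun _ _ => integrable_mul_norm_sq_schwartz ha _

theorem integral_gradSq (f : 𝓢(E, F)) :
    ∫ x, gradSq f x = ∑ i, ∫ x, ‖∂_{stdOrthonormalBasis ℝ E i} f x‖ ^ 2 :=
  integral_finsetSum _ fun _ _ => integrable_norm_sq_schwartz _

theorem integral_inner_lineDerivOp (f g : 𝓢(E, F)) (v : E) :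
    ∫ x, inner ℝ (f x) (∂_{v} g x) = -∫ x, inner ℝ (∂_{v} f x) (g x) :=
  integral_bilinear_lineDerivOp_right_eq_neg_left f g (innerSL ℝ) v

theorem integral_inner_laplacian {ι : Type*} [Fintype ι] (b : OrthonormalBasis ι ℝ E)
    (f g : 𝓢(E, F)) :
    ∫ x, inner ℝ ((Δ f : 𝓢(E, F)) x) (g x) =
      -∑ i, ∫ x, inner ℝ (∂_{b i} f x) (∂_{b i} g x) := by
  simp only [laplacian_eq_sum b, _root_.sum_apply, sum_inner, integral_inner_lineDerivOp,
    Finset.sum_neg_distrib, neg_neg]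
  exact integral_finsetSum _ fun _ _ => integrable_inner_schwartz _ _

theorem integral_inner_laplacian_self (f : 𝓢(E, F)) :
    ∫ x, inner ℝ ((Δ f : 𝓢(E, F)) x) (f x) = -∫ x, gradSq f x := by
  simp only [integral_inner_laplacian (stdOrthonormalBasis ℝ E), integral_gradSq,
    real_inner_self_eq_norm_sq]

theorem integrable_inner_lineDerivOp_gradient {a : E → ℝ} (ha : a.HasTemperateGrowth)
    (f : 𝓢(E, F)) : Integrable fun x => inner ℝ (∂_{gradient a x} f x) (f x) := by
  have h := (integrable_finsetSum Finset.univ fun i _ => integrable_inner_schwartz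
    (∂_{stdOrthonormalBasis ℝ E i} f) (∂_{stdOrthonormalBasis ℝ E i} (smulLeftCLM F a f))).sub
      (integrable_mul_gradSq ha f)
  refine h.congr (Filter.Eventually.of_forall fun x => ?_)
  simp only [Pi.sub_apply, sum_inner_lineDerivOp_smulLeftCLM ha, add_sub_cancel_left]

theorem integral_mul_inner_laplacian_self {a : E → ℝ} (ha : a.HasTemperateGrowth)
    (f : 𝓢(E, F)) :
    ∫ x, a x * inner ℝ ((Δ f : 𝓢(E, F)) x) (f x) =
      -∫ x, (a x * gradSq f x + inner ℝ (∂_{gradient a x} f x) (f x)) := by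
  have hleft (x : E) : a x * inner ℝ ((Δ f : 𝓢(E, F)) x) (f x) =
      inner ℝ ((Δ f : 𝓢(E, F)) x) (smulLeftCLM F a f x) := by
    rw [smulLeftCLM_apply_apply ha, real_inner_smul_right]
  simp only [hleft, ← sum_inner_lineDerivOp_smulLeftCLM ha]
  rw [integral_inner_laplacian (stdOrthonormalBasis ℝ E),
    integral_finsetSum _ fun _ _ => integrable_inner_schwartz _ _]

theorem integral_inner_eulerDeriv (f g : 𝓢(E, F)) :
    ∫ x, inner ℝ (f x) (eulerDeriv g x) =
      -∫ x, (inner ℝ (eulerDeriv f x) (g x) + Module.finrank ℝ E * inner ℝ (f x) (g x)) := by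
  set b := stdOrthonormalBasis ℝ E
  have hcoord (i) : (fun x : E => inner ℝ (b i) x).HasTemperateGrowth :=
    (innerSL ℝ (b i)).hasTemperateGrowth
  have hleft (x : E) : inner ℝ (f x) (eulerDeriv g x) =
      ∑ i, inner ℝ (smulLeftCLM F (inner ℝ (b i)) f x) (∂_{b i} g x) := by
    simp only [eulerDeriv_eq_lineDerivOp, ← sum_inner_smul_lineDerivOp b g x x, inner_sum,
      smulLeftCLM_apply_apply (hcoord _), real_inner_smul_left, real_inner_smul_right]
  have hright (x : E) : inner ℝ (eulerDeriv f x) (g x) + Module.finrank ℝ E * inner ℝ (f x) (g x) =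
      ∑ i, inner ℝ (∂_{b i} (smulLeftCLM F (inner ℝ (b i)) f) x) (g x) := by
    have hderiv (i) : fderiv ℝ (fun x : E => inner ℝ (b i) x) x (b i) = 1 := by
      simp [fderiv_inner_apply ℝ (differentiableAt_const (b i)) differentiableAt_fun_id]
    simp only [eulerDeriv_eq_lineDerivOp, ← sum_inner_smul_lineDerivOp b f x x, sum_inner,
      lineDerivOp_smulLeftCLM (hcoord _), hderiv, inner_add_left, Finset.sum_add_distrib]
    simp [add_comm]
  simp only [hleft, hright]
  rw [integral_finsetSum _ fun _ _ => integrable_inner_schwartz _ _,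
    integral_finsetSum _ fun _ _ => integrable_inner_schwartz _ _, ← Finset.sum_neg_distrib]
  exact Finset.sum_congr rfl fun i _ => integral_inner_lineDerivOp _ _ _

theorem integral_inner_eulerDeriv_self (f : 𝓢(E, F)) :
    ∫ x, inner ℝ (f x) (eulerDeriv f x) = -(Module.finrank ℝ E / 2) * ∫ x, ‖f x‖ ^ 2 := by
  have h := integral_inner_eulerDeriv f f
  rw [integral_add (integrable_inner_schwartz _ _) ((integrable_inner_schwartz _ _).const_mul _),
    integral_const_mul] at h
  simp only [real_inner_self_eq_norm_sq, real_inner_comm (f _)] at h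
  linarith

theorem integral_inner_laplacian_eulerDeriv (f : 𝓢(E, F)) :
    ∫ x, inner ℝ ((Δ f : 𝓢(E, F)) x) (eulerDeriv f x) =
      (Module.finrank ℝ E / 2 - 1) * ∫ x, gradSq f x := by
  rw [integral_inner_laplacian (stdOrthonormalBasis ℝ E), integral_gradSq, Finset.mul_sum,
    ← Finset.sum_neg_distrib]
  refine Finset.sum_congr rfl fun i _ => ?_
  simp only [lineDerivOp_eulerDeriv, inner_add_right, real_inner_self_eq_norm_sq]
  rw [integral_add (integrable_norm_sq_schwartz _) (integrable_inner_schwartz _ _),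
    integral_inner_eulerDeriv_self]
  ring

end IntegrationByParts

section Hardy

variable {E F : Type*} [NormedAddCommGroup E] [InnerProductSpace ℝ E] [FiniteDimensional ℝ E]
  [NormedAddCommGroup F] [InnerProductSpace ℝ F] {η : ℝ}

theorem neg_le_inner_eulerDeriv_regNorm_inv_smul (hη : 0 < η) (f : 𝓢(E, F)) (x : E) :
    -(√(gradSq f x) * ‖smulLeftCLM F (fun y => (regNorm η y)⁻¹) f x‖) -
        ‖smulLeftCLM F (fun y => (regNorm η y)⁻¹) f x‖ ^ 2 ≤
      inner ℝ (smulLeftCLM F (fun y => (regNorm η y)⁻¹) f x)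
        (eulerDeriv (smulLeftCLM F (fun y => (regNorm η y)⁻¹) f) x) := by
  set s := (regNorm η x)⁻¹
  set h := smulLeftCLM F (fun y => (regNorm η y)⁻¹) f
  have hs : 0 < s := inv_pos.2 (regNorm_pos hη x)
  have hxs : ‖x‖ * s ≤ 1 := mul_inv_le_one_of_le₀ (norm_le_regNorm η x) (regNorm_pos hη x).le
  have hhx : h x = s • f x := smulLeftCLM_apply_apply (hasTemperateGrowth_regNorm_inv hη) _ _
  have hXh : eulerDeriv h x = s • eulerDeriv f x - (‖x‖ * s) ^ 2 • h x := by
    rw [eulerDeriv_eq_lineDerivOp, lineDerivOp_smulLeftCLM (hasTemperateGrowth_regNorm_inv hη),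
      (hasFDerivAt_regNorm_inv hη x).fderiv, hhx, smul_smul, ← eulerDeriv_eq_lineDerivOp,
      _root_.smul_apply, innerSL_apply_apply, real_inner_self_eq_norm_sq, smul_eq_mul]
    module
  have hcross : -(√(gradSq f x) * ‖h x‖) ≤ s * inner ℝ (h x) (eulerDeriv f x) := by
    refine neg_le_of_abs_le ?_
    calc |s * inner ℝ (h x) (eulerDeriv f x)|
        ≤ s * (‖h x‖ * (√(gradSq f x) * ‖x‖)) := by
          rw [abs_mul, abs_of_pos hs]
          gcongr
          exact (abs_real_inner_le_norm _ _).trans (by gcongr; exact norm_eulerDeriv_le f x)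
      _ = √(gradSq f x) * ‖h x‖ * (‖x‖ * s) := by ring
      _ ≤ √(gradSq f x) * ‖h x‖ := mul_le_of_le_one_right (by positivity) hxs
  have hdiag : (‖x‖ * s) ^ 2 * ‖h x‖ ^ 2 ≤ ‖h x‖ ^ 2 :=
    mul_le_of_le_one_left (sq_nonneg _) (pow_le_one₀ (by positivity) hxs)
  rw [hXh, inner_sub_right, real_inner_smul_right, real_inner_smul_right,
    real_inner_self_eq_norm_sq]
  linarith

variable [MeasurableSpace E] [BorelSpace E]

theorem integrable_regNorm_mul_norm_sq (hη : 0 < η) (f : 𝓢(E, F)) :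
    Integrable fun x => (regNorm η x * ‖f x‖) ^ 2 := by
  simpa only [Pi.mul_apply, mul_pow, sq (regNorm η _)] using integrable_mul_norm_sq_schwartz
    ((hasTemperateGrowth_regNorm hη).mul (hasTemperateGrowth_regNorm hη)) f

theorem integrable_regNorm_inv_mul_norm_sq (hη : 0 < η) (f : 𝓢(E, F)) :
    Integrable fun x => ((regNorm η x)⁻¹ * ‖f x‖) ^ 2 := by
  simpa only [Pi.mul_apply, mul_pow, sq (regNorm η _)⁻¹] using integrable_mul_norm_sq_schwartz
    ((hasTemperateGrowth_regNorm_inv hη).mul (hasTemperateGrowth_regNorm_inv hη)) f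

theorem hardy_inequality (hη : 0 < η) (hE : 2 ≤ Module.finrank ℝ E) (f : 𝓢(E, F)) :
    ((Module.finrank ℝ E : ℝ) - 2) ^ 2 * ∫ x, ((regNorm η x)⁻¹ * ‖f x‖) ^ 2 ≤
      4 * ∫ x, gradSq f x := by
  set n := (Module.finrank ℝ E : ℝ)
  have hn : 0 ≤ n - 2 := sub_nonneg.2 (Nat.ofNat_le_cast.2 hE)
  set h := smulLeftCLM F (fun y => (regNorm η y)⁻¹) f
  have hnorm (x : E) : (regNorm η x)⁻¹ * ‖f x‖ = ‖h x‖ := by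
    rw [smulLeftCLM_apply_apply (hasTemperateGrowth_regNorm_inv hη), norm_smul,
      Real.norm_of_nonneg (inv_nonneg.2 (regNorm_pos hη x).le)]
  have hpointwise (x : E) : (n - 2) ^ 2 * ‖h x‖ ^ 2 ≤
      4 * gradSq f x + 4 * (n - 2) * (inner ℝ (h x) (eulerDeriv h x) + n / 2 * ‖h x‖ ^ 2) := by
    have hX := mul_le_mul_of_nonneg_left (neg_le_inner_eulerDeriv_regNorm_inv_smul hη f x) hn
    have hYoung := sq_nonneg ((n - 2) * ‖h x‖ - 2 * √(gradSq f x))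
    linear_combination 4 * hX + hYoung + 4 * Real.sq_sqrt (gradSq_nonneg f x)
  have hI := (integrable_norm_sq_schwartz h).const_mul (n / 2)
  have hzero : ∫ x, (inner ℝ (h x) (eulerDeriv h x) + n / 2 * ‖h x‖ ^ 2) = 0 := by
    rw [integral_add (integrable_inner_schwartz _ _) hI, integral_const_mul,
      integral_inner_eulerDeriv_self]
    ring
  have hgrad := (integrable_gradSq f).const_mul 4
  have hX := ((integrable_inner_schwartz h (eulerDeriv h)).fun_add hI).const_mul (4 * (n - 2))
  have hint := integral_mono ((integrable_norm_sq_schwartz h).const_mul ((n - 2) ^ 2))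
    (hgrad.fun_add hX) hpointwise
  rw [integral_add hgrad hX, integral_const_mul, integral_const_mul, integral_const_mul, hzero,
    mul_zero, add_zero] at hint
  simpa only [hnorm] using hint

end Hardy

section RadialPhase

/-- The regularized radial phase `exp (i k √(η² + ‖x‖²))`, by which solutions of the Helmholtz
equation are multiplied to remove their oscillation. -/
def radialPhase {E : Type*} [Norm E] (k η : ℝ) (x : E) : ℂ := cexp ((k * regNorm η x : ℝ) * I)

theorem norm_radialPhase {E : Type*} [Norm E] (k η : ℝ) (x : E) : ‖radialPhase k η x‖ = 1 :=
  norm_exp_ofReal_mul_I _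

theorem radialPhase_neg_mul {E : Type*} [Norm E] (k η : ℝ) (x : E) :
    radialPhase (-k) η x * radialPhase k η x = 1 := by
  simp [radialPhase, ← Complex.exp_add]

variable {E F : Type*} [NormedAddCommGroup E] [InnerProductSpace ℝ E] [NormedAddCommGroup F]
  [NormedSpace ℂ F] {η : ℝ}

theorem hasTemperateGrowth_radialPhase (k : ℝ) (hη : 0 < η) :
    (radialPhase k η : E → ℂ).HasTemperateGrowth :=
  hasTemperateGrowth_cexp_mul_I ((Function.HasTemperateGrowth.const k).mul
    (hasTemperateGrowth_regNorm hη))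

theorem norm_smulLeftCLM_radialPhase (k : ℝ) (hη : 0 < η) (f : 𝓢(E, F)) (x : E) :
    ‖smulLeftCLM F (radialPhase k η) f x‖ = ‖f x‖ := by
  rw [smulLeftCLM_apply_apply (hasTemperateGrowth_radialPhase k hη), norm_smul,
    norm_radialPhase, one_mul]

theorem fderiv_radialPhase (k : ℝ) (hη : 0 < η) (x v : E) :
    fderiv ℝ (radialPhase k η) x v =
      radialPhase k η x * (I * k * ((regNorm η x)⁻¹ * inner ℝ v x : ℝ)) := by
  have h : HasFDerivAt (radialPhase k η) _ x :=
    ((ofRealCLM.hasFDerivAt.comp x ((hasFDerivAt_regNorm hη x).const_mul k)).mul_const I).cexp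
  rw [h.fderiv]
  simp only [radialPhase, Function.comp_apply, ofRealCLM_apply, ofReal_mul,
    ContinuousLinearMap.comp_smulₛₗ, Real.ringHom_apply, _root_.smul_apply,
    ContinuousLinearMap.comp_apply, coe_innerSL_apply, real_inner_comm v, real_smul, smul_eq_mul]
  ring

theorem hasTemperateGrowth_regNorm_inv_mul_inner (hη : 0 < η) (v : E) :
    (fun x : E => (regNorm η x)⁻¹ * inner ℝ v x).HasTemperateGrowth :=
  (hasTemperateGrowth_regNorm_inv hη).mul (innerSL ℝ v).hasTemperateGrowth

theorem fderiv_regNorm_inv_mul_inner (hη : 0 < η) (x v : E) :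
    fderiv ℝ (fun y : E => (regNorm η y)⁻¹ * inner ℝ v y) x v =
      (regNorm η x)⁻¹ * ‖v‖ ^ 2 - (regNorm η x)⁻¹ ^ 3 * inner ℝ v x ^ 2 := by
  have h : HasFDerivAt (fun y : E => (regNorm η y)⁻¹ * inner ℝ v y) _ x :=
    (hasFDerivAt_regNorm_inv hη x).mul (innerSL ℝ v).hasFDerivAt
  rw [h.fderiv]
  simp only [neg_smul, smul_neg, _root_.add_apply, _root_.smul_apply, _root_.neg_apply,
    coe_innerSL_apply, inner_self_eq_norm_sq_to_K, Real.ringHom_apply, smul_eq_mul,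
    real_inner_comm v]
  ring

theorem lineDerivOp_radialPhase_smul (k : ℝ) (hη : 0 < η) (f : 𝓢(E, F)) (v : E) :
    ∂_{v} (smulLeftCLM F (radialPhase k η) f) = smulLeftCLM F (radialPhase k η)
      (∂_{v} f + (I * k) • smulLeftCLM F (fun x => (regNorm η x)⁻¹ * inner ℝ v x) f) := by
  ext x
  rw [lineDerivOp_smulLeftCLM (hasTemperateGrowth_radialPhase k hη), fderiv_radialPhase k hη,
    smulLeftCLM_apply_apply (hasTemperateGrowth_radialPhase k hη), _root_.add_apply,
    _root_.smul_apply, smulLeftCLM_apply_apply (hasTemperateGrowth_regNorm_inv_mul_inner hη v),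
    ← Complex.coe_smul, real_inner_comm]
  module

theorem lineDerivOp_lineDerivOp_radialPhase_smul (k : ℝ) (hη : 0 < η) (f : 𝓢(E, F)) (v x : E) :
    ∂_{v} (∂_{v} (smulLeftCLM F (radialPhase k η) f)) x = radialPhase k η x •
      (∂_{v} (∂_{v} f) x + (2 * I * k * (regNorm η x)⁻¹) • inner ℝ v x • ∂_{v} f x +
        (I * k) • ((regNorm η x)⁻¹ * ‖v‖ ^ 2 - (regNorm η x)⁻¹ ^ 3 * inner ℝ v x ^ 2) • f x -
        (k * (regNorm η x)⁻¹) ^ 2 • inner ℝ v x ^ 2 • f x) := by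
  have hb := hasTemperateGrowth_regNorm_inv_mul_inner hη v
  rw [lineDerivOp_radialPhase_smul k hη, lineDerivOp_radialPhase_smul k hη,
    smulLeftCLM_apply_apply (hasTemperateGrowth_radialPhase k hη), lineDerivOp_add,
    lineDerivOp_smul]
  simp only [_root_.add_apply, _root_.smul_apply, smulLeftCLM_apply_apply hb,
    lineDerivOp_smulLeftCLM hb, fderiv_regNorm_inv_mul_inner hη, ← Complex.coe_smul, ofReal_mul,
    ofReal_sub, ofReal_pow, ofReal_inv]
  match_scalars
  · ring
  · linear_combination radialPhase k η x * k ^ 2 * (regNorm η x : ℂ)⁻¹ ^ 2 *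
      (inner ℝ v x : ℂ) ^ 2 * I_sq
  · ring

variable [FiniteDimensional ℝ E]

theorem laplacian_radialPhase_smul (k : ℝ) (hη : 0 < η) (f : 𝓢(E, F)) (x : E) :
    (Δ (smulLeftCLM F (radialPhase k η) f) : 𝓢(E, F)) x = radialPhase k η x •
      ((Δ f : 𝓢(E, F)) x + (2 * I * k * (regNorm η x)⁻¹) • eulerDeriv f x +
        (I * k) • ((Module.finrank ℝ E - 1) * (regNorm η x)⁻¹ +
          η ^ 2 * (regNorm η x)⁻¹ ^ 3) • f x -
        (k ^ 2 * (1 - η ^ 2 * (regNorm η x)⁻¹ ^ 2)) • f x) := by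
  set b := stdOrthonormalBasis ℝ E
  have hs : ‖x‖ ^ 2 * (regNorm η x)⁻¹ ^ 2 = 1 - η ^ 2 * (regNorm η x)⁻¹ ^ 2 := by
    rw [← sub_eq_of_eq_add' (regNorm_sq η x)]
    field [(regNorm_pos hη x).ne']
  have hone (i) : ‖b i‖ ^ 2 = 1 := by rw [b.norm_eq_one, one_pow]
  have hnorm : ∑ i, inner ℝ (b i) x ^ 2 = ‖x‖ ^ 2 := b.sum_sq_inner_right x
  rw [laplacian_eq_sum b, laplacian_eq_sum b, _root_.sum_apply, _root_.sum_apply,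
    eulerDeriv_eq_lineDerivOp, ← sum_inner_smul_lineDerivOp b]
  simp only [lineDerivOp_lineDerivOp_radialPhase_smul k hη, ← Finset.smul_sum,
    Finset.sum_sub_distrib, Finset.sum_add_distrib, ← Finset.sum_smul, hone, ← Finset.mul_sum,
    hnorm]
  simp only [Finset.sum_const, Finset.card_univ, Fintype.card_fin, nsmul_one]
  have hcoeff : (regNorm η x)⁻¹ * Module.finrank ℝ E - (regNorm η x)⁻¹ ^ 3 * ‖x‖ ^ 2 =
      (Module.finrank ℝ E - 1) * (regNorm η x)⁻¹ + η ^ 2 * (regNorm η x)⁻¹ ^ 3 := by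
    linear_combination -(regNorm η x)⁻¹ * hs
  have hsq : (k * (regNorm η x)⁻¹) ^ 2 * ‖x‖ ^ 2 =
      k ^ 2 * (1 - η ^ 2 * (regNorm η x)⁻¹ ^ 2) := by
    linear_combination k ^ 2 * hs
  rw [hcoeff, smul_smul (_ ^ 2), hsq]

/-- The conjugate `e^{ikρ} (-Δ - k²) e^{-ikρ}` of the Helmholtz operator by the radial phase, with
`ρ = regNorm η`, in expanded form. -/
def conjugatedHelmholtz (k η : ℝ) (w : 𝓢(E, F)) (x : E) : F :=
  -(Δ w : 𝓢(E, F)) x + (2 * I * k * (regNorm η x)⁻¹) • eulerDeriv w x +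
    (I * k) • ((Module.finrank ℝ E - 1) * (regNorm η x)⁻¹ + η ^ 2 * (regNorm η x)⁻¹ ^ 3) • w x -
    (k * η * (regNorm η x)⁻¹) ^ 2 • w x

theorem conjugatedHelmholtz_radialPhase_smul (k : ℝ) (hη : 0 < η) (τ : ℂ) (u : 𝓢(E, F)) (x : E) :
    conjugatedHelmholtz k η (smulLeftCLM F (radialPhase k η) u) x +
        (k ^ 2 - τ) • smulLeftCLM F (radialPhase k η) u x =
      radialPhase k η x • (-(Δ u : 𝓢(E, F)) x - τ • u x) := by
  set w := smulLeftCLM F (radialPhase k η) u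
  have hcancel (y : E) (z : F) : radialPhase k η y • radialPhase (-k) η y • z = z := by
    rw [smul_smul, mul_comm, radialPhase_neg_mul, one_smul]
  have hw (y : E) : w y = radialPhase k η y • u y :=
    smulLeftCLM_apply_apply (hasTemperateGrowth_radialPhase k hη) u y
  have hu : u = smulLeftCLM F (radialPhase (-k) η) w := by
    ext y
    rw [smulLeftCLM_apply_apply (hasTemperateGrowth_radialPhase _ hη), hw, smul_comm, hcancel]
  rw [conjugatedHelmholtz, smul_sub, smul_neg, smul_comm _ τ, ← hw, hu,
    laplacian_radialPhase_smul (-k) hη w, hcancel]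
  simp only [← Complex.coe_smul, ofReal_neg]
  push_cast
  module

end RadialPhase

section MultiplierEstimate

theorem helmholtz_multiplier_identity {L Y z G : ℂ} {k ρ κ μ N c : ℝ}
    (hG : -L + 2 * I * k * ρ * Y + I * (2 * k * N * ρ + κ) * z - μ * z +
      2 * I * c * k * ρ ^ 2 * z = G) :
    -inner ℝ L (Y + N * z + c * ρ * z) =
      inner ℝ (G + μ * z) (Y + N * z + c * ρ * z) - κ * inner ℝ Y (I * z) := by
  subst hG
  simp only [Complex.inner, sq, map_add, map_sub, map_neg, map_mul, conj_I, conj_ofReal, add_re,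
    add_im, sub_re, sub_im, neg_re, neg_im, mul_re, mul_im, conj_re, conj_im, ofReal_re, ofReal_im,
    re_ofNat, im_ofNat, I_re, I_im]
  ring

theorem multiplier_young {p q h m N θ : ℝ} (hp : 0 ≤ p) (hq : 0 ≤ q) (hm : 0 ≤ m) (hN : 1 ≤ N)
    (hθ0 : 0 ≤ θ) (hθ : θ ≤ 1 / 16) :
    (h + θ ^ 2 * q) * (p + N * q + m) + θ * (p * q) + p * m ≤
      p ^ 2 / 4 + (N * q) ^ 2 / 32 + 100 * h ^ 2 + 6 * m ^ 2 := by
  have hqQ : q ≤ N * q := le_mul_of_one_le_left hq hN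
  generalize N * q = Q at *
  have hθ2 : θ ^ 2 ≤ 1 / 256 := (pow_le_pow_left₀ hθ0 hθ 2).trans (by norm_num)
  have hpq : θ * (p * q) ≤ 1 / 16 * (p * Q) := by gcongr
  have hqpQ : θ ^ 2 * q * (p + Q) ≤ 1 / 256 * Q * (p + Q) := by gcongr; linarith
  have hqm : θ ^ 2 * q * m ≤ 1 / 256 * Q * m := by gcongr
  nlinarith [sq_nonneg (p - 32 * h), sq_nonneg (Q - 128 * h), sq_nonneg (p - Q / 2),
    sq_nonneg (p - 8 * m), sq_nonneg (h - m), sq_nonneg (Q - m)]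

theorem helmholtz_multiplier_le {L Y z G : ℂ} {k ρ κ θ N c : ℝ} (hρ : 0 ≤ ρ) (hκ : |κ| ≤ θ)
    (hθ : θ ≤ 1 / 16) (hN : 1 ≤ N) (hc : 0 ≤ c)
    (hG : -L + 2 * I * k * ρ * Y + I * (2 * k * N * ρ + κ) * z - θ ^ 2 * z +
      2 * I * c * k * ρ ^ 2 * z = G) :
    -inner ℝ L (Y + N * z + c * ρ * z) - c * ρ * inner ℝ Y z ≤
      ‖Y‖ ^ 2 / 4 + (N * ‖z‖) ^ 2 / 32 + 100 * ‖G‖ ^ 2 + 6 * (c * ρ * ‖z‖) ^ 2 := by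
  have hθ0 : 0 ≤ θ := (abs_nonneg κ).trans hκ
  have hsource : inner ℝ (G + θ ^ 2 * z) (Y + N * z + c * ρ * z) ≤
      (‖G‖ + θ ^ 2 * ‖z‖) * (‖Y‖ + N * ‖z‖ + c * ρ * ‖z‖) := by
    refine (real_inner_le_norm _ _).trans (mul_le_mul ?_ ?_ (norm_nonneg _) (by positivity))
    · exact (norm_add_le _ _).trans_eq (by simp)
    · simpa [abs_of_nonneg, hρ, hc, zero_le_one.trans hN] using
        norm_add₃_le (a := Y) (b := N * z) (c := c * ρ * z)
  have hphase : -(κ * inner ℝ Y (I * z)) ≤ θ * (‖Y‖ * ‖z‖) := by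
    refine (neg_le_abs _).trans ?_
    rw [abs_mul]
    gcongr
    simpa using abs_real_inner_le_norm Y (I * z)
  have hdrift : -(c * ρ * inner ℝ Y z) ≤ ‖Y‖ * (c * ρ * ‖z‖) := by
    rw [mul_left_comm, ← mul_neg]
    gcongr
    exact (neg_le_abs _).trans (abs_real_inner_le_norm Y z)
  have hid := helmholtz_multiplier_identity (μ := θ ^ 2) (by exact_mod_cast hG)
  push_cast at hid
  linear_combination hid + hsource + hphase + hdrift + multiplier_young (h := ‖G‖) (norm_nonneg Y)
    (norm_nonneg z) (by positivity : 0 ≤ c * ρ * ‖z‖) hN hθ0 hθ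

end MultiplierEstimate

section UniformGradientEstimate

variable {E : Type*} [NormedAddCommGroup E] [InnerProductSpace ℝ E] [FiniteDimensional ℝ E]

theorem gradient_const_mul_regNorm {η : ℝ} (hη : 0 < η) (c : ℝ) (x : E) :
    gradient (fun y => c * regNorm η y) x = (c * (regNorm η x)⁻¹) • x := by
  refine HasGradientAt.gradient (hasGradientAt_iff_hasFDerivAt.2
    (((hasFDerivAt_regNorm hη x).const_mul c).congr_fderiv ?_))
  rw [map_smul, smul_smul]
  rfl

section Multiplier

variable {F : Type*} [NormedAddCommGroup F] [InnerProductSpace ℝ F]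

theorem norm_regNorm_inv_smul_eulerDeriv_sq_le {η : ℝ} (hη : 0 < η) (f : 𝓢(E, F)) (x : E) :
    ‖(regNorm η x)⁻¹ • eulerDeriv f x‖ ^ 2 ≤ gradSq f x := by
  have hρ := regNorm_pos hη x
  rw [← Real.sq_sqrt (gradSq_nonneg f x), norm_smul_of_nonneg (inv_nonneg.2 hρ.le)]
  gcongr
  refine (inv_mul_le_iff₀' hρ).2 ((norm_eulerDeriv_le f x).trans ?_)
  gcongr
  exact norm_le_regNorm η x

variable [MeasurableSpace E] [BorelSpace E]

theorem integrable_multiplier {a : E → ℝ} (ha : a.HasTemperateGrowth) (N : ℝ) (f : 𝓢(E, F)) :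
    Integrable fun x => -inner ℝ ((Δ f : 𝓢(E, F)) x) (eulerDeriv f x + N • f x + a x • f x) -
      inner ℝ (∂_{gradient a x} f x) (f x) := by
  have h := integrable_inner_schwartz (Δ f) (eulerDeriv f + N • f + smulLeftCLM F a f)
  simp only [_root_.add_apply, _root_.smul_apply, smulLeftCLM_apply_apply ha] at h
  exact h.neg.sub (integrable_inner_lineDerivOp_gradient ha f)

theorem integral_gradSq_div_two_le {a : E → ℝ} (ha : a.HasTemperateGrowth) (ha0 : ∀ x, 0 ≤ a x)
    (f : 𝓢(E, F)) :
    (∫ x, gradSq f x) / 2 ≤ ∫ x, (-inner ℝ ((Δ f : 𝓢(E, F)) x)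
      (eulerDeriv f x + ((Module.finrank ℝ E - 1 : ℝ) / 2) • f x + a x • f x) -
        inner ℝ (∂_{gradient a x} f x) (f x)) := by
  set N := (Module.finrank ℝ E - 1 : ℝ) / 2 with hN
  set L := (Δ f : 𝓢(E, F))
  have hgrad : 0 ≤ ∫ x, a x * gradSq f x :=
    integral_nonneg fun x => mul_nonneg (ha0 x) (gradSq_nonneg f x)
  have hdrift := integrable_inner_lineDerivOp_gradient ha f
  have hexpand (x : E) : -inner ℝ (L x) (eulerDeriv f x + N • f x + a x • f x) -
      inner ℝ (∂_{gradient a x} f x) (f x) = -(inner ℝ (L x) (eulerDeriv f x) +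
        N * inner ℝ (L x) (f x) + a x * inner ℝ (L x) (f x) +
          inner ℝ (∂_{gradient a x} f x) (f x)) := by
    simp only [inner_add_right, real_inner_smul_right]
    ring
  have hLX := integrable_inner_schwartz L (eulerDeriv f)
  have hLN := (integrable_inner_schwartz L f).const_mul N
  have hLa := integrable_mul_inner_schwartz ha L f
  simp only [hexpand]
  rw [integral_neg, integral_add ((hLX.fun_add hLN).fun_add hLa) hdrift,
    integral_add (hLX.fun_add hLN) hLa, integral_add hLX hLN, integral_const_mul,
    integral_inner_laplacian_eulerDeriv, integral_inner_laplacian_self,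
    integral_mul_inner_laplacian_self ha, integral_add (integrable_mul_gradSq ha f) hdrift, hN]
  linarith

end Multiplier

section NormPairing

variable {F G : Type*} [NormedAddCommGroup F] [InnerProductSpace ℝ F] [NormedAddCommGroup G]
  [InnerProductSpace ℝ G] [MeasurableSpace E] [BorelSpace E] {η : ℝ}

theorem integral_regNorm_inv_mul_norm_sq_le (hη : 0 < η) (hE : 3 ≤ Module.finrank ℝ E)
    (f : 𝓢(E, F)) :
    ((Module.finrank ℝ E - 1 : ℝ) / 2) ^ 2 * ∫ x, ((regNorm η x)⁻¹ * ‖f x‖) ^ 2 ≤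
      4 * ∫ x, gradSq f x := by
  have hn : (3 : ℝ) ≤ Module.finrank ℝ E := Nat.ofNat_le_cast.2 hE
  refine le_trans ?_ (hardy_inequality hη (by omega) f)
  exact mul_le_mul_of_nonneg_right (pow_le_pow_left₀ (by linarith) (by linarith) 2)
    (integral_nonneg fun x => sq_nonneg _)

theorem integral_norm_mul_norm_le (hη : 0 < η) (hE : 3 ≤ Module.finrank ℝ E) {ε : ℝ} (hε : 0 < ε)
    (g : 𝓢(E, G)) (f : 𝓢(E, F)) :
    ∫ x, ‖g x‖ * ‖f x‖ ≤
      ε * (∫ x, gradSq f x) + ε⁻¹ * ∫ x, (regNorm η x * ‖g x‖) ^ 2 := by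
  have hyoung (q h : ℝ) : h * q ≤ ε / 4 * q ^ 2 + ε⁻¹ * h ^ 2 := by
    have hsq : 0 ≤ (ε * q - 2 * h) ^ 2 / (4 * ε) := by positivity
    field_simp at hsq ⊢
    linarith
  have hprod (x : E) : ‖g x‖ * ‖f x‖ = (regNorm η x * ‖g x‖) * ((regNorm η x)⁻¹ * ‖f x‖) := by
    rw [mul_mul_mul_comm, mul_inv_cancel₀ (regNorm_pos hη x).ne', one_mul, mul_comm]
  have hf := (integrable_regNorm_inv_mul_norm_sq hη f).const_mul (ε / 4)
  have hg := (integrable_regNorm_mul_norm_sq hη g).const_mul ε⁻¹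
  have hn : (3 : ℝ) ≤ Module.finrank ℝ E := Nat.ofNat_le_cast.2 hE
  have hhardy : ∫ x, ((regNorm η x)⁻¹ * ‖f x‖) ^ 2 ≤ 4 * ∫ x, gradSq f x :=
    (le_mul_of_one_le_left (integral_nonneg fun x => sq_nonneg _)
      (one_le_pow₀ (by linarith))).trans (integral_regNorm_inv_mul_norm_sq_le hη hE f)
  have hint := integral_mono_of_nonneg
    (Filter.Eventually.of_forall fun x => mul_nonneg (norm_nonneg (g x)) (norm_nonneg (f x)))
    (hf.fun_add hg) (Filter.Eventually.of_forall fun x => (hprod x).trans_le (hyoung _ _))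
  rw [integral_add hf hg, integral_const_mul, integral_const_mul] at hint
  linear_combination hint + ε / 4 * hhardy

end NormPairing

section Conjugated

variable {η k c : ℝ} {w g : 𝓢(E, ℂ)}

theorem conjugated_multiplier_le (hη : 0 < η) (hkη : |k| * η ≤ 1 / 16) (hc : 0 ≤ c)
    (hE : 3 ≤ Module.finrank ℝ E) {x : E} {z : ℂ}
    (hw : conjugatedHelmholtz k η w x + (2 * I * c * k) • w x = z) :
    -inner ℝ ((Δ w : 𝓢(E, ℂ)) x)
        (eulerDeriv w x + ((Module.finrank ℝ E - 1 : ℝ) / 2) • w x + (c * regNorm η x) • w x) -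
        inner ℝ (∂_{gradient (fun y => c * regNorm η y) x} w x) (w x) ≤
      gradSq w x / 4 + (((Module.finrank ℝ E - 1 : ℝ) / 2) * ((regNorm η x)⁻¹ * ‖w x‖)) ^ 2 / 32 +
        100 * (regNorm η x * ‖z‖) ^ 2 + 6 * (c * ‖w x‖) ^ 2 := by
  rw [conjugatedHelmholtz] at hw
  set n := (Module.finrank ℝ E : ℝ)
  set ρ := regNorm η x
  set X := eulerDeriv w x
  have hρ : 0 < ρ := regNorm_pos hη x
  have hρ' : (ρ : ℂ) ≠ 0 := ofReal_ne_zero.2 hρ.ne'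
  have hn3 : 3 ≤ n := Nat.ofNat_le_cast.2 hE
  have hκ : |k * η ^ 2 * ρ⁻¹| ≤ |k| * η := by
    rw [abs_mul, abs_mul, abs_of_pos (inv_pos.2 hρ), abs_of_nonneg (sq_nonneg η), sq, mul_assoc,
      mul_assoc η]
    gcongr
    exact mul_le_of_le_one_right hη.le (mul_inv_le_one_of_le₀ (le_regNorm η x) hρ.le)
  have hX : ‖ρ⁻¹ • X‖ ^ 2 ≤ gradSq w x := norm_regNorm_inv_smul_eulerDeriv_sq_le hη w x
  have key := helmholtz_multiplier_le (k := k) (L := ρ • (Δ w : 𝓢(E, ℂ)) x) (Y := ρ⁻¹ • X)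
    (z := ρ⁻¹ • w x) (G := ρ • z) (N := (n - 1) / 2) hρ.le hκ hkη (by linarith) hc (by
      rw [← hw, ← ofReal_pow, mul_pow |k|, sq_abs]
      simp only [real_smul, smul_eq_mul]
      push_cast
      field_simp)
  have hmult : ρ⁻¹ • X + ((n - 1) / 2 : ℝ) * ρ⁻¹ • w x + c * ρ * ρ⁻¹ • w x =
      ρ⁻¹ • (X + ((n - 1) / 2) • w x + (c * ρ) • w x) := by
    simp only [real_smul]
    push_cast
    ring
  rw [hmult, real_inner_smul_left, real_inner_smul_right, mul_inv_cancel_left₀ hρ.ne',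
    real_inner_smul_left, real_inner_smul_right, norm_smul_of_nonneg (inv_nonneg.2 hρ.le) (w x),
    norm_smul_of_nonneg hρ.le, mul_assoc c ρ, mul_inv_cancel_left₀ hρ.ne', mul_assoc c ρ,
    mul_inv_cancel_left₀ hρ.ne'] at key
  rw [gradient_const_mul_regNorm hη, lineDerivOp_left_smul, _root_.smul_apply,
    ← eulerDeriv_eq_lineDerivOp, real_inner_smul_left, mul_assoc c]
  linarith

variable [MeasurableSpace E] [BorelSpace E]

theorem integral_gradSq_le_of_conjugated (hη : 0 < η) (hkη : |k| * η ≤ 1 / 16) (hc : 0 ≤ c)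
    (hE : 3 ≤ Module.finrank ℝ E)
    (hw : ∀ x, conjugatedHelmholtz k η w x + (2 * I * c * k) • w x = g x)
    (hmass : 4 * c ^ 2 * ∫ x, ‖w x‖ ^ 2 ≤ ∫ x, ‖g x‖ * ‖w x‖) :
    ∫ x, gradSq w x ≤ 2176 * ∫ x, (regNorm η x * ‖g x‖) ^ 2 := by
  set N := (Module.finrank ℝ E - 1 : ℝ) / 2
  have ha : (fun x : E => c * regNorm η x).HasTemperateGrowth :=
    (Function.HasTemperateGrowth.const c).mul (hasTemperateGrowth_regNorm hη)
  have hgrad := (integrable_gradSq w).div_const 4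
  have hinv := ((integrable_regNorm_inv_mul_norm_sq hη w).const_mul (N ^ 2)).div_const 32
  have hsource := (integrable_regNorm_mul_norm_sq hη g).const_mul 100
  have hsq := ((integrable_norm_sq_schwartz w).const_mul (c ^ 2)).const_mul 6
  have hle := (integral_gradSq_div_two_le ha
      (fun x => mul_nonneg hc (regNorm_pos hη x).le) w).trans
    (integral_mono (integrable_multiplier ha N w)
      (((hgrad.fun_add hinv).fun_add hsource).fun_add hsq) fun x => by
        simpa only [mul_pow] using conjugated_multiplier_le hη hkη hc hE (hw x))
  rw [integral_add ((hgrad.fun_add hinv).fun_add hsource) hsq,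
    integral_add (hgrad.fun_add hinv) hsource, integral_add hgrad hinv,
    integral_div, integral_div] at hle
  simp only [integral_const_mul] at hle
  have hhardy : N ^ 2 * _ ≤ _ := integral_regNorm_inv_mul_norm_sq_le hη hE w
  have hpairing := integral_norm_mul_norm_le hη hE (by norm_num : (0 : ℝ) < 1 / 24) g w
  linarith

end Conjugated

end UniformGradientEstimate

section ResolventEquation

theorem exists_wavenumber {τ : ℂ} (hτ : |τ.im| < τ.re) :
    ∃ k c : ℝ, k ≠ 0 ∧ 0 ≤ c ∧ 4 * c ^ 2 ≤ |τ.im| ∧ (k : ℂ) ^ 2 - τ = 2 * I * c * k := by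
  obtain ⟨k, hkτ, hk, hc⟩ : ∃ k : ℝ, k ^ 2 = τ.re ∧ k ≠ 0 ∧ 0 ≤ -τ.im / (2 * k) := by
    have hre : 0 < τ.re := (abs_nonneg _).trans_lt hτ
    rcases le_total τ.im 0 with him | him
    · exact ⟨√τ.re, Real.sq_sqrt hre.le, by positivity,
        div_nonneg (by linarith) (by positivity)⟩
    · exact ⟨-√τ.re, by rw [neg_sq, Real.sq_sqrt hre.le], neg_ne_zero.2 (by positivity),
        div_nonneg_of_nonpos (by linarith) (by linarith [Real.sqrt_nonneg τ.re])⟩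
  refine ⟨k, -τ.im / (2 * k), hk, hc, ?_, ?_⟩
  · calc 4 * (-τ.im / (2 * k)) ^ 2 = |τ.im| * (|τ.im| / k ^ 2) := by
          rw [← mul_div_assoc, ← sq, sq_abs]
          field
      _ ≤ |τ.im| := mul_le_of_le_one_right (abs_nonneg _)
          (div_le_one_of_le₀ (hkτ ▸ hτ.le) (sq_nonneg k))
  · have hk' : (k : ℂ) ≠ 0 := ofReal_ne_zero.2 hk
    have hkτ' : (k : ℂ) ^ 2 = τ.re := mod_cast hkτ
    rw [hkτ']
    push_cast
    field_simp
    linear_combination Complex.re_add_im τ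

variable {E : Type*} [NormedAddCommGroup E] [InnerProductSpace ℝ E] [FiniteDimensional ℝ E]
  [MeasurableSpace E] [BorelSpace E] {τ : ℂ} {u ψ : 𝓢(E, ℂ)}

theorem integral_regNorm_mul_norm_sq_mono {η ε : ℝ} (hη : 0 < η) (hηε : η ≤ ε) (f : 𝓢(E, ℂ)) :
    ∫ x, (regNorm η x * ‖f x‖) ^ 2 ≤ ∫ x, (regNorm ε x * ‖f x‖) ^ 2 := by
  refine integral_mono (integrable_regNorm_mul_norm_sq hη f)
    (integrable_regNorm_mul_norm_sq (hη.trans_le hηε) f) fun x => ?_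
  have := (regNorm_pos hη x).le
  dsimp only
  gcongr
  exact Real.sqrt_le_sqrt (by gcongr)

theorem integrable_norm_mul_norm_schwartz (f g : 𝓢(E, ℂ)) :
    Integrable fun x => ‖f x‖ * ‖g x‖ :=
  (f.memLp 2).norm.integrable_mul (g.memLp 2).norm

theorem integral_inner_laplacian_I_smul (u : 𝓢(E, ℂ)) :
    ∫ x, inner ℝ ((Δ u : 𝓢(E, ℂ)) x) ((I • u) x) = 0 := by
  have horth (z : ℂ) : inner ℝ z (I * z) = 0 := by
    simp [Complex.inner, mul_comm]
  rw [integral_inner_laplacian (stdOrthonormalBasis ℝ E)]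
  simp [lineDerivOp_smul, horth]

theorem abs_im_mul_integral_norm_sq_le (h : ∀ x, -(Δ u : 𝓢(E, ℂ)) x - τ • u x = ψ x) :
    |τ.im| * ∫ x, ‖u x‖ ^ 2 ≤ ∫ x, ‖ψ x‖ * ‖u x‖ := by
  have hpoint (x : E) : τ.im * ‖u x‖ ^ 2 =
      -(inner ℝ (ψ x) ((I • u) x) + inner ℝ ((Δ u : 𝓢(E, ℂ)) x) ((I • u) x)) := by
    rw [← inner_add_left, ← h x, Complex.sq_norm, Complex.normSq_apply]
    simp only [smul_eq_mul, _root_.smul_apply, Complex.inner, map_add, map_sub, map_neg, map_mul,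
      mul_re, I_re, I_im, add_re, sub_re, neg_re, conj_re, conj_im, mul_im, add_im, sub_im, neg_im]
    ring
  have hmass : τ.im * ∫ x, ‖u x‖ ^ 2 = -∫ x, inner ℝ (ψ x) ((I • u) x) := by
    rw [← integral_const_mul]
    simp only [hpoint]
    rw [integral_neg, integral_add (integrable_inner_schwartz _ _) (integrable_inner_schwartz _ _),
      integral_inner_laplacian_I_smul, add_zero]
  rw [← abs_of_nonneg (integral_nonneg fun x => sq_nonneg ‖u x‖ : 0 ≤ ∫ x, ‖u x‖ ^ 2), ← abs_mul,
    hmass, abs_neg]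
  refine (norm_integral_le_integral_norm _).trans (integral_mono
    (integrable_inner_schwartz _ _).norm (integrable_norm_mul_norm_schwartz ψ u) fun x => ?_)
  simpa using norm_inner_le_norm (𝕜 := ℝ) (ψ x) ((I • u) x)

theorem integral_gradSq_le (h : ∀ x, -(Δ u : 𝓢(E, ℂ)) x - τ • u x = ψ x) :
    ∫ x, gradSq u x ≤ τ.re * (∫ x, ‖u x‖ ^ 2) + ∫ x, ‖ψ x‖ * ‖u x‖ := by
  have hu := (integrable_norm_sq_schwartz u).const_mul τ.re
  rw [← neg_le_neg_iff, ← integral_inner_laplacian_self, ← integral_const_mul,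
    ← integral_add hu (integrable_norm_mul_norm_schwartz ψ u), ← integral_neg]
  refine integral_mono (hu.fun_add (integrable_norm_mul_norm_schwartz ψ u)).fun_neg
    (integrable_inner_schwartz _ _) fun x => ?_
  have hpoint : inner ℝ ((Δ u : 𝓢(E, ℂ)) x) (u x) =
      -(τ.re * ‖u x‖ ^ 2 + inner ℝ (ψ x) (u x)) := by
    rw [← h x, Complex.sq_norm, Complex.normSq_apply]
    simp only [smul_eq_mul, Complex.inner, map_sub, map_neg, map_mul, mul_re, conj_re, conj_im,
      sub_re, neg_re, sub_im, neg_im, mul_im]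
    ring
  rw [hpoint]
  gcongr
  exact real_inner_le_norm _ _

theorem integral_gradSq_le_of_re_le_abs_im (hE : 3 ≤ Module.finrank ℝ E)
    (h : ∀ x, -(Δ u : 𝓢(E, ℂ)) x - τ • u x = ψ x) (hτ : τ.re ≤ |τ.im|) :
    ∫ x, gradSq u x ≤ 16 * ∫ x, (regNorm 1 x * ‖ψ x‖) ^ 2 := by
  have hre : τ.re * ∫ x, ‖u x‖ ^ 2 ≤ |τ.im| * ∫ x, ‖u x‖ ^ 2 :=
    mul_le_mul_of_nonneg_right hτ (integral_nonneg fun x => sq_nonneg _)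
  have hpairing := integral_norm_mul_norm_le one_pos hE (by norm_num : (0 : ℝ) < 1 / 4) ψ u
  linarith [abs_im_mul_integral_norm_sq_le h, integral_gradSq_le h]

theorem integral_gradSq_radialPhase_smul_le {η k c : ℝ} (hη : 0 < η) (hkη : |k| * η ≤ 1 / 16)
    (hc : 0 ≤ c) (hcτ : 4 * c ^ 2 ≤ |τ.im|) (hτ : (k : ℂ) ^ 2 - τ = 2 * I * c * k)
    (hE : 3 ≤ Module.finrank ℝ E) (h : ∀ x, -(Δ u : 𝓢(E, ℂ)) x - τ • u x = ψ x) :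
    ∫ x, gradSq (smulLeftCLM ℂ (radialPhase k η) u) x ≤
      2176 * ∫ x, (regNorm η x * ‖ψ x‖) ^ 2 := by
  have key := integral_gradSq_le_of_conjugated (w := smulLeftCLM ℂ (radialPhase k η) u)
    (g := smulLeftCLM ℂ (radialPhase k η) ψ) hη hkη hc hE (fun x => ?_) ?_
  · simpa only [norm_smulLeftCLM_radialPhase k hη] using key
  · rw [← hτ, conjugatedHelmholtz_radialPhase_smul k hη τ u x, h,
      smulLeftCLM_apply_apply (hasTemperateGrowth_radialPhase k hη)]
  · simp only [norm_smulLeftCLM_radialPhase k hη]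
    exact (mul_le_mul_of_nonneg_right hcτ (integral_nonneg fun x => sq_nonneg _)).trans
      (abs_im_mul_integral_norm_sq_le h)

theorem exists_norm_eq_integral_gradSq_le (hE : 3 ≤ Module.finrank ℝ E)
    (h : ∀ x, -(Δ u : 𝓢(E, ℂ)) x - τ • u x = ψ x) :
    ∃ w : 𝓢(E, ℂ), (∀ x, ‖w x‖ = ‖u x‖) ∧
      ∫ x, gradSq w x ≤ 2176 * ∫ x, (regNorm 1 x * ‖ψ x‖) ^ 2 := by
  rcases le_or_gt τ.re |τ.im| with hlow | hhigh
  · refine ⟨u, fun _ => rfl, (integral_gradSq_le_of_re_le_abs_im hE h hlow).trans ?_⟩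
    exact mul_le_mul_of_nonneg_right (by norm_num) (integral_nonneg fun x => sq_nonneg _)
  · obtain ⟨k, c, hk, hc, hcτ, hτ⟩ := exists_wavenumber hhigh
    have hη : 0 < min 1 (1 / (16 * |k|)) := by positivity
    refine ⟨smulLeftCLM ℂ (radialPhase k (min 1 (1 / (16 * |k|)))) u,
      norm_smulLeftCLM_radialPhase k hη u,
      (integral_gradSq_radialPhase_smul_le hη ?_ hc hcτ hτ hE h).trans ?_⟩
    · calc |k| * min 1 (1 / (16 * |k|)) ≤ |k| * (1 / (16 * |k|)) := by
            gcongr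
            exact min_le_right _ _
        _ = 1 / 16 := by field_simp
    · gcongr 2176 * ?_
      exact integral_regNorm_mul_norm_sq_mono hη (min_le_left _ _) ψ

end ResolventEquation

section Resolvent

/-- The Fourier symbol `(4π²|ξ|² - τ)⁻¹` of the resolvent of the Laplacian. -/
def resolventSymbol {E : Type*} [Norm E] (τ : ℂ) (ξ : E) : ℂ :=
  (4 * (π : ℂ) ^ 2 * (‖ξ‖ : ℂ) ^ 2 - τ)⁻¹

theorem resolventSymbol_eq_inv_ofReal_sub {E : Type*} [Norm E] (τ : ℂ) :
    resolventSymbol τ = fun ξ : E => (((2 * π) ^ 2 * ‖ξ‖ ^ 2 : ℝ) - τ)⁻¹ := by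
  ext ξ
  rw [resolventSymbol]
  push_cast
  ring

theorem mul_resolventSymbol {E : Type*} [NormedAddCommGroup E] {τ : ℂ} (hτ : -τ ∈ slitPlane)
    (ξ : E) :
    (((2 * π) ^ 2 * ‖ξ‖ ^ 2 : ℝ) - τ) * resolventSymbol τ ξ = 1 := by
  obtain ⟨ε, hε, hle⟩ := exists_pos_le_norm_ofReal_sub hτ
  rw [resolventSymbol_eq_inv_ofReal_sub]
  exact mul_inv_cancel₀ (norm_pos_iff.1 (hε.trans_le (hle _ (by positivity))))

variable {E F : Type*} [NormedAddCommGroup E] [InnerProductSpace ℝ E] [NormedAddCommGroup F]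
  [NormedSpace ℂ F] {τ : ℂ}

theorem hasTemperateGrowth_resolventSymbol (hτ : -τ ∈ slitPlane) :
    (resolventSymbol τ : E → ℂ).HasTemperateGrowth := by
  rw [resolventSymbol_eq_inv_ofReal_sub]
  exact hasTemperateGrowth_inv_ofReal_sub (by fun_prop) (fun ξ => by positivity) hτ

variable [FiniteDimensional ℝ E] [MeasurableSpace E] [BorelSpace E]

/-- The resolvent `(-Δ - τ)⁻¹` on Schwartz functions, as a Fourier multiplier. It is meaningful
for `τ ∉ [0, ∞)`, where its symbol has temperate growth. -/
def schwartzResolvent (τ : ℂ) : 𝓢(E, F) →L[ℂ] 𝓢(E, F) :=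
  fourierMultiplierCLM F (resolventSymbol τ)

theorem schwartzResolvent_coe (hτ : -τ ∈ slitPlane) (f : 𝓢(E, F)) :
    ⇑(schwartzResolvent τ f) = 𝓕⁻ (fun ξ => resolventSymbol τ ξ • 𝓕 (⇑f) ξ) := by
  rw [schwartzResolvent, fourierMultiplierCLM_apply, fourierInv_coe,
    smulLeftCLM_apply (hasTemperateGrowth_resolventSymbol hτ), fourier_coe]

variable [CompleteSpace F]

theorem neg_laplacian_schwartzResolvent_sub (hτ : -τ ∈ slitPlane) (f : 𝓢(E, F)) :
    -(Δ (schwartzResolvent τ f) : 𝓢(E, F)) - τ • schwartzResolvent τ f = f := by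
  have hsq : (‖·‖ ^ 2 : E → ℝ).HasTemperateGrowth := Function.hasTemperateGrowth_norm_sq E
  have hm := hasTemperateGrowth_resolventSymbol (E := E) hτ
  refine (fourierEquiv ℂ 𝓢(E, F)).injective ?_
  rw [laplacian_eq_fourierMultiplierCLM, schwartzResolvent, neg_smul, neg_neg, map_sub]
  simp only [fourierEquiv_apply, FourierTransform.fourier_smul, fourierMultiplierCLM_apply,
    FourierTransform.fourier_fourierInv_eq]
  ext ξ
  rw [_root_.sub_apply, _root_.smul_apply, _root_.smul_apply, smulLeftCLM_apply_apply hsq,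
    smulLeftCLM_apply_apply hm]
  have := congrArg (· • 𝓕 f ξ) (mul_resolventSymbol hτ ξ)
  simpa [sub_mul, sub_smul, mul_smul, ← Complex.coe_smul] using this

end Resolvent

section Sobolev

variable {E F : Type*} [NormedAddCommGroup E] [NormedSpace ℝ E] [NormedAddCommGroup F]

theorem norm_fderiv_comp_smul_smul_le [NormedSpace ℝ F] {χ : E → ℝ} {w : E → F} {C r : ℝ}
    (hχ : Differentiable ℝ χ) (hχ_le : ∀ x, ‖χ x‖ ≤ 1) (hχ' : ∀ x, ‖fderiv ℝ χ x‖ ≤ C)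
    (hw : Differentiable ℝ w) (hr : 0 ≤ r) (x : E) :
    ‖fderiv ℝ (fun y => χ (r • y) • w y) x‖ ≤ ‖fderiv ℝ w x‖ + r * C * ‖w x‖ := by
  rw [fderiv_fun_smul (by fun_prop) (hw x), fderiv_comp_smul]
  refine (norm_add_le _ _).trans (add_le_add ?_ ?_)
  · rw [norm_smul]
    exact mul_le_of_le_one_left (norm_nonneg _) (hχ_le _)
  · rw [ContinuousLinearMap.norm_smulRight_apply, norm_smul, Real.norm_of_nonneg hr]
    gcongr
    exact hχ' _

variable [MeasurableSpace E] [BorelSpace E] {μ : Measure E}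

theorem eLpNorm_fderiv_comp_smul_smul_le [NormedSpace ℝ F] {χ : E → ℝ} {w : E → F}
    {C r : ℝ} {p : ℝ≥0∞} (hχ : Differentiable ℝ χ) (hχ_le : ∀ x, ‖χ x‖ ≤ 1)
    (hχ' : ∀ x, ‖fderiv ℝ χ x‖ ≤ C) (hw : ContDiff ℝ 1 w) (hr : 0 ≤ r) (hp : 1 ≤ p) :
    eLpNorm (fderiv ℝ fun y => χ (r • y) • w y) p μ ≤
      eLpNorm (fderiv ℝ w) p μ + ENNReal.ofReal (r * C) * eLpNorm w p μ := by
  have hC : 0 ≤ C := (norm_nonneg _).trans (hχ' 0)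
  calc eLpNorm (fderiv ℝ fun y => χ (r • y) • w y) p μ
      ≤ eLpNorm ((fun x => ‖fderiv ℝ w x‖) + (r * C) • fun x => ‖w x‖) p μ :=
        eLpNorm_mono_real fun x => norm_fderiv_comp_smul_smul_le hχ hχ_le hχ'
          (hw.differentiable one_ne_zero) hr x
    _ ≤ eLpNorm (fun x => ‖fderiv ℝ w x‖) p μ + eLpNorm ((r * C) • fun x => ‖w x‖) p μ :=
        eLpNorm_add_le (hw.continuous_fderiv one_ne_zero).norm.aestronglyMeasurable
          (hw.continuous.norm.const_smul _).aestronglyMeasurable hp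
    _ = eLpNorm (fderiv ℝ w) p μ + ENNReal.ofReal (r * C) * eLpNorm w p μ := by
        rw [eLpNorm_norm, eLpNorm_const_smul, eLpNorm_norm, Real.enorm_of_nonneg (by positivity)]

theorem eLpNorm_le_liminf_eLpNorm_comp_smul_smul [SecondCountableTopology E] [NormedSpace ℝ F]
    {χ : E → ℝ} {w : E → F} (hχ : Continuous χ) (hχ0 : χ 0 = 1) (hw : Continuous w)
    {r : ℕ → ℝ} (hr : Tendsto r atTop (𝓝 0)) (p : ℝ≥0∞) :
    eLpNorm w p μ ≤ liminf (fun N => eLpNorm (fun x => χ (r N • x) • w x) p μ) atTop := by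
  refine Lp.eLpNorm_lim_le_liminf_eLpNorm (fun N => Continuous.aestronglyMeasurable (by fun_prop))
    w (Eventually.of_forall fun x => ?_)
  have hx : Tendsto (fun N => r N • x) atTop (𝓝 0) := by simpa using hr.smul_const x
  simpa [hχ0] using ((hχ.tendsto 0).comp hx).smul_const (w x)

variable [FiniteDimensional ℝ E] [InnerProductSpace ℝ F] [μ.IsAddHaarMeasure]

theorem eLpNorm_le_eLpNorm_fderiv_of_memLp {w : E → F} {p p' : ℝ≥0} (hw : ContDiff ℝ 1 w)
    (hwp : MemLp w p μ) (hp : 1 ≤ p) (hE : 0 < Module.finrank ℝ E)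
    (hp' : (p' : ℝ)⁻¹ = p⁻¹ - (Module.finrank ℝ E : ℝ)⁻¹) :
    eLpNorm w p' μ ≤ eLpNormLESNormFDerivOfEqInnerConst μ p * eLpNorm (fderiv ℝ w) p μ := by
  let χ : ContDiffBump (0 : E) := ⟨1, 2, one_pos, one_lt_two⟩
  have hχ : ContDiff ℝ 1 χ := χ.contDiff
  obtain ⟨C, hC⟩ := (hχ.continuous_fderiv one_ne_zero).bounded_above_of_compact_support
    (χ.hasCompactSupport.fderiv ℝ)
  let r (N : ℕ) : ℝ := 1 / ((N : ℝ) + 1)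
  have hr (N : ℕ) : 0 < r N := by positivity
  have hr_lim : Tendsto r atTop (𝓝 0) := tendsto_one_div_add_atTop_nhds_zero_nat
  set K := eLpNormLESNormFDerivOfEqInnerConst μ p
  have hcutoff (N : ℕ) : eLpNorm (fun x => χ (r N • x) • w x) p' μ ≤
      K * (eLpNorm (fderiv ℝ w) p μ + ENNReal.ofReal (r N * C) * eLpNorm w p μ) :=
    (eLpNorm_le_eLpNorm_fderiv_of_eq_inner μ ((hχ.comp (contDiff_const_smul (r N))).smul hw)
      (χ.hasCompactSupport.comp_smul (hr N).ne').smul_right hp hE hp').trans <|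
      mul_le_mul_right (eLpNorm_fderiv_comp_smul_smul_le (hχ.differentiable one_ne_zero)
        (fun x => (Real.norm_of_nonneg χ.nonneg).trans_le χ.le_one) hC hw (hr N).le
        (mod_cast hp)) _
  have hlim : Tendsto (fun N => K *
      (eLpNorm (fderiv ℝ w) p μ + ENNReal.ofReal (r N * C) * eLpNorm w p μ)) atTop
      (𝓝 (K * (eLpNorm (fderiv ℝ w) p μ + 0 * eLpNorm w p μ))) := by
    have h : Tendsto (fun N => ENNReal.ofReal (r N * C)) atTop (𝓝 0) := by
      simpa using ENNReal.tendsto_ofReal (hr_lim.mul_const C)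
    exact ENNReal.Tendsto.const_mul (tendsto_const_nhds.add
      (ENNReal.Tendsto.mul_const h (Or.inr hwp.eLpNorm_ne_top))) (Or.inr ENNReal.coe_ne_top)
  rw [zero_mul, add_zero] at hlim
  calc eLpNorm w p' μ ≤ liminf (fun N => eLpNorm (fun x => χ (r N • x) • w x) p' μ) atTop :=
        eLpNorm_le_liminf_eLpNorm_comp_smul_smul hχ.continuous
          (χ.one_of_mem_closedBall (by simp [χ])) hw.continuous hr_lim p'
    _ ≤ K * eLpNorm (fderiv ℝ w) p μ :=
        (liminf_le_liminf (Eventually.of_forall hcutoff)).trans_eq hlim.liminf_eq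

end Sobolev

section UniformResolventEstimate

variable {E : Type*} [NormedAddCommGroup E] [InnerProductSpace ℝ E] [FiniteDimensional ℝ E]
  [MeasurableSpace E] [BorelSpace E]

theorem eLpNorm_fderiv_le_sqrt_integral_gradSq {F : Type*} [NormedAddCommGroup F]
    [InnerProductSpace ℝ F] (f : 𝓢(E, F)) :
    eLpNorm (fderiv ℝ f) 2 volume ≤ ENNReal.ofReal √(∫ x, gradSq f x) := by
  have hsq (x : E) : √(gradSq f x) ^ 2 = gradSq f x := Real.sq_sqrt (gradSq_nonneg f x)
  have hmem : MemLp (fun x => √(gradSq f x)) 2 volume :=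
    (memLp_two_iff_integrable_sq (continuous_gradSq f).sqrt.aestronglyMeasurable).2
      (by simpa only [hsq] using integrable_gradSq f)
  refine (eLpNorm_mono_real (norm_fderiv_le_sqrt_gradSq f)).trans_eq ?_
  rw [hmem.eLpNorm_eq_integral_rpow_norm two_ne_zero ENNReal.ofNat_ne_top, Real.sqrt_eq_rpow]
  simp [hsq]

theorem eLpNorm_le_sqrt_integral_gradSq {F : Type*} [NormedAddCommGroup F]
    [InnerProductSpace ℝ F] (hE : 3 ≤ Module.finrank ℝ E) (f : 𝓢(E, F)) :
    eLpNorm f (ENNReal.ofReal (2 * Module.finrank ℝ E / (Module.finrank ℝ E - 2))) volume ≤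
      ENNReal.ofReal (eLpNormLESNormFDerivOfEqInnerConst (volume : Measure E) 2 *
        √(∫ x, gradSq f x)) := by
  have hE' : (3 : ℝ) ≤ Module.finrank ℝ E := Nat.ofNat_le_cast.2 hE
  have hE2 : (0 : ℝ) < Module.finrank ℝ E - 2 := by linarith
  have hSobolev := eLpNorm_le_eLpNorm_fderiv_of_memLp (p := 2) (μ := volume)
    (p' := (2 * (Module.finrank ℝ E : ℝ) / (Module.finrank ℝ E - 2)).toNNReal)
    (f.smooth 1) (f.memLp _) one_le_two (by linarith) (by
      rw [Real.coe_toNNReal _ (by positivity)]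
      push_cast
      field)
  rw [ENNReal.ofReal_mul NNReal.zero_le_coe, ENNReal.ofReal_coe_nnreal]
  exact hSobolev.trans (mul_le_mul_right (eLpNorm_fderiv_le_sqrt_integral_gradSq f) _)

theorem eLpNorm_schwartzResolvent_le (hE : 3 ≤ Module.finrank ℝ E) {τ : ℂ} (hτ : -τ ∈ slitPlane)
    (ψ : 𝓢(E, ℂ)) :
    eLpNorm (schwartzResolvent τ ψ)
        (ENNReal.ofReal (2 * Module.finrank ℝ E / (Module.finrank ℝ E - 2))) volume ≤
      ENNReal.ofReal (eLpNormLESNormFDerivOfEqInnerConst (volume : Measure E) 2 *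
        √(2176 * ∫ x, (regNorm 1 x * ‖ψ x‖) ^ 2)) := by
  obtain ⟨w, hw, hgrad⟩ := exists_norm_eq_integral_gradSq_le (u := schwartzResolvent τ ψ) hE
    fun x => congrArg (· x) (neg_laplacian_schwartzResolvent_sub hτ ψ)
  rw [← eLpNorm_congr_norm_ae (Eventually.of_forall hw)]
  exact (eLpNorm_le_sqrt_integral_gradSq hE w).trans (by gcongr)

theorem resolvent_weighted_L2_to_Lp_general (hE : 3 ≤ Module.finrank ℝ E) :
    ∃ C : ℝ, 0 < C ∧ ∀ τ : ℂ, -τ ∈ slitPlane → ∀ ψ : 𝓢(E, ℂ),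
      eLpNorm (𝓕⁻ (fun ξ : E => (4 * (π : ℂ) ^ 2 * (‖ξ‖ : ℂ) ^ 2 - τ)⁻¹ * 𝓕 (⇑ψ) ξ))
        (ENNReal.ofReal (2 * (Module.finrank ℝ E : ℝ) / ((Module.finrank ℝ E : ℝ) - 2))) volume ≤
      ENNReal.ofReal (C * √(∫ x : E, (1 + ‖x‖ ^ 2) * ‖ψ x‖ ^ 2)) := by
  set K := eLpNormLESNormFDerivOfEqInnerConst (volume : Measure E) 2
  refine ⟨(K + 1) * √2176, by positivity, fun τ hτ ψ => ?_⟩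
  have hweight : ∫ x, (regNorm 1 x * ‖ψ x‖) ^ 2 = ∫ x, (1 + ‖x‖ ^ 2) * ‖ψ x‖ ^ 2 := by
    simp only [mul_pow, regNorm_sq, one_pow]
  refine (schwartzResolvent_coe hτ ψ ▸ eLpNorm_schwartzResolvent_le hE hτ ψ).trans ?_
  rw [hweight, Real.sqrt_mul (by norm_num), mul_assoc]
  gcongr
  exact le_add_of_nonneg_right zero_le_one

end UniformResolventEstimate

/-- Uniform weighted resolvent estimate
`‖R⁻(τ)ψ‖_{L^{2n/(n−2)}} ≤ C ‖⟨x⟩ψ‖_{L²}` over the open lower half-plane. -/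
theorem resolvent_weighted_L2_to_Lp (n : ℕ) (hn : 3 ≤ n) :
    ∃ C : ℝ, 0 < C ∧ ∀ τ : ℂ, τ.im < 0 →
      ∀ ψ : SchwartzMap (EuclideanSpace ℝ (Fin n)) ℂ,
        eLpNorm (𝓕⁻ (fun ξ : EuclideanSpace ℝ (Fin n) =>
            (4 * (π : ℂ) ^ 2 * (‖ξ‖ : ℂ) ^ 2 - τ)⁻¹ * 𝓕 (⇑ψ) ξ))
          (ENNReal.ofReal (2 * (n : ℝ) / ((n : ℝ) - 2))) volume
        ≤ ENNReal.ofReal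
            (C * Real.sqrt (∫ x : EuclideanSpace ℝ (Fin n),
              (1 + ‖x‖ ^ 2) * ‖ψ x‖ ^ 2)) := by
  obtain ⟨C, hC, h⟩ := resolvent_weighted_L2_to_Lp_general
    (E := EuclideanSpace ℝ (Fin n)) (by rwa [finrank_euclideanSpace_fin])
  exact ⟨C, hC, fun τ hτ => by simpa using h τ (Or.inr (neg_ne_zero.2 hτ.ne))⟩
end
end

section
/- Let n ≥ 3. There is a constant C depending only on n such that for all Schwartz functions f and ψ on ℝⁿ, Σ_{k ∈ ℤ} | ∫_{ℝⁿ} e^{2πik|ξ|²} f̂(ξ) · conj(ψ̂(ξ)) dξ |² ≤ C ‖f‖²_{L²(ℝⁿ)} ‖⟨x⟩ψ‖²_{L²(ℝⁿ)}. (This is a discrete-time Kato smoothing bound: the sampled inner products ⟨e^{−2πikΔ}f, ψ⟩ are square-summable over k ∈ ℤ.) -/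
open MeasureTheory Complex FourierTransform
open scoped ENNReal Real

noncomputable section

/-!
By duality, the bound says that `h(ξ) = ∑ cₖ e^{2πik|ξ|²} ψ̂(ξ)` satisfies
`‖h‖² ≤ C ‖⟨x⟩ψ‖² ∑ |cₖ|²` for finitely supported `c`. Here `|h|² = w(|ξ|²) |ψ̂|²`, where
`w = |∑ cₖ e^{2πikt}|²` is 1-periodic with mean `∑ |cₖ|²`. In polar coordinates with `s = |ξ|²`,
the density of `|ψ̂|²` in `s` along a ray, evaluated at a point `s`, is at most the integral of the
density of `|ψ̂|² + |∇ψ̂|² / 2` over the window `[s, s + 1)`; after exchanging the integrals, each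
point sees `w` over exactly one period, so only its mean survives. Plancherel turns the `H¹` norm
of `ψ̂` into `‖⟨x⟩ψ‖`.
-/

open Set Module
open scoped SchwartzMap InnerProductSpace

section PeriodicWeights

variable {T : ℝ}

theorem lintegral_Ioi_mul_le_of_le_lintegral_Ico [Fact (0 < T)] {w : AddCircle T → ℝ≥0∞}
    (hw : Measurable w) {F G : ℝ → ℝ≥0∞} (hG : Measurable G) {a : ℝ}
    (hFG : ∀ s > a, F s ≤ ∫⁻ t in Ico s (s + T), G t) :
    ∫⁻ s in Ioi a, w s * F s ≤ (∫⁻ x, w x) * ∫⁻ t in Ioi a, G t := by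
  let K : ℝ → ℝ → ℝ≥0∞ := fun s t ↦ (Ico s (s + T)).indicator (fun t ↦ w s * G t) t
  have hK : Measurable (Function.uncurry K) := by
    have hset : MeasurableSet {p : ℝ × ℝ | p.2 ∈ Ico p.1 (p.1 + T)} :=
      (measurableSet_le measurable_fst measurable_snd).inter
        (measurableSet_lt measurable_snd (measurable_fst.add_const T))
    exact Measurable.indicator (f := fun p : ℝ × ℝ ↦ w p.1 * G p.2) (by fun_prop) hset
  have hKF : ∀ s ∈ Ioi a, w s * F s ≤ ∫⁻ t in Ioi a, K s t := fun s hs ↦ by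
    calc w s * F s ≤ ∫⁻ t in Ico s (s + T), w s * G t := by
          grw [hFG s hs, lintegral_const_mul _ hG]
      _ = ∫⁻ t in Ioi a, K s t := by
          have hsub : Ico s (s + T) ⊆ Ioi a := fun t ht ↦ lt_of_lt_of_le hs ht.1
          rw [setLIntegral_indicator measurableSet_Ico, inter_eq_left.2 hsub]
  have hKG : ∀ t, ∫⁻ s in Ioi a, K s t ≤ (∫⁻ x, w x) * G t := fun t ↦ by
    calc ∫⁻ s in Ioi a, K s t ≤ ∫⁻ s, K s t := setLIntegral_le_lintegral _ _
      _ = ∫⁻ s, (Ioc (t - T) (t - T + T)).indicator (fun s : ℝ ↦ w s * G t) s := by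
        refine lintegral_congr fun s ↦ ?_
        simp only [K, indicator, mem_Ico, mem_Ioc, sub_add_cancel, sub_lt_iff_lt_add, and_comm]
      _ = (∫⁻ x, w x) * G t := by
        rw [lintegral_indicator measurableSet_Ioc, lintegral_mul_const _ (by fun_prop),
          AddCircle.lintegral_preimage]
  calc ∫⁻ s in Ioi a, w s * F s ≤ ∫⁻ s in Ioi a, ∫⁻ t in Ioi a, K s t :=
        setLIntegral_mono' measurableSet_Ioi hKF
    _ = ∫⁻ t in Ioi a, ∫⁻ s in Ioi a, K s t := lintegral_lintegral_swap hK.aemeasurable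
    _ ≤ ∫⁻ t in Ioi a, (∫⁻ x, w x) * G t := lintegral_mono hKG
    _ = (∫⁻ x, w x) * ∫⁻ t in Ioi a, G t := lintegral_const_mul _ hG

theorem mul_le_integral_add_of_neg_deriv_le {F F' G : ℝ → ℝ} {a : ℝ} (hT : 0 ≤ T)
    (hF : ∀ t ∈ Icc a (a + T), HasDerivAt F (F' t) t) (hG : ContinuousOn G (Icc a (a + T)))
    (hG0 : ∀ t ∈ Icc a (a + T), 0 ≤ G t) (hF' : ∀ t ∈ Icc a (a + T), -F' t ≤ G t) :
    T * F a ≤ ∫ t in a..a + T, (F t + T * G t) := by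
  -- Integrate the derivative of `(t - (a + T)) * F t`, which vanishes at the right endpoint.
  have hderiv : ∀ t ∈ Icc a (a + T),
      HasDerivAt (fun t ↦ (t - (a + T)) * F t) (F t + (t - (a + T)) * F' t) t := fun t ht ↦ by
    simpa using ((hasDerivAt_id t).sub_const (a + T)).fun_mul (hF t ht)
  have hFc : ContinuousOn F (Icc a (a + T)) := fun t ht ↦
    (hF t ht).continuousAt.continuousWithinAt
  have hle : ∀ t ∈ Icc a (a + T), F t + (t - (a + T)) * F' t ≤ F t + T * G t := fun t ht ↦ by
    nlinarith [hG0 t ht, hF' t ht, ht.1, ht.2]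
  simpa using intervalIntegral.sub_le_integral_of_hasDeriv_right_of_le (by linarith)
    (fun t ht ↦ (hderiv t ht).continuousAt.continuousWithinAt)
    (fun t ht ↦ (hderiv t (Ioo_subset_Icc_self ht)).hasDerivWithinAt)
    ((hFc.add (hG.const_smul T)).integrableOn_Icc)
    (fun t ht ↦ hle t (Ioo_subset_Icc_self ht))

end PeriodicWeights

section Radial

variable {F : Type*} [NormedAddCommGroup F] [InnerProductSpace ℝ F] {u u' : ℝ → F}

-- With `x = u r` and `y = u' r`, the left-hand side is `-d/dr (r ^ (m + 1) * ‖u r‖ ^ 2)`.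
-- Completing the square needs an exponent `≥ 1`; along rays it is the dimension minus two.
theorem neg_deriv_pow_mul_norm_sq_le (m : ℕ) {r : ℝ} (hr : 0 ≤ r) (x y : F) :
    -((m + 1) * r ^ m * ‖x‖ ^ 2 + r ^ (m + 1) * (2 * ⟪x, y⟫_ℝ)) ≤ r ^ (m + 2) * ‖y‖ ^ 2 := by
  have hsq : 0 ≤ r ^ m * ‖x + r • y‖ ^ 2 + m * r ^ m * ‖x‖ ^ 2 := by positivity
  rw [norm_add_sq_real, inner_smul_right, norm_smul, Real.norm_of_nonneg hr] at hsq
  linear_combination hsq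

theorem hasDerivAt_pow_mul_norm_sq_sqrt (m : ℕ) (hu : ∀ r, HasDerivAt u (u' r) r) {s : ℝ}
    (hs : 0 < s) :
    HasDerivAt (fun s ↦ √s ^ (m + 1) * ‖u √s‖ ^ 2)
      (((m + 1) * √s ^ m * ‖u √s‖ ^ 2 + √s ^ (m + 1) * (2 * ⟪u √s, u' √s⟫_ℝ)) / (2 * √s)) s := by
  have hpow : HasDerivAt (fun r : ℝ ↦ r ^ (m + 1)) ((m + 1) * √s ^ m) √s := by
    simpa using hasDerivAt_pow (m + 1) √s
  simpa [Function.comp_def, div_eq_mul_inv] using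
    (hpow.fun_mul (hu √s).norm_sq).comp s (Real.hasDerivAt_sqrt hs.ne')

theorem pow_mul_norm_sq_sqrt_le_integral (m : ℕ) (hu : ∀ r, HasDerivAt u (u' r) r)
    (hu' : Continuous u') {s : ℝ} (hs : 0 < s) :
    √s ^ (m + 1) * ‖u √s‖ ^ 2 ≤
      ∫ t in s..s + 1, √t ^ (m + 1) * (‖u √t‖ ^ 2 + ‖u' √t‖ ^ 2 / 2) := by
  have hpos : ∀ t ∈ Icc s (s + 1), 0 < t := fun t ht ↦ hs.trans_le ht.1
  have hderiv_le : ∀ t ∈ Icc s (s + 1),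
      -(((m + 1) * √t ^ m * ‖u √t‖ ^ 2 + √t ^ (m + 1) * (2 * ⟪u √t, u' √t⟫_ℝ)) / (2 * √t)) ≤
        √t ^ (m + 1) * (‖u' √t‖ ^ 2 / 2) := fun t ht ↦ by
    have ht0 : 0 < √t := Real.sqrt_pos.2 (hpos t ht)
    rw [← neg_div, div_le_iff₀ (by positivity)]
    exact (neg_deriv_pow_mul_norm_sq_le m ht0.le _ _).trans_eq (by ring)
  simpa [mul_add] using mul_le_integral_add_of_neg_deriv_le zero_le_one
    (G := fun t ↦ √t ^ (m + 1) * (‖u' √t‖ ^ 2 / 2))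
    (fun t ht ↦ hasDerivAt_pow_mul_norm_sq_sqrt m hu (hpos t ht))
    (by fun_prop) (fun t _ ↦ by positivity) hderiv_le

theorem pow_mul_enorm_sq_sqrt_le_lintegral (m : ℕ) (hu : ∀ r, HasDerivAt u (u' r) r)
    (hu' : Continuous u') {s : ℝ} (hs : 0 < s) :
    ENNReal.ofReal (√s ^ (m + 1)) * ‖u √s‖ₑ ^ 2 ≤
      ∫⁻ t in Ico s (s + 1), ENNReal.ofReal (√t ^ (m + 1)) * (‖u √t‖ₑ ^ 2 + ‖u' √t‖ₑ ^ 2 / 2) := by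
  have huc : Continuous u := continuous_iff_continuousAt.2 fun r ↦ (hu r).continuousAt
  have hint : IntegrableOn (fun t ↦ √t ^ (m + 1) * (‖u √t‖ ^ 2 + ‖u' √t‖ ^ 2 / 2))
      (Ioc s (s + 1)) :=
    (Continuous.integrableOn_Icc (by fun_prop)).mono_set Ioc_subset_Icc_self
  have hle := ENNReal.ofReal_le_ofReal (pow_mul_norm_sq_sqrt_le_integral m hu hu' hs)
  rw [intervalIntegral.integral_of_le (by linarith),
    ofReal_integral_eq_lintegral_ofReal hint (.of_forall fun t ↦ by positivity)] at hle
  rw [← restrict_Ico_eq_restrict_Ioc] at hle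
  convert hle using 3 with t
  · rw [ENNReal.ofReal_mul (by positivity), ENNReal.ofReal_pow (norm_nonneg _), ofReal_norm]
  · rw [ENNReal.ofReal_mul (by positivity), ENNReal.ofReal_add (by positivity) (by positivity),
      ENNReal.ofReal_div_of_pos two_pos, ENNReal.ofReal_pow (norm_nonneg _),
      ENNReal.ofReal_pow (norm_nonneg _), ofReal_norm, ofReal_norm, ENNReal.ofReal_ofNat]

theorem lintegral_Ioi_eq_lintegral_comp_sq (g : ℝ → ℝ≥0∞) :
    ∫⁻ s in Ioi 0, g s = ∫⁻ r in Ioi (0 : ℝ), ENNReal.ofReal (2 * r) * g (r ^ 2) := by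
  have himage : (fun r : ℝ ↦ r ^ 2) '' Ioi 0 = Ioi 0 := by
    ext s
    exact ⟨fun ⟨r, hr, h⟩ ↦ h ▸ sq_pos_of_pos (mem_Ioi.1 hr),
      fun hs ↦ ⟨√s, Real.sqrt_pos.2 hs, Real.sq_sqrt (le_of_lt hs)⟩⟩
  have hderiv : ∀ r ∈ Ioi (0 : ℝ), HasDerivWithinAt (fun r : ℝ ↦ r ^ 2) (2 * r) (Ioi 0) r :=
    fun r _ ↦ by simpa using (hasDerivAt_pow 2 r).hasDerivWithinAt
  conv_lhs => rw [← himage, lintegral_image_eq_lintegral_deriv_mul_of_monotoneOn measurableSet_Ioi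
    hderiv ((pow_left_strictMonoOn₀ two_ne_zero).mono Ioi_subset_Ici_self).monotoneOn]

theorem lintegral_Ioi_pow_mul_eq_lintegral_sqrt (m : ℕ) (g : ℝ → ℝ≥0∞) :
    ∫⁻ r in Ioi 0, ENNReal.ofReal (r ^ (m + 1)) * g r =
      2⁻¹ * ∫⁻ s in Ioi (0 : ℝ), ENNReal.ofReal (√s ^ m) * g √s := by
  rw [lintegral_Ioi_eq_lintegral_comp_sq fun s ↦ ENNReal.ofReal (√s ^ m) * g √s,
    ← lintegral_const_mul' _ _ (by simp)]
  refine setLIntegral_congr_fun measurableSet_Ioi fun r hr ↦ ?_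
  have hr0 : 0 ≤ r := le_of_lt hr
  have h2 : (2⁻¹ : ℝ≥0∞) = ENNReal.ofReal 2⁻¹ := by simp [ENNReal.ofReal_inv_of_pos]
  simp only [Real.sqrt_sq hr0, ← mul_assoc]
  rw [h2, ← ENNReal.ofReal_mul (by positivity), ← ENNReal.ofReal_mul (by positivity)]
  congr 2
  ring

theorem lintegral_Ioi_pow_mul_periodic_sq_mul_enorm_sq_le (m : ℕ)
    (hu : ∀ r, HasDerivAt u (u' r) r) (hu' : Continuous u')
    {w : UnitAddCircle → ℝ≥0∞} (hw : Measurable w) :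
    ∫⁻ r in Ioi (0 : ℝ), ENNReal.ofReal (r ^ (m + 2)) * (w ↑(r ^ 2) * ‖u r‖ₑ ^ 2) ≤
      (∫⁻ x, w x) * ∫⁻ r in Ioi (0 : ℝ),
        ENNReal.ofReal (r ^ (m + 2)) * (‖u r‖ₑ ^ 2 + ‖u' r‖ₑ ^ 2 / 2) := by
  have huc : Continuous u := continuous_iff_continuousAt.2 fun r ↦ (hu r).continuousAt
  have hG : Measurable fun t ↦
      ENNReal.ofReal (√t ^ (m + 1)) * (‖u √t‖ₑ ^ 2 + ‖u' √t‖ₑ ^ 2 / 2) := by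
    have hu_meas : Measurable fun t ↦ ‖u √t‖ₑ := (huc.comp Real.continuous_sqrt).enorm.measurable
    have hu'_meas : Measurable fun t ↦ ‖u' √t‖ₑ := (hu'.comp Real.continuous_sqrt).enorm.measurable
    fun_prop
  rw [lintegral_Ioi_pow_mul_eq_lintegral_sqrt, lintegral_Ioi_pow_mul_eq_lintegral_sqrt,
    mul_left_comm]
  gcongr 2⁻¹ * ?_
  refine (setLIntegral_congr_fun measurableSet_Ioi fun s hs ↦ ?_).trans_le
    (lintegral_Ioi_mul_le_of_le_lintegral_Ico hw hG
      fun s ↦ pow_mul_enorm_sq_sqrt_le_lintegral m hu hu')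
  rw [Real.sq_sqrt (le_of_lt hs), mul_left_comm]

end Radial

section Polar

variable {E : Type*} [NormedAddCommGroup E] [NormedSpace ℝ E] [FiniteDimensional ℝ E]
  [MeasurableSpace E] [BorelSpace E] (μ : Measure E) [μ.IsAddHaarMeasure]

theorem lintegral_eq_lintegral_toSphere [Nontrivial E] {f : E → ℝ≥0∞} (hf : Measurable f) :
    ∫⁻ x, f x ∂μ = ∫⁻ ω : Metric.sphere (0 : E) 1, (∫⁻ r in Ioi (0 : ℝ),
      ENNReal.ofReal (r ^ (finrank ℝ E - 1)) * f (r • (ω : E))) ∂μ.toSphere := by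
  have hpolar : Measurable fun p : Metric.sphere (0 : E) 1 × Ioi (0 : ℝ) ↦
      f (p.2.1 • (p.1 : E)) := by fun_prop
  calc ∫⁻ x, f x ∂μ = ∫⁻ x : ({(0)}ᶜ : Set E), f x.1 ∂(μ.comap (↑)) := by
        rw [lintegral_subtype_comap (measurableSet_singleton _).compl, restrict_compl_singleton]
    _ = ∫⁻ p, f (p.2.1 • (p.1 : E)) ∂μ.toSphere.prod (.volumeIoiPow (finrank ℝ E - 1)) := by
        rw [← μ.measurePreserving_homeomorphUnitSphereProd.lintegral_comp_emb
          (Homeomorph.measurableEmbedding _)]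
        refine lintegral_congr fun x ↦ ?_
        have hx : ‖(x : E)‖ ≠ 0 := norm_ne_zero_iff.2 x.2
        simp [homeomorphUnitSphereProd, smul_smul, hx]
    _ = _ := by
        rw [lintegral_prod _ hpolar.aemeasurable]
        refine lintegral_congr fun ω ↦ ?_
        have hray : Measurable fun r : Ioi (0 : ℝ) ↦ f (r.1 • (ω : E)) := by fun_prop
        rw [Measure.volumeIoiPow, lintegral_withDensity_eq_lintegral_mul _ (by fun_prop) hray]
        exact lintegral_subtype_comap measurableSet_Ioi
          fun r : ℝ ↦ ENNReal.ofReal (r ^ (finrank ℝ E - 1)) * f (r • (ω : E))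

theorem lintegral_le_mul_lintegral_of_rays [Nontrivial E] {f g : E → ℝ≥0∞} (hf : Measurable f)
    (hg : Measurable g) {c : ℝ≥0∞}
    (hfg : ∀ ω : E, ‖ω‖ = 1 →
      ∫⁻ r in Ioi (0 : ℝ), ENNReal.ofReal (r ^ (finrank ℝ E - 1)) * f (r • ω) ≤
        c * ∫⁻ r in Ioi (0 : ℝ), ENNReal.ofReal (r ^ (finrank ℝ E - 1)) * g (r • ω)) :
    ∫⁻ x, f x ∂μ ≤ c * ∫⁻ x, g x ∂μ := by
  rw [lintegral_eq_lintegral_toSphere μ hf, lintegral_eq_lintegral_toSphere μ hg,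
    ← lintegral_const_mul _ (Measurable.lintegral_prod_right (by fun_prop))]
  exact lintegral_mono fun ω ↦ hfg ω (mem_sphere_zero_iff_norm.1 ω.2)

end Polar

theorem norm_sq_le_sum_norm_apply_sq {ι E F : Type*} [Fintype ι] [NormedAddCommGroup E]
    [InnerProductSpace ℝ E] [SeminormedAddCommGroup F] [NormedSpace ℝ F]
    (b : OrthonormalBasis ι ℝ E) (A : E →L[ℝ] F) : ‖A‖ ^ 2 ≤ ∑ i, ‖A (b i)‖ ^ 2 := by
  refine (Real.le_sqrt (norm_nonneg _) (by positivity)).1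
    (A.opNorm_le_bound (Real.sqrt_nonneg _) fun x ↦ ?_)
  calc ‖A x‖ = ‖∑ i, b.repr x i • A (b i)‖ := by
        conv_lhs => rw [← b.sum_repr x]
        simp only [map_sum, map_smul]
    _ ≤ ∑ i, ‖A (b i)‖ * ‖b.repr x i‖ :=
        (norm_sum_le _ _).trans_eq (by simp only [norm_smul, mul_comm])
    _ ≤ √(∑ i, ‖A (b i)‖ ^ 2) * ‖x‖ := by
        grw [Real.sum_mul_le_sqrt_mul_sqrt, ← EuclideanSpace.norm_eq, b.repr.norm_map]

theorem eLpNorm_two_sq_eq_lintegral {α ε : Type*} [TopologicalSpace ε] [ContinuousENorm ε]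
    {mα : MeasurableSpace α} (f : α → ε) (μ : Measure α) :
    eLpNorm f 2 μ ^ 2 = ∫⁻ x, ‖f x‖ₑ ^ 2 ∂μ := by
  simpa using eLpNorm_nnreal_pow_eq_lintegral (f := f) (μ := μ) (p := 2) two_ne_zero

theorem lintegral_enorm_sq_eq_ofReal_integral {α F : Type*} [NormedAddCommGroup F]
    {mα : MeasurableSpace α} {μ : Measure α} {f : α → F} (hf : MemLp f 2 μ) :
    ∫⁻ x, ‖f x‖ₑ ^ 2 ∂μ = ENNReal.ofReal (∫ x, ‖f x‖ ^ 2 ∂μ) := by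
  rw [ofReal_integral_eq_lintegral_ofReal (hf.integrable_norm_pow two_ne_zero)
    (.of_forall fun x ↦ by positivity)]
  simp only [ENNReal.ofReal_pow (norm_nonneg _), ofReal_norm]

section Duality

variable {α ι 𝕜 H : Type*} [RCLike 𝕜] [NormedAddCommGroup H] [InnerProductSpace 𝕜 H]
  {mα : MeasurableSpace α} {μ : Measure α}

theorem enorm_integral_inner_sq_le {f g : α → H} (hf : AEStronglyMeasurable f μ)
    (hg : AEStronglyMeasurable g μ) :
    ‖∫ x, ⟪f x, g x⟫_𝕜 ∂μ‖ₑ ^ 2 ≤ (∫⁻ x, ‖f x‖ₑ ^ 2 ∂μ) * ∫⁻ x, ‖g x‖ₑ ^ 2 ∂μ := by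
  have hholder := eLpNorm_le_eLpNorm_mul_eLpNorm_of_nnnorm (p := 2) (q := 2) (r := 1) hf hg
    (fun x y ↦ ⟪x, y⟫_𝕜) 1 (.of_forall fun x ↦ by
      simpa using nnnorm_inner_le_nnnorm (𝕜 := 𝕜) (f x) (g x))
  rw [eLpNorm_one_eq_lintegral_enorm, ENNReal.coe_one, one_mul] at hholder
  grw [enorm_integral_le_lintegral_enorm, hholder, mul_pow, eLpNorm_two_sq_eq_lintegral,
    eLpNorm_two_sq_eq_lintegral]

-- Test the bound `hM` against the coefficients `c i = ∫ ⟪v i, h⟫` themselves.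
theorem sum_enorm_integral_inner_sq_le {S : Finset ι} {v : ι → α → H} {h : α → H} {M : ℝ≥0∞}
    (hv : ∀ i ∈ S, MemLp (v i) 2 μ) (hh : MemLp h 2 μ)
    (hM : ∀ c : ι → 𝕜, ∫⁻ x, ‖∑ i ∈ S, c i • v i x‖ₑ ^ 2 ∂μ ≤ M * ∑ i ∈ S, ‖c i‖ₑ ^ 2) :
    ∑ i ∈ S, ‖∫ x, ⟪v i x, h x⟫_𝕜 ∂μ‖ₑ ^ 2 ≤ M * ∫⁻ x, ‖h x‖ₑ ^ 2 ∂μ := by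
  set a : ι → 𝕜 := fun i ↦ ∫ x, ⟪v i x, h x⟫_𝕜 ∂μ
  set A := ∑ i ∈ S, ‖a i‖ₑ ^ 2
  have hsum : MemLp (fun x ↦ ∑ i ∈ S, a i • v i x) 2 μ :=
    memLp_finsetSum S fun i hi ↦ (hv i hi).const_smul (a i)
  have hint : ∀ i ∈ S, Integrable (fun x ↦ ⟪v i x, h x⟫_𝕜) μ := fun i hi ↦
    ((hv i hi).norm.integrable_mul hh.norm).mono
      ((hv i hi).aestronglyMeasurable.inner hh.aestronglyMeasurable)
      (.of_forall fun x ↦ by simpa using norm_inner_le_norm (v i x) (h x))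
  have hpair : ∫ x, ⟪∑ i ∈ S, a i • v i x, h x⟫_𝕜 ∂μ = ((∑ i ∈ S, ‖a i‖ ^ 2 : ℝ) : 𝕜) := by
    simp_rw [sum_inner, inner_smul_left]
    rw [integral_finsetSum S fun i hi ↦ (hint i hi).const_mul _]
    simp_rw [integral_const_mul]
    push_cast
    exact Finset.sum_congr rfl fun i _ ↦ RCLike.conj_mul _
  have hA : ‖((∑ i ∈ S, ‖a i‖ ^ 2 : ℝ) : 𝕜)‖ₑ = A := by
    rw [← ofReal_norm, RCLike.norm_ofReal, abs_of_nonneg (by positivity),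
      ENNReal.ofReal_sum_of_nonneg fun i _ ↦ by positivity]
    simp only [ENNReal.ofReal_pow (norm_nonneg _), ofReal_norm, A]
  have hAtop : A ≠ ∞ := hA ▸ enorm_ne_top
  have hsq : A * A ≤ A * (M * ∫⁻ x, ‖h x‖ₑ ^ 2 ∂μ) := by
    calc A * A = ‖∫ x, ⟪∑ i ∈ S, a i • v i x, h x⟫_𝕜 ∂μ‖ₑ ^ 2 := by rw [hpair, hA, sq]
      _ ≤ (∫⁻ x, ‖∑ i ∈ S, a i • v i x‖ₑ ^ 2 ∂μ) * ∫⁻ x, ‖h x‖ₑ ^ 2 ∂μ :=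
        enorm_integral_inner_sq_le hsum.aestronglyMeasurable hh.aestronglyMeasurable
      _ ≤ A * (M * ∫⁻ x, ‖h x‖ₑ ^ 2 ∂μ) := by grw [hM a]; rw [← mul_assoc, mul_comm A M]
  rcases eq_or_ne A 0 with h0 | h0
  · simp [h0]
  · exact (ENNReal.mul_le_mul_iff_right h0 hAtop).1 hsq

end Duality

theorem enorm_sum_smul_sq_of_orthonormal {ι 𝕜 H : Type*} [RCLike 𝕜] [SeminormedAddCommGroup H]
    [InnerProductSpace 𝕜 H] {v : ι → H} (hv : Orthonormal 𝕜 v) (c : ι → 𝕜) (S : Finset ι) :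
    ‖∑ i ∈ S, c i • v i‖ₑ ^ 2 = ∑ i ∈ S, ‖c i‖ₑ ^ 2 := by
  have hnorm : ‖∑ i ∈ S, c i • v i‖ ^ 2 = ∑ i ∈ S, ‖c i‖ ^ 2 := by
    rw [← inner_self_eq_norm_sq (𝕜 := 𝕜), hv.inner_sum, map_sum]
    exact Finset.sum_congr rfl fun i _ ↦ by rw [RCLike.conj_mul]; norm_cast
  simp only [← ofReal_norm, ← ENNReal.ofReal_pow (norm_nonneg _), hnorm]
  exact ENNReal.ofReal_sum_of_nonneg fun i _ ↦ by positivity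

theorem lintegral_enorm_sum_mul_fourier_sq {T : ℝ} [Fact (0 < T)] (S : Finset ℤ) (c : ℤ → ℂ) :
    ∫⁻ x : AddCircle T, ‖∑ k ∈ S, c k * fourier k x‖ₑ ^ 2 ∂AddCircle.haarAddCircle =
      ∑ k ∈ S, ‖c k‖ₑ ^ 2 := by
  have hterm : ∀ᵐ x ∂AddCircle.haarAddCircle, ∀ k : ℤ,
      (c k • fourierLp (T := T) 2 k : Lp ℂ 2 _) x = c k * fourier k x :=
    ae_all_iff.2 fun k ↦ (Lp.coeFn_smul _ _).trans ((coeFn_fourierLp 2 k).const_smul (c k))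
  rw [← enorm_sum_smul_sq_of_orthonormal (orthonormal_fourier (T := T)), Lp.enorm_def,
    eLpNorm_two_sq_eq_lintegral]
  refine lintegral_congr_ae ?_
  filter_upwards [Lp.coeFn_finsetSum S fun k ↦ c k • fourierLp (T := T) 2 k, hterm] with x hx hxk
  rw [hx, Finset.sum_apply, Finset.sum_congr rfl fun k _ ↦ hxk k]

theorem lintegral_periodic_norm_sq_mul_enorm_sq_le {E F : Type*} [NormedAddCommGroup E]
    [NormedSpace ℝ E] [FiniteDimensional ℝ E] [MeasurableSpace E] [BorelSpace E]
    [NormedAddCommGroup F] [InnerProductSpace ℝ F] (μ : Measure E) [μ.IsAddHaarMeasure]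
    (hE : 3 ≤ finrank ℝ E) {φ : E → F} (hφ : ContDiff ℝ 1 φ) {w : UnitAddCircle → ℝ≥0∞}
    (hw : Measurable w) :
    ∫⁻ ξ, w ↑(‖ξ‖ ^ 2) * ‖φ ξ‖ₑ ^ 2 ∂μ ≤
      (∫⁻ x, w x) * ∫⁻ ξ, (‖φ ξ‖ₑ ^ 2 + ‖fderiv ℝ φ ξ‖ₑ ^ 2 / 2) ∂μ := by
  obtain ⟨m, hm⟩ := Nat.exists_eq_add_of_le' hE
  have : Nontrivial E := nontrivial_of_finrank_pos (R := ℝ) (by omega)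
  have hφ_meas : Measurable fun ξ ↦ ‖φ ξ‖ₑ := hφ.continuous.enorm.measurable
  have hray : ∀ (ω : E) (r : ℝ),
      HasDerivAt (fun r : ℝ ↦ φ (r • ω)) (fderiv ℝ φ (r • ω) ω) r := fun ω r ↦ by
    have hline : HasDerivAt (fun r : ℝ ↦ r • ω) ω r := by
      simpa using (hasDerivAt_id r).smul_const ω
    exact (hφ.differentiable one_ne_zero _).hasFDerivAt.comp_hasDerivAt r hline
  have hray' : ∀ ω : E, Continuous fun r : ℝ ↦ fderiv ℝ φ (r • ω) ω := fun ω ↦ by fun_prop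
  refine lintegral_le_mul_lintegral_of_rays μ (by fun_prop) (by fun_prop) fun ω hω ↦ ?_
  rw [hm, Nat.add_sub_assoc (by norm_num)]
  calc _ = ∫⁻ r in Ioi (0 : ℝ), ENNReal.ofReal (r ^ (m + 2)) * (w ↑(r ^ 2) * ‖φ (r • ω)‖ₑ ^ 2) := by
        simp only [norm_smul, hω, mul_one, Real.norm_eq_abs, sq_abs, Nat.reduceSub]
    _ ≤ _ := lintegral_Ioi_pow_mul_periodic_sq_mul_enorm_sq_le m (hray ω) (hray' ω) hw
    _ ≤ _ := by
        gcongr with r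
        simpa [enorm_le_iff_norm_le, hω] using (fderiv ℝ φ (r • ω)).le_opNorm ω

theorem integrable_one_add_norm_sq_mul_norm_sq {E F : Type*} [NormedAddCommGroup E]
    [NormedSpace ℝ E] [MeasurableSpace E] [BorelSpace E] [SecondCountableTopology E]
    [NormedAddCommGroup F] [NormedSpace ℝ F] (μ : Measure E) [μ.HasTemperateGrowth]
    (ψ : 𝓢(E, F)) : Integrable (fun x ↦ (1 + ‖x‖ ^ 2) * ‖ψ x‖ ^ 2) μ := by
  have hbdd : ∀ x, ‖‖ψ x‖‖ ≤ ‖ψ.toBoundedContinuousFunction‖ := fun x ↦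
    (norm_norm _).trans_le (ψ.toBoundedContinuousFunction.norm_coe_le_norm x)
  refine (((ψ.integrable_pow_mul μ 0).add (ψ.integrable_pow_mul μ 2)).mul_bdd
    ψ.continuous.norm.aestronglyMeasurable (.of_forall hbdd)).congr (.of_forall fun x ↦ ?_)
  simp only [Pi.add_apply]
  ring

section Plancherel

variable {E H : Type*} [NormedAddCommGroup E] [InnerProductSpace ℝ E] [FiniteDimensional ℝ E]
  [MeasurableSpace E] [BorelSpace E] [NormedAddCommGroup H] [InnerProductSpace ℂ H]
  [CompleteSpace H]

open SchwartzMap LineDeriv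

theorem lintegral_enorm_sq_fourier (ψ : 𝓢(E, H)) : ∫⁻ ξ, ‖𝓕 ψ ξ‖ₑ ^ 2 = ∫⁻ x, ‖ψ x‖ₑ ^ 2 := by
  rw [lintegral_enorm_sq_eq_ofReal_integral ((𝓕 ψ).memLp 2 volume),
    lintegral_enorm_sq_eq_ofReal_integral (ψ.memLp 2 volume), integral_norm_sq_fourier]

theorem lintegral_enorm_sq_fderiv_fourier_le (ψ : 𝓢(E, H)) :
    ∫⁻ ξ, ‖fderiv ℝ (𝓕 ψ : 𝓢(E, H)) ξ‖ₑ ^ 2 ≤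
      ENNReal.ofReal (2 * π) ^ 2 * ∫⁻ x, ‖x‖ₑ ^ 2 * ‖ψ x‖ₑ ^ 2 := by
  let b := stdOrthonormalBasis ℝ E
  let g i : 𝓢(E, H) := smulLeftCLM H (inner ℝ · (b i)) ψ
  have hfderiv : ∀ ξ, ‖fderiv ℝ (𝓕 ψ : 𝓢(E, H)) ξ‖ₑ ^ 2 ≤ ∑ i, ‖∂_{b i} (𝓕 ψ) ξ‖ₑ ^ 2 := fun ξ ↦ by
    simp only [← ofReal_norm, ← ENNReal.ofReal_pow (norm_nonneg _)]
    rw [← ENNReal.ofReal_sum_of_nonneg fun i _ ↦ by positivity]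
    exact ENNReal.ofReal_le_ofReal (norm_sq_le_sum_norm_apply_sq b _)
  have hpartial : ∀ i, ∫⁻ ξ, ‖∂_{b i} (𝓕 ψ) ξ‖ₑ ^ 2 =
      ENNReal.ofReal (2 * π) ^ 2 * ∫⁻ x, ‖g i x‖ₑ ^ 2 := fun i ↦ by
    rw [lineDerivOp_fourier_eq, lintegral_enorm_sq_fourier,
      ← lintegral_const_mul' _ _ (by finiteness)]
    refine lintegral_congr fun x ↦ ?_
    rw [smul_apply, enorm_smul, mul_pow, ← ofReal_norm (_ : ℂ)]
    simp [abs_of_pos Real.pi_pos, g]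
  have hg : ∀ x, ∑ i, ‖g i x‖ₑ ^ 2 = ‖x‖ₑ ^ 2 * ‖ψ x‖ₑ ^ 2 := fun x ↦ by
    have hnorm : ∑ i, ‖g i x‖ ^ 2 = ‖x‖ ^ 2 * ‖ψ x‖ ^ 2 := by
      rw [← b.sum_sq_norm_inner_left x, Finset.sum_mul]
      refine Finset.sum_congr rfl fun i _ ↦ ?_
      rw [smulLeftCLM_apply_apply (by fun_prop), norm_smul, mul_pow]
    simp only [← ofReal_norm, ← ENNReal.ofReal_pow (norm_nonneg _)]
    rw [← ENNReal.ofReal_sum_of_nonneg fun i _ ↦ by positivity, hnorm,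
      ENNReal.ofReal_mul (by positivity)]
  have hmeas : ∀ h : 𝓢(E, H), Measurable fun x ↦ ‖h x‖ₑ ^ 2 := fun h ↦
    h.continuous.enorm.measurable.pow_const 2
  calc _ ≤ ∫⁻ ξ, ∑ i, ‖∂_{b i} (𝓕 ψ) ξ‖ₑ ^ 2 := lintegral_mono hfderiv
    _ = ENNReal.ofReal (2 * π) ^ 2 * ∫⁻ x, ∑ i, ‖g i x‖ₑ ^ 2 := by
        rw [lintegral_finsetSum _ fun i _ ↦ hmeas _, lintegral_finsetSum _ fun i _ ↦ hmeas _,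
          Finset.mul_sum]
        simp only [hpartial]
    _ = _ := by simp only [hg]

theorem lintegral_enorm_sq_fourier_add_fderiv_le (ψ : 𝓢(E, H)) :
    ∫⁻ ξ, (‖𝓕 ψ ξ‖ₑ ^ 2 + ‖fderiv ℝ (𝓕 ψ : 𝓢(E, H)) ξ‖ₑ ^ 2 / 2) ≤
      ENNReal.ofReal (2 * π ^ 2 * ∫ x, (1 + ‖x‖ ^ 2) * ‖ψ x‖ ^ 2) := by
  have hπ : 1 ≤ ENNReal.ofReal (2 * π ^ 2) := by
    rw [ENNReal.one_le_ofReal]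
    nlinarith [Real.pi_gt_three]
  have hconst : ENNReal.ofReal (2 * π) ^ 2 / 2 = ENNReal.ofReal (2 * π ^ 2) := by
    rw [← ENNReal.ofReal_pow (by positivity), ← ENNReal.ofReal_ofNat 2,
      ← ENNReal.ofReal_div_of_pos two_pos]
    congr 1
    ring
  calc _ = (∫⁻ x, ‖ψ x‖ₑ ^ 2) + (∫⁻ ξ, ‖fderiv ℝ (𝓕 ψ : 𝓢(E, H)) ξ‖ₑ ^ 2) / 2 := by
        rw [lintegral_add_left ((𝓕 ψ).continuous.enorm.measurable.pow_const 2),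
          lintegral_enorm_sq_fourier]
        simp only [div_eq_mul_inv, lintegral_mul_const' _ _ (by finiteness : (2⁻¹ : ℝ≥0∞) ≠ ∞)]
    _ ≤ ENNReal.ofReal (2 * π ^ 2) * (∫⁻ x, ‖ψ x‖ₑ ^ 2) +
          ENNReal.ofReal (2 * π ^ 2) * ∫⁻ x, ‖x‖ₑ ^ 2 * ‖ψ x‖ₑ ^ 2 := by
        grw [lintegral_enorm_sq_fderiv_fourier_le, ENNReal.mul_div_right_comm, hconst]
        gcongr
        exact le_mul_of_one_le_left' hπ
    _ = _ := by
        rw [ENNReal.ofReal_mul (p := 2 * π ^ 2) (by positivity),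
          ofReal_integral_eq_lintegral_ofReal
            (integrable_one_add_norm_sq_mul_norm_sq volume ψ) (.of_forall fun x ↦ by positivity),
          ← mul_add, ← lintegral_add_left (ψ.continuous.enorm.measurable.pow_const 2)]
        congr 2 with x
        rw [add_mul, one_mul, ENNReal.ofReal_add (by positivity) (by positivity),
          ENNReal.ofReal_mul (by positivity)]
        simp only [ENNReal.ofReal_pow (norm_nonneg _), ofReal_norm]

end Plancherel

theorem memLp_fourier_norm_sq_smul {T : ℝ} {E F : Type*} [SeminormedAddCommGroup E]
    [MeasurableSpace E] [OpensMeasurableSpace E] [NormedAddCommGroup F] [NormedSpace ℂ F]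
    {μ : Measure E} {p : ℝ≥0∞} {f : E → F} (hf : MemLp f p μ) (k : ℤ) :
    MemLp (fun ξ ↦ fourier k (↑(‖ξ‖ ^ 2) : AddCircle T) • f ξ) p μ := by
  have hcont : Continuous fun ξ : E ↦ fourier k (↑(‖ξ‖ ^ 2) : AddCircle T) :=
    (fourier k).continuous.comp ((AddCircle.continuous_mk' T).comp (by fun_prop))
  refine hf.of_le (hcont.aestronglyMeasurable.smul hf.aestronglyMeasurable) (.of_forall fun ξ ↦ ?_)
  rw [norm_smul, fourier_apply, Circle.norm_coe, one_mul]

section Kato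

variable {E H : Type*} [NormedAddCommGroup E] [InnerProductSpace ℝ E] [FiniteDimensional ℝ E]
  [MeasurableSpace E] [BorelSpace E] [NormedAddCommGroup H] [InnerProductSpace ℂ H]
  [CompleteSpace H]

theorem lintegral_enorm_sum_fourier_norm_sq_smul_fourier_sq_le (hE : 3 ≤ finrank ℝ E)
    (ψ : 𝓢(E, H)) (S : Finset ℤ) (c : ℤ → ℂ) :
    ∫⁻ ξ, ‖∑ k ∈ S, c k • fourier k (↑(‖ξ‖ ^ 2) : UnitAddCircle) • 𝓕 ψ ξ‖ₑ ^ 2 ≤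
      ENNReal.ofReal (2 * π ^ 2 * ∫ x, (1 + ‖x‖ ^ 2) * ‖ψ x‖ ^ 2) * ∑ k ∈ S, ‖c k‖ₑ ^ 2 := by
  let w : UnitAddCircle → ℝ≥0∞ := fun x ↦ ‖∑ k ∈ S, c k * fourier k x‖ₑ ^ 2
  have hw : Measurable w := Continuous.measurable (by fun_prop)
  have hparseval : ∫⁻ x, w x = ∑ k ∈ S, ‖c k‖ₑ ^ 2 := by
    rw [AddCircle.volume_eq_smul_haarAddCircle, ENNReal.ofReal_one, one_smul]
    exact lintegral_enorm_sum_mul_fourier_sq S c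
  let : InnerProductSpace ℝ H := .complexToReal
  have hmult := lintegral_periodic_norm_sq_mul_enorm_sq_le volume hE ((𝓕 ψ).smooth 1) hw
  have hfactor : ∀ ξ : E, ‖∑ k ∈ S, c k • fourier k (↑(‖ξ‖ ^ 2) : UnitAddCircle) • 𝓕 ψ ξ‖ₑ ^ 2 =
      w ↑(‖ξ‖ ^ 2) * ‖𝓕 ψ ξ‖ₑ ^ 2 := fun ξ ↦ by
    simp only [w, smul_smul, ← Finset.sum_smul, enorm_smul, mul_pow]
  rw [lintegral_congr hfactor, mul_comm]
  grw [hmult, lintegral_enorm_sq_fourier_add_fderiv_le, hparseval]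

theorem discrete_kato_smoothing_weighted_general (hE : 3 ≤ finrank ℝ E) (f ψ : 𝓢(E, H)) :
    ∑' k : ℤ, ‖∫ ξ : E, Complex.exp (2 * π * I * k * ((‖ξ‖ ^ 2 : ℝ) : ℂ)) *
        ⟪𝓕 ψ ξ, 𝓕 f ξ⟫_ℂ‖ₑ ^ 2 ≤
      ENNReal.ofReal (2 * π ^ 2 * (∫ x, ‖f x‖ ^ 2) * ∫ x, (1 + ‖x‖ ^ 2) * ‖ψ x‖ ^ 2) := by
  let v : ℤ → E → H := fun k ξ ↦ fourier k (↑(‖ξ‖ ^ 2) : UnitAddCircle) • 𝓕 ψ ξ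
  have hv : ∀ k ξ, ⟪v (-k) ξ, 𝓕 f ξ⟫_ℂ =
      Complex.exp (2 * π * I * k * ((‖ξ‖ ^ 2 : ℝ) : ℂ)) * ⟪𝓕 ψ ξ, 𝓕 f ξ⟫_ℂ := fun k ξ ↦ by
    rw [inner_smul_left, ← fourier_neg, neg_neg, fourier_coe_apply, ofReal_one, div_one]
  simp only [← hv]
  refine ((Equiv.neg ℤ).tsum_eq fun k ↦ ‖∫ ξ, ⟪v k ξ, 𝓕 f ξ⟫_ℂ‖ₑ ^ 2).trans_le ?_
  rw [ENNReal.tsum_eq_iSup_sum]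
  refine iSup_le fun S ↦ ?_
  refine (sum_enorm_integral_inner_sq_le (fun k _ ↦ memLp_fourier_norm_sq_smul ((𝓕 ψ).memLp 2) k)
    ((𝓕 f).memLp 2) (lintegral_enorm_sum_fourier_norm_sq_smul_fourier_sq_le hE ψ S)).trans_eq ?_
  rw [lintegral_enorm_sq_fourier, lintegral_enorm_sq_eq_ofReal_integral (f.memLp 2 volume),
    ← ENNReal.ofReal_mul (by positivity), mul_right_comm]

end Kato

/-- Discrete-time Kato smoothing: the sampled inner products
`⟨e^{-2πikΔ}f, ψ⟩` are square-summable over `k ∈ ℤ`, with bound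
`C ‖f‖_{L²}² ‖⟨x⟩ψ‖_{L²}²`. -/
theorem discrete_kato_smoothing_weighted (n : ℕ) (hn : 3 ≤ n) :
    ∃ C : ℝ, 0 < C ∧ ∀ f ψ : SchwartzMap (EuclideanSpace ℝ (Fin n)) ℂ,
      (∑' k : ℤ, (‖∫ ξ : EuclideanSpace ℝ (Fin n),
          Complex.exp (2 * (π : ℂ) * I * (k : ℂ) * ((‖ξ‖ ^ 2 : ℝ) : ℂ)) *
            𝓕 (⇑f) ξ * (starRingEnd ℂ) (𝓕 (⇑ψ) ξ)‖₊ : ℝ≥0∞) ^ 2)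
        ≤ ENNReal.ofReal (C * (∫ x : EuclideanSpace ℝ (Fin n), ‖f x‖ ^ 2) *
            (∫ x : EuclideanSpace ℝ (Fin n), (1 + ‖x‖ ^ 2) * ‖ψ x‖ ^ 2)) := by
  refine ⟨2 * π ^ 2, by positivity, fun f ψ ↦ ?_⟩
  simpa only [RCLike.inner_apply, mul_assoc, enorm_eq_nnnorm, SchwartzMap.fourier_coe] using
    discrete_kato_smoothing_weighted_general (by simpa using hn) f ψ
end
end

section
/- Let n ≥ 3, let γ ∈ [(n+1)/2, n+1], and let α ≥ 0 satisfy α + 1/γ > 1. There is a constant C (depending on n, γ, α) such that for all Schwartz functions f and ψ on ℝⁿ, Σ_{k ∈ ℤ} | ∫_{ℝⁿ} e^{2πik|ξ|²} f̂(ξ) · conj(ψ̂(ξ)) dξ |² ≤ C ‖f‖²_{L²(ℝⁿ)} · ( ‖ψ‖_{L²(ℝⁿ)} + ‖ψ‖_{L^{2n/(n+2)}(ℝⁿ)} + ‖F^{−1}(ξ ↦ |ξ|^α ψ̂(ξ))‖_{L^{2γ/(γ+2)}(ℝⁿ)} )². -/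
open MeasureTheory Complex FourierTransform
open scoped ENNReal NNReal Real

noncomputable section

/-!
By a `TT*` argument (the large sieve), `∑ k, |⟪ψ, U ^ k f⟫|²` is at most
`‖f‖² ∑ k, |⟪ψ, U ^ k ψ⟫|`, where `U = 𝓕⁻¹ e^{2πi|ξ|²} 𝓕`, so only the last sum has to be bounded.

Cut `ψ` into pieces `g i` along its dyadic levels `2⁻ⁱ`. The energy bound `‖g i‖₂²` and the
dispersive bound `|k| ^ (-n/2) ‖g i‖₁²` for `⟪g i, U ^ k (g i)⟫` cross at a time `Q i ^ 2`. Using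
the first before that time and the second after it bounds the sum over `k` by some `b i ^ 2`, as
`n/2 > 1`. For pieces at different scales `Q i < Q j` the large sieve, applied with `g i`, improves
on the energy bound and gains a power of `Q i / Q j`. With `‖g i‖₁` replaced by
`m i = 1 + ∫ ‖ψ‖` over `{‖ψ‖ ≥ 2⁻ⁱ}`, the `Q i` grow geometrically, so Schur's test leaves
`∑ i, b i ^ 2`. This is twice `∑ i, (2⁻ⁱ ^ (p - 1) * m i) ^ (2/p)` with `p = 2n/(n+2)`, and the
embedding `ℓ¹ ⊆ ℓ^(2/p)` bounds it once `ψ` is normalized in `L² ∩ Lᵖ`.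
-/

section Sums

theorem sum_sum_mul_le_of_row_sum_le {ι : Type*} {S : Finset ι} {κ : ι → ι → ℝ} {D : ℝ}
    (hκ : ∀ i j, 0 ≤ κ i j) (hsymm : ∀ i j, κ i j = κ j i)
    (hrow : ∀ i ∈ S, ∑ j ∈ S, κ i j ≤ D) (a : ι → ℝ) :
    ∑ i ∈ S, ∑ j ∈ S, a i * a j * κ i j ≤ D * ∑ i ∈ S, a i ^ 2 := by
  calc ∑ i ∈ S, ∑ j ∈ S, a i * a j * κ i j
      ≤ ∑ i ∈ S, ∑ j ∈ S, (a i ^ 2 * κ i j + a j ^ 2 * κ j i) / 2 := by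
        refine Finset.sum_le_sum fun i _ => Finset.sum_le_sum fun j _ => ?_
        rw [hsymm j i]
        nlinarith [mul_nonneg (hκ i j) (sq_nonneg (a i - a j))]
    _ = ∑ i ∈ S, a i ^ 2 * ∑ j ∈ S, κ i j := by
        simp only [← Finset.sum_div, Finset.sum_add_distrib]
        rw [Finset.sum_comm (f := fun i j => a j ^ 2 * κ j i), add_self_div_two]
        simp only [Finset.mul_sum]
    _ ≤ ∑ i ∈ S, a i ^ 2 * D :=
        Finset.sum_le_sum fun i hi => mul_le_mul_of_nonneg_left (hrow i hi) (sq_nonneg _)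
    _ = D * ∑ i ∈ S, a i ^ 2 := by rw [← Finset.sum_mul, mul_comm]

theorem inv_one_sub_rpow_pos {ρ a : ℝ} (hρ0 : 0 ≤ ρ) (hρ1 : ρ < 1) (ha : 0 < a) :
    0 < (1 - ρ ^ a)⁻¹ :=
  inv_pos.2 (sub_pos.2 (Real.rpow_lt_one hρ0 hρ1 ha))

theorem sum_pow_le_of_injOn {ι : Type*} {ρ : ℝ} (h0 : 0 ≤ ρ) (h1 : ρ < 1) {S : Finset ι}
    {f : ι → ℕ} (hf : Set.InjOn f S) : ∑ j ∈ S, ρ ^ f j ≤ (1 - ρ)⁻¹ := by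
  rw [← Finset.sum_image (f := fun k => ρ ^ k) hf]
  exact sum_le_hasSum _ (fun _ _ => by positivity) (hasSum_geometric_of_lt_one h0 h1)

theorem sum_pow_dist_le {ρ : ℝ} (h0 : 0 ≤ ρ) (h1 : ρ < 1) (S : Finset ℕ) (i : ℕ) :
    ∑ j ∈ S, ρ ^ Nat.dist i j ≤ 2 * (1 - ρ)⁻¹ := by
  rw [← Finset.sum_filter_add_sum_filter_not S (fun j => i ≤ j), two_mul]
  refine add_le_add (sum_pow_le_of_injOn h0 h1 ?_) (sum_pow_le_of_injOn h0 h1 ?_) <;>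
  · intro x hx y hy h
    simp only [Finset.coe_filter, Set.mem_ofPred_eq, Nat.dist] at hx hy h
    omega

variable {σ K : ℝ}

theorem sum_Ico_rpow_neg_le (hσ : 1 < σ) {m M : ℕ} (hm : 1 ≤ m) (hM : m ≤ M) :
    ∑ k ∈ Finset.Ico m M, ((k + 1 : ℕ) : ℝ) ^ (-σ) ≤ (m : ℝ) ^ (1 - σ) / (σ - 1) := by
  have hm0 : (0 : ℝ) < m := by exact_mod_cast hm
  have hM0 : (m : ℝ) ≤ M := by exact_mod_cast hM
  have hanti : AntitoneOn (fun x : ℝ => x ^ (-σ)) (Set.Icc m M) := fun x hx y _ hxy =>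
    Real.rpow_le_rpow_of_nonpos (hm0.trans_le hx.1) hxy (by linarith)
  have h0 : (0 : ℝ) ∉ Set.uIcc (m : ℝ) M := by
    rw [Set.uIcc_of_le hM0]; exact fun h => h.1.not_gt hm0
  calc _ ≤ ∫ x in (m : ℝ)..M, x ^ (-σ) := hanti.sum_le_integral_Ico hM
    _ = ((m : ℝ) ^ (1 - σ) - (M : ℝ) ^ (1 - σ)) / (σ - 1) := by
        rw [integral_rpow (.inr ⟨by linarith, h0⟩), neg_add_eq_sub, ← neg_div_neg_eq, neg_sub,
          neg_sub]
    _ ≤ _ := by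
        gcongr
        exact sub_le_self _ (by positivity)

theorem sum_nat_rpow_neg_le (hσ : 1 < σ) (hK : 1 ≤ K) {S : Finset ℕ} (hS : ∀ k ∈ S, K < k) :
    ∑ k ∈ S, (k : ℝ) ^ (-σ) ≤ 2 ^ (σ - 1) / (σ - 1) * K ^ (1 - σ) := by
  have hK0 : 0 < K := by linarith
  set m := ⌊K⌋₊
  have hm : 1 ≤ m := (Nat.one_le_floor_iff _).2 hK
  have hm1 : (1 : ℝ) ≤ m := by exact_mod_cast hm
  set M := max m (S.sup id)
  have hsub : S ⊆ Finset.Ico (m + 1) (M + 1) := fun k hk => Finset.mem_Ico.2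
    ⟨(Nat.floor_lt hK0.le).2 (hS k hk),
      Nat.lt_succ_of_le ((Finset.le_sup (f := id) hk).trans (le_max_right _ _))⟩
  calc _ ≤ ∑ k ∈ Finset.Ico (m + 1) (M + 1), (k : ℝ) ^ (-σ) :=
        Finset.sum_le_sum_of_subset_of_nonneg hsub fun _ _ _ => by positivity
    _ = ∑ k ∈ Finset.Ico m M, ((k + 1 : ℕ) : ℝ) ^ (-σ) :=
        (Finset.sum_Ico_add' (fun k : ℕ => (k : ℝ) ^ (-σ)) m M 1).symm
    _ ≤ (m : ℝ) ^ (1 - σ) / (σ - 1) := sum_Ico_rpow_neg_le hσ hm (le_max_left _ _)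
    _ ≤ (K / 2) ^ (1 - σ) / (σ - 1) := by
        refine div_le_div_of_nonneg_right
          (Real.rpow_le_rpow_of_nonpos (by positivity) ?_ (by linarith)) (by linarith)
        linarith [Nat.lt_floor_add_one K]
    _ = _ := by
        rw [Real.div_rpow hK0.le zero_le_two, ← neg_sub σ 1, Real.rpow_neg zero_le_two (σ - 1)]
        field_simp

theorem sum_int_rpow_neg_le (hσ : 1 < σ) (hK : 1 ≤ K) {S : Finset ℤ}
    (hS : ∀ k ∈ S, K < |(k : ℝ)|) :
    ∑ k ∈ S, |(k : ℝ)| ^ (-σ) ≤ 2 ^ σ / (σ - 1) * K ^ (1 - σ) := by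
  have halfline {T : Finset ℤ} (hT : T ⊆ S) (hinj : Set.InjOn Int.natAbs (T : Set ℤ)) :
      ∑ k ∈ T, |(k : ℝ)| ^ (-σ) ≤ 2 ^ (σ - 1) / (σ - 1) * K ^ (1 - σ) := by
    have h := sum_nat_rpow_neg_le hσ hK (S := T.image Int.natAbs) fun k hk => by
      obtain ⟨j, hj, rfl⟩ := Finset.mem_image.1 hk
      simpa only [Nat.cast_natAbs, Int.cast_abs] using hS j (hT hj)
    rw [Finset.sum_image hinj] at h
    simpa only [Nat.cast_natAbs, Int.cast_abs] using h
  have htwo : (2 : ℝ) ^ σ = 2 ^ (σ - 1) + 2 ^ (σ - 1) := by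
    rw [Real.rpow_sub_one two_ne_zero]; ring
  rw [← Finset.sum_filter_add_sum_filter_not S (fun k => 0 ≤ k), htwo, add_div, add_mul]
  refine add_le_add (halfline (Finset.filter_subset _ _) ?_)
    (halfline (Finset.filter_subset _ _) ?_) <;>
  · intro x hx y hy h
    simp only [Finset.coe_filter, Set.mem_ofPred_eq] at hx hy
    omega

theorem card_filter_abs_le (hK : 1 ≤ K) (S : Finset ℤ) :
    ((S.filter fun k : ℤ => |(k : ℝ)| ≤ K).card : ℝ) ≤ 3 * K := by
  have hsub : (S.filter fun k : ℤ => |(k : ℝ)| ≤ K) ⊆ Finset.Icc (-⌊K⌋) ⌊K⌋ := fun k hk => by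
    have hk' : ((|k| : ℤ) : ℝ) ≤ K := by simpa using (Finset.mem_filter.1 hk).2
    exact Finset.mem_Icc.2 (abs_le.1 (Int.le_floor.2 hk'))
  have hcard := Finset.card_le_card hsub
  rw [Int.card_Icc] at hcard
  have hfloor : (0 : ℤ) ≤ ⌊K⌋ := Int.floor_nonneg.2 (by linarith)
  have hint : ((S.filter fun k : ℤ => |(k : ℝ)| ≤ K).card : ℤ) ≤ 2 * ⌊K⌋ + 1 := by omega
  have hreal : ((S.filter fun k : ℤ => |(k : ℝ)| ≤ K).card : ℝ) ≤ 2 * (⌊K⌋ : ℝ) + 1 := by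
    exact_mod_cast hint
  linarith [Int.floor_le K]

theorem sum_le_sum_filter_add_tail {a : ℤ → ℝ} {T : ℝ} (hσ : 1 < σ) (hK : 1 ≤ K) (hT : 0 ≤ T)
    (ha : ∀ k ≠ 0, a k ≤ |(k : ℝ)| ^ (-σ) * T) (S : Finset ℤ) :
    ∑ k ∈ S, a k ≤
      ∑ k ∈ S.filter fun k : ℤ => |(k : ℝ)| ≤ K, a k + 2 ^ σ / (σ - 1) * K ^ (1 - σ) * T := by
  rw [← Finset.sum_filter_add_sum_filter_not S (fun k : ℤ => |(k : ℝ)| ≤ K)]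
  have htail (k : ℤ) (hk : k ∈ S.filter fun k : ℤ => ¬ |(k : ℝ)| ≤ K) : K < |(k : ℝ)| :=
    not_le.1 (Finset.mem_filter.1 hk).2
  gcongr
  calc _ ≤ ∑ k ∈ S.filter fun k : ℤ => ¬ |(k : ℝ)| ≤ K, |(k : ℝ)| ^ (-σ) * T := by
        refine Finset.sum_le_sum fun k hk => ha k ?_
        rintro rfl
        have := htail 0 hk
        simp only [Int.cast_zero, abs_zero] at this
        linarith
    _ ≤ _ := by
        rw [← Finset.sum_mul]
        exact mul_le_mul_of_nonneg_right (sum_int_rpow_neg_le hσ hK htail) hT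

theorem rpow_mul_rpow_mul_rpow_eq {r R σ : ℝ} (hr : 0 < r) (hR : 0 < R) (hσ : 2 * σ - 1 ≠ 0) :
    ((R * r ^ ((σ - 1) / (2 * σ - 1))) ^ 2) ^ (1 - σ) * ((r * R) ^ (σ - 1) * R ^ (σ - 1)) =
      r ^ ((σ - 1) / (2 * σ - 1)) := by
  set θ : ℝ := (σ - 1) / (2 * σ - 1)
  have hθ : θ * (2 * σ - 1) = σ - 1 := div_mul_cancel₀ _ hσ
  have hr_exp : θ * ((2 : ℕ) * (1 - σ)) + (σ - 1) = θ := by push_cast; linear_combination -hθ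
  have hR_exp : (2 : ℕ) * (1 - σ) + (σ - 1) + (σ - 1) = 0 := by push_cast; ring
  calc _ = R ^ ((2 : ℕ) * (1 - σ) + (σ - 1) + (σ - 1)) *
        r ^ (θ * ((2 : ℕ) * (1 - σ)) + (σ - 1)) := by
        rw [← Real.rpow_natCast, ← Real.rpow_mul (by positivity),
          Real.mul_rpow hR.le (by positivity), Real.mul_rpow hr.le hR.le, ← Real.rpow_mul hr.le,
          Real.rpow_add hR, Real.rpow_add hR, Real.rpow_add hr]
        ring
    _ = r ^ θ := by rw [hr_exp, hR_exp, Real.rpow_zero, one_mul]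

end Sums

section Unitary

variable {𝕜 H : Type*} [RCLike 𝕜] [NormedAddCommGroup H] [InnerProductSpace 𝕜 H]

theorem sum_sq_norm_inner_le_of_row_sum_le {ι : Type*} {S : Finset ι} {v : ι → H} {D : ℝ}
    (hD0 : 0 ≤ D) (hD : ∀ j ∈ S, ∑ k ∈ S, ‖inner 𝕜 (v j) (v k)‖ ≤ D) (x : H) :
    ∑ k ∈ S, ‖inner 𝕜 (v k) x‖ ^ 2 ≤ D * ‖x‖ ^ 2 := by
  set c : ι → 𝕜 := fun k => inner 𝕜 (v k) x
  set s : ℝ := ∑ k ∈ S, ‖c k‖ ^ 2 with hs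
  set y : H := ∑ k ∈ S, c k • v k with hy
  have hs0 : 0 ≤ s := Finset.sum_nonneg fun _ _ => by positivity
  have hinner : inner 𝕜 y x = (s : 𝕜) := by
    rw [hy, sum_inner, hs]
    push_cast
    refine Finset.sum_congr rfl fun k _ => ?_
    rw [inner_smul_left, RCLike.conj_mul]
  have hsyx : s ≤ ‖y‖ * ‖x‖ := by
    simpa [hinner, abs_of_nonneg hs0] using norm_inner_le_norm (𝕜 := 𝕜) y x
  have hyD : ‖y‖ ^ 2 ≤ D * s := calc
    ‖y‖ ^ 2 = ‖(inner 𝕜 y y : 𝕜)‖ := by rw [inner_self_eq_norm_sq_to_K]; simp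
    _ ≤ ∑ j ∈ S, ∑ k ∈ S, ‖c j‖ * ‖c k‖ * ‖inner 𝕜 (v j) (v k)‖ := by
        rw [hy, sum_inner]
        refine (norm_sum_le _ _).trans (Finset.sum_le_sum fun j _ => ?_)
        rw [inner_sum]
        refine (norm_sum_le _ _).trans (Finset.sum_le_sum fun k _ => ?_)
        rw [inner_smul_left, inner_smul_right, norm_mul, norm_mul, RCLike.norm_conj, mul_assoc]
    _ ≤ D * s := sum_sum_mul_le_of_row_sum_le (fun _ _ => norm_nonneg _)
        (fun _ _ => norm_inner_symm _ _) hD fun k => ‖c k‖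
  have hss : s * s ≤ D * ‖x‖ ^ 2 * s := calc
    s * s ≤ (‖y‖ * ‖x‖) * (‖y‖ * ‖x‖) := mul_self_le_mul_self hs0 hsyx
    _ = ‖y‖ ^ 2 * ‖x‖ ^ 2 := by ring
    _ ≤ (D * s) * ‖x‖ ^ 2 := by gcongr
    _ = D * ‖x‖ ^ 2 * s := by ring
  rcases hs0.eq_or_lt with h | h
  · rw [← h]; positivity
  · exact le_of_mul_le_mul_right hss h

variable {U : H ≃ₗᵢ[𝕜] H}

theorem inner_zpow_zpow (U : H ≃ₗᵢ[𝕜] H) (j k : ℤ) (x y : H) :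
    inner 𝕜 ((U ^ j) x) ((U ^ k) y) = inner 𝕜 x ((U ^ (k - j)) y) := by
  rw [← (U ^ j).inner_map_map x, ← Function.comp_apply (f := U ^ j), ← LinearIsometryEquiv.coe_mul,
    ← zpow_add, add_sub_cancel]

theorem norm_inner_zpow_neg (U : H ≃ₗᵢ[𝕜] H) (k : ℤ) (x y : H) :
    ‖inner 𝕜 x ((U ^ (-k)) y)‖ = ‖inner 𝕜 y ((U ^ k) x)‖ := by
  rw [← zero_sub, ← inner_zpow_zpow, norm_inner_symm, zpow_zero, LinearIsometryEquiv.coe_one, id]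

theorem sum_sq_norm_inner_zpow_le {g : H} {D : ℝ}
    (hD : ∀ S : Finset ℤ, ∑ k ∈ S, ‖inner 𝕜 g ((U ^ k) g)‖ ≤ D) (x : H) (S : Finset ℤ) :
    ∑ k ∈ S, ‖inner 𝕜 g ((U ^ k) x)‖ ^ 2 ≤ D * ‖x‖ ^ 2 := by
  have hrow : ∀ j ∈ S, ∑ k ∈ S, ‖inner 𝕜 ((U ^ (-j)) g) ((U ^ (-k)) g)‖ ≤ D := fun j _ => by
    simp only [inner_zpow_zpow, neg_sub_neg]
    rw [← Finset.sum_image (f := fun k => ‖inner 𝕜 g ((U ^ k) g)‖) (g := fun k => j - k)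
      fun _ _ _ _ h => sub_right_injective h]
    exact hD _
  have hsieve := sum_sq_norm_inner_le_of_row_sum_le (by simpa using hD ∅) hrow x
  simpa only [norm_inner_symm _ x, norm_inner_zpow_neg U _ x g] using hsieve

/-- A family of vectors `g i` of size `b i` at the scale `Q i`, for a unitary `U` with dispersive
decay of order `σ`. In an `L²` space `b i * Q i ^ (σ - 1)` bounds the `L¹` norm of `g i`; with this
normalization the energy bound and the dispersive bound for `⟨g i, U ^ k (g i)⟩` are both
`(b i / Q i) ^ 2` at the time `k = Q i ^ 2`. -/
structure IsAtomFamily {ι : Type*} (U : H ≃ₗᵢ[𝕜] H) (σ : ℝ) (g : ι → H) (b Q : ι → ℝ) :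
    Prop where
  nonneg : ∀ i, 0 ≤ b i
  one_le_scale : ∀ i, 1 ≤ Q i
  norm_le : ∀ i, ‖g i‖ ≤ b i / Q i
  norm_inner_le : ∀ i j, ∀ k : ℤ, k ≠ 0 → ‖inner 𝕜 (g i) ((U ^ k) (g j))‖ ≤
    |(k : ℝ)| ^ (-σ) * ((b i * Q i ^ (σ - 1)) * (b j * Q j ^ (σ - 1)))

namespace IsAtomFamily

variable {ι : Type*} {σ : ℝ} {g : ι → H} {b Q : ι → ℝ}

theorem sum_norm_inner_self_le (h : IsAtomFamily U σ g b Q) (hσ : 1 < σ) (i : ι) (S : Finset ℤ) :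
    ∑ k ∈ S, ‖inner 𝕜 (g i) ((U ^ k) (g i))‖ ≤ (3 + 2 ^ σ / (σ - 1)) * b i ^ 2 := by
  have hQ : 1 ≤ Q i := h.one_le_scale i
  have hQ0 : 0 < Q i := one_pos.trans_le hQ
  have hhead : ∑ k ∈ S.filter fun k : ℤ => |(k : ℝ)| ≤ Q i ^ 2,
      ‖inner 𝕜 (g i) ((U ^ k) (g i))‖ ≤ 3 * b i ^ 2 := calc
    _ ≤ ∑ k ∈ S.filter fun k : ℤ => |(k : ℝ)| ≤ Q i ^ 2, (b i / Q i) ^ 2 := by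
        refine Finset.sum_le_sum fun k _ => (norm_inner_le_norm _ _).trans ?_
        rw [LinearIsometryEquiv.norm_map, ← sq]
        exact pow_le_pow_left₀ (norm_nonneg _) (h.norm_le i) 2
    _ ≤ 3 * Q i ^ 2 * (b i / Q i) ^ 2 := by
        rw [Finset.sum_const, nsmul_eq_mul]
        gcongr
        exact card_filter_abs_le (one_le_pow₀ hQ) S
    _ = 3 * b i ^ 2 := by field_simp
  have htail : (Q i ^ 2) ^ (1 - σ) * ((b i * Q i ^ (σ - 1)) * (b i * Q i ^ (σ - 1))) =
      b i ^ 2 := by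
    rw [sq (Q i), Real.mul_rpow hQ0.le hQ0.le, ← neg_sub σ, Real.rpow_neg hQ0.le]
    have := Real.rpow_pos_of_pos hQ0 (σ - 1)
    field_simp
  have hsplit := sum_le_sum_filter_add_tail (K := Q i ^ 2) hσ (one_le_pow₀ hQ) (mul_self_nonneg _)
    (h.norm_inner_le i i) S
  rw [mul_assoc, htail] at hsplit
  linarith

theorem sum_filter_norm_inner_le (h : IsAtomFamily U σ g b Q) (hσ : 1 < σ) (i j : ι) {L : ℝ}
    (hL : 1 ≤ L) (S : Finset ℤ) :
    ∑ k ∈ S.filter fun k : ℤ => |(k : ℝ)| ≤ L ^ 2, ‖inner 𝕜 (g i) ((U ^ k) (g j))‖ ≤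
      (3 + 2 ^ σ / (σ - 1)) * (b i * b j * (L / Q j)) := by
  have hτ : 0 ≤ 2 ^ σ / (σ - 1) := div_nonneg (by positivity) (by linarith)
  set τ : ℝ := 2 ^ σ / (σ - 1)
  have hQj : 0 < Q j := one_pos.trans_le (h.one_le_scale j)
  have hbi := h.nonneg i
  have hbj := h.nonneg j
  refine abs_le_of_sq_le_sq' (sq_sum_le_card_mul_sum_sq.trans ?_) (by positivity) |>.2
  calc _ ≤ (3 * L ^ 2) * ((3 + τ) * b i ^ 2 * (b j / Q j) ^ 2) := by
        gcongr
        · exact card_filter_abs_le (one_le_pow₀ hL) S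
        · refine (sum_sq_norm_inner_zpow_le (h.sum_norm_inner_self_le hσ i) _ _).trans ?_
          gcongr
          exact h.norm_le j
    _ = 3 * (3 + τ) * (b i * b j * (L / Q j)) ^ 2 := by field_simp
    _ ≤ ((3 + τ) * (b i * b j * (L / Q j))) ^ 2 := by
        rw [mul_pow (3 + τ), sq (3 + τ)]
        gcongr
        linarith

/-- The times `k` are split at `K = R² r ^ (2θ)`, where `R` is the larger scale and `r` the ratio
of the scales; this makes the energy and the dispersive contributions both of order `r ^ θ`. -/
theorem sum_norm_inner_le (h : IsAtomFamily U σ g b Q) (hσ : 1 < σ) {i j : ι} (hij : Q i ≤ Q j)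
    (S : Finset ℤ) :
    ∑ k ∈ S, ‖inner 𝕜 (g i) ((U ^ k) (g j))‖ ≤
      (3 + 2 * (2 ^ σ / (σ - 1))) * (b i * b j * (Q i / Q j) ^ ((σ - 1) / (2 * σ - 1))) := by
  have hQi : 1 ≤ Q i := h.one_le_scale i
  have hQj : 0 < Q j := by linarith
  have hbi := h.nonneg i
  have hbj := h.nonneg j
  set θ : ℝ := (σ - 1) / (2 * σ - 1) with hθ
  set r : ℝ := Q i / Q j
  have hrQ : r * Q j = Q i := div_mul_cancel₀ _ hQj.ne'
  have hr0 : 0 < r := div_pos (by linarith) hQj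
  have hK : 1 ≤ Q j * r ^ θ := calc
    1 ≤ Q j * r := by rwa [mul_comm, hrQ]
    _ ≤ Q j * r ^ θ := by
        gcongr
        have hθ1 : θ ≤ 1 := div_le_one_of_le₀ (by linarith) (by linarith)
        simpa using Real.rpow_le_rpow_of_exponent_ge hr0 (div_le_one_of_le₀ hij hQj.le) hθ1
  have hhead := h.sum_filter_norm_inner_le hσ i j hK S
  rw [mul_div_cancel_left₀ _ hQj.ne'] at hhead
  have hsplit := sum_le_sum_filter_add_tail (K := (Q j * r ^ θ) ^ 2) hσ (one_le_pow₀ hK)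
    (T := (b i * Q i ^ (σ - 1)) * (b j * Q j ^ (σ - 1))) (by positivity) (h.norm_inner_le i j) S
  have htail : ((Q j * r ^ θ) ^ 2) ^ (1 - σ) *
      ((b i * Q i ^ (σ - 1)) * (b j * Q j ^ (σ - 1))) = b i * b j * r ^ θ := by
    have hbalance := rpow_mul_rpow_mul_rpow_eq hr0 hQj (σ := σ) (by linarith)
    rw [← hθ, hrQ] at hbalance
    linear_combination b i * b j * hbalance
  rw [mul_assoc, htail] at hsplit
  linarith

theorem sum_norm_inner_le_pow_dist {g : ℕ → H} {b Q : ℕ → ℝ} (h : IsAtomFamily U σ g b Q)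
    (hσ : 1 < σ) {ρ : ℝ} (hρ0 : 0 ≤ ρ) (hρ1 : ρ ≤ 1) (hgrow : ∀ i, Q i ≤ ρ * Q (i + 1))
    (i j : ℕ) (S : Finset ℤ) :
    ∑ k ∈ S, ‖inner 𝕜 (g i) ((U ^ k) (g j))‖ ≤ (3 + 2 * (2 ^ σ / (σ - 1))) *
      (b i * b j * (ρ ^ ((σ - 1) / (2 * σ - 1))) ^ Nat.dist i j) := by
  have : 0 < σ - 1 := by linarith
  have hσ1 : 0 < 2 * σ - 1 := by linarith
  have hratio (i m : ℕ) : Q i ≤ ρ ^ m * Q (i + m) := by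
    induction m with
    | zero => simp
    | succ m ih => calc
        Q i ≤ ρ ^ m * Q (i + m) := ih
        _ ≤ ρ ^ m * (ρ * Q (i + m + 1)) := by gcongr; exact hgrow _
        _ = ρ ^ (m + 1) * Q (i + (m + 1)) := by rw [pow_succ, add_assoc]; ring
  wlog hij : i ≤ j generalizing i j S
  · have hswap := this j i (S.image Neg.neg) (by omega)
    rw [Finset.sum_image fun _ _ _ _ h => neg_injective h, Nat.dist_comm, mul_comm (b j)] at hswap
    simpa only [norm_inner_zpow_neg] using hswap
  have hQi : 0 ≤ Q i := zero_le_one.trans (h.one_le_scale i)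
  have hQj : 0 < Q j := one_pos.trans_le (h.one_le_scale j)
  have hr : Q i ≤ ρ ^ (j - i) * Q j := by simpa [Nat.add_sub_cancel' hij] using hratio i (j - i)
  have hQij : Q i ≤ Q j := hr.trans (mul_le_of_le_one_left hQj.le (pow_le_one₀ hρ0 hρ1))
  refine (h.sum_norm_inner_le hσ hQij S).trans ?_
  rw [Nat.dist_eq_sub_of_le hij, ← Real.rpow_mul_natCast hρ0, mul_comm _ ((j - i : ℕ) : ℝ),
    Real.rpow_mul hρ0, Real.rpow_natCast]
  have := h.nonneg i
  have := h.nonneg j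
  gcongr
  rwa [div_le_iff₀ hQj]

theorem sum_norm_inner_sum_le {g : ℕ → H} {b Q : ℕ → ℝ} (h : IsAtomFamily U σ g b Q)
    (hσ : 1 < σ) {ρ : ℝ} (hρ0 : 0 ≤ ρ) (hρ1 : ρ < 1) (hgrow : ∀ i, Q i ≤ ρ * Q (i + 1))
    (T : Finset ℕ) (S : Finset ℤ) :
    ∑ k ∈ S, ‖inner 𝕜 (∑ i ∈ T, g i) ((U ^ k) (∑ i ∈ T, g i))‖ ≤
      (3 + 2 * (2 ^ σ / (σ - 1))) * (2 * (1 - ρ ^ ((σ - 1) / (2 * σ - 1)))⁻¹) *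
        ∑ i ∈ T, b i ^ 2 := by
  have : 0 < σ - 1 := by linarith
  have hσ1 : 0 < 2 * σ - 1 := by linarith
  set η : ℝ := ρ ^ ((σ - 1) / (2 * σ - 1))
  have hη0 : 0 ≤ η := by positivity
  have hη1 : η < 1 := Real.rpow_lt_one hρ0 hρ1 (by positivity)
  calc _ ≤ ∑ k ∈ S, ∑ i ∈ T, ∑ j ∈ T, ‖inner 𝕜 (g i) ((U ^ k) (g j))‖ := by
        refine Finset.sum_le_sum fun k _ => ?_
        rw [map_sum, sum_inner]
        refine (norm_sum_le _ _).trans (Finset.sum_le_sum fun i _ => ?_)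
        rw [inner_sum]
        exact norm_sum_le _ _
    _ = ∑ i ∈ T, ∑ j ∈ T, ∑ k ∈ S, ‖inner 𝕜 (g i) ((U ^ k) (g j))‖ := by
        rw [Finset.sum_comm]
        exact Finset.sum_congr rfl fun i _ => Finset.sum_comm
    _ ≤ ∑ i ∈ T, ∑ j ∈ T, (3 + 2 * (2 ^ σ / (σ - 1))) * (b i * b j * η ^ Nat.dist i j) :=
        Finset.sum_le_sum fun i _ => Finset.sum_le_sum fun j _ =>
          h.sum_norm_inner_le_pow_dist hσ hρ0 hρ1.le hgrow i j S
    _ = (3 + 2 * (2 ^ σ / (σ - 1))) * ∑ i ∈ T, ∑ j ∈ T, b i * b j * η ^ Nat.dist i j := by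
        simp only [← Finset.mul_sum]
    _ ≤ (3 + 2 * (2 ^ σ / (σ - 1))) * (2 * (1 - η)⁻¹ * ∑ i ∈ T, b i ^ 2) := by
        gcongr
        exact sum_sum_mul_le_of_row_sum_le (fun _ _ => by positivity)
          (fun i j => by rw [Nat.dist_comm]) (fun i _ => sum_pow_dist_le hη0 hη1 T i) b
    _ = _ := (mul_assoc _ _ _).symm

end IsAtomFamily

end Unitary

section Levels

theorem sum_filter_pow_rpow_le {ρ a y : ℝ} (hρ0 : 0 < ρ) (hρ1 : ρ < 1) (ha : 0 < a) (hy : 0 ≤ y)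
    (S : Finset ℕ) :
    ∑ i ∈ S.filter (fun i => ρ ^ i ≤ y), (ρ ^ i) ^ a ≤ (1 - ρ ^ a)⁻¹ * y ^ a := by
  have hη0 : 0 < ρ ^ a := by positivity
  have hη1 : ρ ^ a < 1 := Real.rpow_lt_one hρ0.le hρ1 ha
  have : 0 < (1 - ρ ^ a)⁻¹ := inv_one_sub_rpow_pos hρ0.le hρ1 ha
  obtain hempty | hne := (S.filter fun i => ρ ^ i ≤ y).eq_empty_or_nonempty
  · rw [hempty, Finset.sum_empty]
    positivity
  set F := S.filter fun i => ρ ^ i ≤ y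
  set m := F.min' hne
  have hm (i : ℕ) (hi : i ∈ F) : m ≤ i := F.min'_le i hi
  calc ∑ i ∈ F, (ρ ^ i) ^ a = ∑ i ∈ F, (ρ ^ m) ^ a * (ρ ^ a) ^ (i - m) :=
        Finset.sum_congr rfl fun i hi => by
          rw [← Real.rpow_pow_comm hρ0.le, ← Real.rpow_pow_comm hρ0.le, ← pow_add,
            Nat.add_sub_cancel' (hm i hi)]
    _ = (∑ i ∈ F, (ρ ^ a) ^ (i - m)) * (ρ ^ m) ^ a := by rw [← Finset.mul_sum, mul_comm]
    _ ≤ (1 - ρ ^ a)⁻¹ * y ^ a := by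
        gcongr
        · refine sum_pow_le_of_injOn hη0.le hη1 fun i hi j hj hij => ?_
          have := hm i hi
          have := hm j hj
          omega
        · exact (Finset.mem_filter.1 (F.min'_mem hne)).2

variable {X E : Type*} [NormedAddCommGroup E]

/-- The dyadic superlevel set `{2⁻ⁱ ≤ ‖ψ‖}`. -/
def levelSet (ψ : X → E) (i : ℕ) : Set X := {x | 2⁻¹ ^ i ≤ ‖ψ x‖}

theorem levelSet_mono (ψ : X → E) : Monotone (levelSet ψ) := fun _ _ hij _ hx =>
  (pow_le_pow_of_le_one (a := (2⁻¹ : ℝ)) (by norm_num) (by norm_num) hij).trans hx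

variable [MeasurableSpace X] {μ : Measure X}

theorem norm_sq_eq_integral_norm_sq (x : Lp E 2 μ) : ‖x‖ ^ 2 = ∫ t, ‖x t‖ ^ 2 ∂μ := by
  have h0 : 0 ≤ ∫ t, ‖x t‖ ^ (2 : ℝ) ∂μ := integral_nonneg fun _ => by positivity
  rw [Lp.norm_def, (Lp.memLp x).eLpNorm_eq_integral_rpow_norm two_ne_zero ENNReal.ofNat_ne_top,
    ENNReal.toReal_ofNat, ENNReal.toReal_ofReal (by positivity), ← Real.rpow_mul_natCast h0]
  norm_num

theorem integrable_norm_sq (x : Lp E 2 μ) : Integrable (fun t => ‖x t‖ ^ 2) μ :=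
  (Lp.memLp x).integrable_norm_pow two_ne_zero

theorem norm_sq_le_mul_integral_norm {g : Lp E 2 μ} {c : ℝ} (hg : Integrable g μ)
    (hc : ∀ᵐ x ∂μ, ‖g x‖ ≤ c) : ‖g‖ ^ 2 ≤ c * ∫ x, ‖g x‖ ∂μ := by
  rw [norm_sq_eq_integral_norm_sq, ← integral_const_mul]
  refine integral_mono_ae (integrable_norm_sq g) (hg.norm.const_mul c) ?_
  filter_upwards [hc] with x hx
  rw [sq]
  gcongr

theorem measurableSet_levelSet {ψ : X → E} (hψ : StronglyMeasurable ψ) (i : ℕ) :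
    MeasurableSet (levelSet ψ i) :=
  measurableSet_le measurable_const hψ.norm.measurable

/-- The mass `∫ ‖ψ‖` above the level `2⁻ⁱ`. -/
def levelMass (μ : Measure X) (ψ : X → E) (i : ℕ) : ℝ := ∫ x in levelSet ψ i, ‖ψ x‖ ∂μ

theorem levelMass_nonneg (ψ : X → E) (i : ℕ) : 0 ≤ levelMass μ ψ i :=
  integral_nonneg fun _ => norm_nonneg _

theorem integrableOn_levelSet (ψ : Lp E 2 μ) (i : ℕ) : IntegrableOn ψ (levelSet ψ i) μ := by
  have hψ : StronglyMeasurable ψ := Lp.stronglyMeasurable ψ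
  refine ((integrable_norm_sq ψ).const_mul (2 ^ i)).integrableOn.mono'
    hψ.aestronglyMeasurable ?_
  filter_upwards [ae_restrict_mem (measurableSet_levelSet hψ i)] with x hx
  have hx' : (2⁻¹ : ℝ) ^ i ≤ ‖ψ x‖ := hx
  rw [inv_pow, inv_le_iff_one_le_mul₀ (by positivity)] at hx'
  nlinarith [norm_nonneg (ψ x)]

theorem levelMass_mono (ψ : Lp E 2 μ) : Monotone (levelMass μ ψ) := fun _ j hij =>
  setIntegral_mono_set (integrableOn_levelSet ψ j).norm (.of_forall fun _ => norm_nonneg _)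
    (levelSet_mono _ hij).eventuallyLE

theorem integrable_indicator_norm (ψ : Lp E 2 μ) (i : ℕ) :
    Integrable ((levelSet ψ i).indicator fun x => ‖ψ x‖) μ :=
  (integrable_indicator_iff (measurableSet_levelSet (Lp.stronglyMeasurable ψ) i)).2
    (integrableOn_levelSet ψ i).norm

theorem sum_rpow_mul_levelMass_le (ψ : Lp E 2 μ) {a : ℝ} (ha : 0 < a)
    (hp : Integrable (fun x => ‖ψ x‖ ^ (a + 1)) μ) (S : Finset ℕ) :
    ∑ i ∈ S, (2⁻¹ ^ i) ^ a * levelMass μ ψ i ≤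
      (1 - 2⁻¹ ^ a)⁻¹ * ∫ x, ‖ψ x‖ ^ (a + 1) ∂μ := by
  have hmeas := measurableSet_levelSet (Lp.stronglyMeasurable ψ)
  have hi : ∀ i ∈ S, Integrable
      (fun x => (2⁻¹ ^ i) ^ a * (levelSet ψ i).indicator (fun x => ‖ψ x‖) x) μ := fun i _ =>
    (integrable_indicator_norm ψ i).const_mul _
  simp only [levelMass, ← integral_indicator (hmeas _), ← integral_const_mul]
  rw [← integral_finsetSum _ hi]
  refine integral_mono (integrable_finsetSum _ hi) (hp.const_mul _) fun x => ?_
  calc ∑ i ∈ S, (2⁻¹ ^ i) ^ a * (levelSet ψ i).indicator (fun x => ‖ψ x‖) x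
      = (∑ i ∈ S.filter fun i => 2⁻¹ ^ i ≤ ‖ψ x‖, (2⁻¹ ^ i) ^ a) * ‖ψ x‖ := by
        rw [Finset.sum_filter, Finset.sum_mul]
        refine Finset.sum_congr rfl fun i _ => ?_
        by_cases hx : x ∈ levelSet ψ i
        · rw [Set.indicator_of_mem hx, if_pos (show 2⁻¹ ^ i ≤ ‖ψ x‖ from hx)]
        · rw [Set.indicator_of_notMem hx, if_neg (show ¬2⁻¹ ^ i ≤ ‖ψ x‖ from hx), mul_zero,
            zero_mul]
    _ ≤ (1 - 2⁻¹ ^ a)⁻¹ * ‖ψ x‖ ^ a * ‖ψ x‖ := by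
        gcongr
        exact sum_filter_pow_rpow_le (by norm_num) (by norm_num) ha (norm_nonneg _) S
    _ = (1 - 2⁻¹ ^ a)⁻¹ * ‖ψ x‖ ^ (a + 1) := by
        rw [mul_assoc, Real.rpow_add_one' (norm_nonneg _) (by linarith)]

/-- The restriction of `ψ` to its dyadic superlevel set of index `i`. -/
def levelTrunc (ψ : Lp E 2 μ) (i : ℕ) : Lp E 2 μ :=
  ((Lp.memLp ψ).indicator (measurableSet_levelSet (Lp.stronglyMeasurable ψ) i)).toLp _

theorem coeFn_levelTrunc (ψ : Lp E 2 μ) (i : ℕ) :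
    levelTrunc ψ i =ᵐ[μ] (levelSet ψ i).indicator ψ :=
  MemLp.coeFn_toLp _

theorem norm_levelTrunc_le (ψ : Lp E 2 μ) (i : ℕ) : ‖levelTrunc ψ i‖ ≤ ‖ψ‖ := by
  refine Lp.norm_le_norm_of_ae_le ?_
  filter_upwards [coeFn_levelTrunc ψ i] with x hx
  exact hx ▸ norm_indicator_le_norm_self _ _

theorem tendsto_levelTrunc (ψ : Lp E 2 μ) :
    Filter.Tendsto (levelTrunc ψ) Filter.atTop (nhds ψ) := by
  have hdiff (i : ℕ) : ‖levelTrunc ψ i - ψ‖ ^ 2 =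
      ∫ x, ‖(levelSet ψ i).indicator ψ x - ψ x‖ ^ 2 ∂μ := by
    rw [norm_sq_eq_integral_norm_sq]
    refine integral_congr_ae ?_
    filter_upwards [Lp.coeFn_sub (levelTrunc ψ i) ψ, coeFn_levelTrunc ψ i] with x hsub htrunc
    rw [hsub, Pi.sub_apply, htrunc]
  have hψ : StronglyMeasurable ψ := Lp.stronglyMeasurable ψ
  have hlevel : Filter.Tendsto (fun i : ℕ => (2⁻¹ : ℝ) ^ i) Filter.atTop (nhds 0) :=
    tendsto_pow_atTop_nhds_zero_of_lt_one (by norm_num) (by norm_num)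
  have hsq : Filter.Tendsto (fun i => ‖levelTrunc ψ i - ψ‖ ^ 2) Filter.atTop (nhds 0) := by
    simp only [hdiff]
    rw [← integral_zero X ℝ]
    refine tendsto_integral_of_dominated_convergence (fun x => ‖ψ x‖ ^ 2) (fun i => ?_)
      (integrable_norm_sq ψ) (fun i => .of_forall fun x => ?_) (.of_forall fun x => ?_)
    · exact (((hψ.indicator (measurableSet_levelSet hψ i)).sub hψ).norm.pow 2).aestronglyMeasurable
    · by_cases h : x ∈ levelSet ψ i <;> simp [h]
    · refine tendsto_const_nhds.congr' ?_
      by_cases h0 : ψ x = 0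
      · exact .of_forall fun i => by
          simp only [Set.indicator_apply_eq_zero.2 fun _ => h0, h0, sub_self, norm_zero,
            ne_eq, OfNat.ofNat_ne_zero, not_false_eq_true, zero_pow]
      · filter_upwards [hlevel.eventually_le_const (norm_pos_iff.2 h0)] with i hi
        simp [Set.indicator_of_mem (show x ∈ levelSet ψ i from hi)]
  rw [tendsto_iff_norm_sub_tendsto_zero]
  simpa using hsq.sqrt

/-- The part of `ψ` between the levels `2⁻ⁱ` and `2 * 2⁻ⁱ`; the atom with index `0` is the part of
`ψ` above the level `1`. -/
def levelAtom (ψ : Lp E 2 μ) : ℕ → Lp E 2 μ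
  | 0 => levelTrunc ψ 0
  | i + 1 => levelTrunc ψ (i + 1) - levelTrunc ψ i

theorem sum_range_levelAtom (ψ : Lp E 2 μ) (N : ℕ) :
    ∑ i ∈ Finset.range (N + 1), levelAtom ψ i = levelTrunc ψ N := by
  induction N with
  | zero => simp [levelAtom]
  | succ N ih => rw [Finset.sum_range_succ, ih, levelAtom, add_sub_cancel]

theorem coeFn_levelAtom_succ (ψ : Lp E 2 μ) (i : ℕ) :
    levelAtom ψ (i + 1) =ᵐ[μ] (levelSet ψ (i + 1) \ levelSet ψ i).indicator ψ := by
  filter_upwards [Lp.coeFn_sub (levelTrunc ψ (i + 1)) (levelTrunc ψ i),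
    coeFn_levelTrunc ψ (i + 1), coeFn_levelTrunc ψ i] with x hsub hsucc hi
  rw [levelAtom, hsub, Pi.sub_apply, hsucc, hi,
    Set.indicator_sdiff (levelSet_mono _ i.le_succ), Pi.sub_apply]

theorem norm_levelAtom_le (ψ : Lp E 2 μ) (i : ℕ) :
    ∀ᵐ x ∂μ, ‖levelAtom ψ i x‖ ≤ (levelSet ψ i).indicator (fun x => ‖ψ x‖) x := by
  cases i with
  | zero =>
    filter_upwards [coeFn_levelTrunc ψ 0] with x hx
    rw [levelAtom, hx, norm_indicator_eq_indicator_norm]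
  | succ i =>
    filter_upwards [coeFn_levelAtom_succ ψ i] with x hx
    rw [hx, norm_indicator_eq_indicator_norm]
    exact Set.indicator_le_indicator_of_subset Set.sdiff_subset (fun _ => norm_nonneg _) x

theorem norm_levelAtom_succ_le (ψ : Lp E 2 μ) (i : ℕ) :
    ∀ᵐ x ∂μ, ‖levelAtom ψ (i + 1) x‖ ≤ 2⁻¹ ^ i := by
  filter_upwards [coeFn_levelAtom_succ ψ i] with x hx
  rw [hx]
  by_cases h : x ∈ levelSet ψ (i + 1) \ levelSet ψ i
  · rw [Set.indicator_of_mem h]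
    exact (not_le.1 h.2).le
  · rw [Set.indicator_of_notMem h, norm_zero]
    positivity

theorem integrable_levelAtom (ψ : Lp E 2 μ) (i : ℕ) : Integrable (levelAtom ψ i) μ :=
  (integrable_indicator_norm ψ i).mono' (Lp.aestronglyMeasurable _) (norm_levelAtom_le ψ i)

theorem integral_norm_levelAtom_le (ψ : Lp E 2 μ) (i : ℕ) :
    ∫ x, ‖levelAtom ψ i x‖ ∂μ ≤ levelMass μ ψ i := by
  rw [levelMass, ← integral_indicator (measurableSet_levelSet (Lp.stronglyMeasurable ψ) i)]
  exact integral_mono_ae (integrable_levelAtom ψ i).norm (integrable_indicator_norm ψ i)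
    (norm_levelAtom_le ψ i)

theorem sq_norm_levelAtom_le {ψ : Lp E 2 μ} (hψ : ‖ψ‖ ≤ 1) (i : ℕ) :
    ‖levelAtom ψ i‖ ^ 2 ≤ 2 * 2⁻¹ ^ i * (1 + levelMass μ ψ i) := by
  have hJ := levelMass_nonneg (μ := μ) ψ i
  cases i with
  | zero =>
    have h1 : ‖levelAtom ψ 0‖ ≤ 1 := (norm_levelTrunc_le ψ 0).trans hψ
    calc ‖levelAtom ψ 0‖ ^ 2 ≤ 1 := pow_le_one₀ (norm_nonneg _) h1
      _ ≤ _ := by rw [pow_zero]; linarith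
  | succ i => calc
      ‖levelAtom ψ (i + 1)‖ ^ 2 ≤ 2⁻¹ ^ i * ∫ x, ‖levelAtom ψ (i + 1) x‖ ∂μ :=
        norm_sq_le_mul_integral_norm (integrable_levelAtom ψ _) (norm_levelAtom_succ_le ψ i)
      _ ≤ 2⁻¹ ^ i * (1 + levelMass μ ψ (i + 1)) := by
        gcongr
        exact (integral_norm_levelAtom_le ψ _).trans (by linarith)
      _ = 2 * 2⁻¹ ^ (i + 1) * (1 + levelMass μ ψ (i + 1)) := by rw [pow_succ]; ring

end Levels

section Dispersive

variable {X E : Type*} [MeasurableSpace X] {μ : Measure X} [NormedAddCommGroup E] {σ : ℝ}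

/-- The scale of the `i`-th level atom of `ψ`, for dispersive decay of order `σ`; it is chosen
so that `‖levelAtom ψ i‖₂ ≤ b / Q` and `‖levelAtom ψ i‖₁ ≤ b * Q ^ (σ - 1)` for the same `b`. -/
def levelScale (μ : Measure X) (ψ : X → E) (σ : ℝ) (i : ℕ) : ℝ :=
  ((1 + levelMass μ ψ i) / 2⁻¹ ^ i) ^ (1 / (2 * σ))

/-- The size `b` of the `i`-th level atom of `ψ`, in the sense of `IsAtomFamily`. -/
def levelSize (μ : Measure X) (ψ : X → E) (σ : ℝ) (i : ℕ) : ℝ :=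
  √2 * (1 + levelMass μ ψ i) * levelScale μ ψ σ i ^ (1 - σ)

theorem one_le_levelScale (hσ : 0 ≤ σ) (ψ : X → E) (i : ℕ) : 1 ≤ levelScale μ ψ σ i := by
  refine Real.one_le_rpow ((one_le_div (by positivity)).2 ?_) (by positivity)
  have hl : (2⁻¹ : ℝ) ^ i ≤ 1 := pow_le_one₀ (by norm_num) (by norm_num)
  linarith [levelMass_nonneg (μ := μ) ψ i]

theorem levelScale_le_mul_levelScale_succ (hσ : 0 ≤ σ) (ψ : Lp E 2 μ) (i : ℕ) :
    levelScale μ ψ σ i ≤ 2⁻¹ ^ (1 / (2 * σ)) * levelScale μ ψ σ (i + 1) := by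
  have hJ (i : ℕ) : 0 ≤ levelMass μ ψ i := levelMass_nonneg ψ i
  have hJi := hJ i
  have hJi' := hJ (i + 1)
  rw [levelScale, levelScale, ← Real.mul_rpow (by norm_num) (by positivity)]
  refine Real.rpow_le_rpow (by positivity) ?_ (by positivity)
  calc (1 + levelMass μ ψ i) / 2⁻¹ ^ i ≤ (1 + levelMass μ ψ (i + 1)) / 2⁻¹ ^ i := by
        gcongr
        exact levelMass_mono ψ i.le_succ
    _ = 2⁻¹ * ((1 + levelMass μ ψ (i + 1)) / 2⁻¹ ^ (i + 1)) := by
        rw [pow_succ]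
        field_simp

theorem levelSize_nonneg (ψ : X → E) (i : ℕ) : 0 ≤ levelSize μ ψ σ i := by
  have hJ := levelMass_nonneg (μ := μ) ψ i
  unfold levelSize levelScale
  positivity

theorem levelSize_mul_levelScale_rpow (hσ : 0 ≤ σ) (ψ : X → E) (i : ℕ) :
    levelSize μ ψ σ i * levelScale μ ψ σ i ^ (σ - 1) = √2 * (1 + levelMass μ ψ i) := by
  have hQ : 0 < levelScale μ ψ σ i := one_pos.trans_le (one_le_levelScale hσ ψ i)
  rw [levelSize, mul_assoc, ← Real.rpow_add hQ, sub_add_sub_cancel, sub_self, Real.rpow_zero,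
    mul_one]

theorem sq_levelSize_div_levelScale (hσ : 0 < σ) (ψ : X → E) (i : ℕ) :
    (levelSize μ ψ σ i / levelScale μ ψ σ i) ^ 2 = 2 * 2⁻¹ ^ i * (1 + levelMass μ ψ i) := by
  have hQ : 0 < levelScale μ ψ σ i := one_pos.trans_le (one_le_levelScale hσ.le ψ i)
  have hJ := levelMass_nonneg (μ := μ) ψ i
  have hscale : levelScale μ ψ σ i ^ σ * levelScale μ ψ σ i ^ σ =
      (1 + levelMass μ ψ i) / 2⁻¹ ^ i := by
    rw [← Real.rpow_add hQ, levelScale, ← Real.rpow_mul (by positivity), ← two_mul,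
      one_div_mul_cancel (by positivity), Real.rpow_one]
  rw [levelSize, mul_div_assoc, ← Real.rpow_sub_one hQ.ne', sub_sub_cancel_left,
    Real.rpow_neg hQ.le, mul_pow, mul_pow, Real.sq_sqrt zero_le_two, inv_pow, sq (_ ^ σ), hscale]
  field_simp

theorem sq_levelSize (hσ : 0 < σ) (ψ : X → E) (i : ℕ) :
    levelSize μ ψ σ i ^ 2 = 2 *
      ((2⁻¹ ^ i) ^ ((σ - 1) / (σ + 1)) * (1 + levelMass μ ψ i)) ^ (1 + 1 / σ) := by
  have hJ := levelMass_nonneg (μ := μ) ψ i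
  have hm : 0 < 1 + levelMass μ ψ i := by positivity
  have hl : (0 : ℝ) < 2⁻¹ ^ i := by positivity
  rw [levelSize, levelScale]
  set m := 1 + levelMass μ ψ i
  set l : ℝ := 2⁻¹ ^ i
  calc (√2 * m * ((m / l) ^ (1 / (2 * σ))) ^ (1 - σ)) ^ 2
      = 2 * (m ^ (2 : ℝ) * (m / l) ^ (1 / (2 * σ) * (1 - σ) * (2 : ℕ))) := by
        rw [mul_pow, mul_pow, Real.sq_sqrt zero_le_two, Real.rpow_mul_natCast (by positivity),
          Real.rpow_mul (by positivity), Real.rpow_two, mul_assoc]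
    _ = 2 * (l ^ (1 - 1 / σ) * m ^ (1 + 1 / σ)) := by
        have hexp : 1 / (2 * σ) * (1 - σ) * (2 : ℕ) = -(1 - 1 / σ) := by
          push_cast; field_simp; ring
        rw [hexp, Real.rpow_neg (by positivity), Real.div_rpow hm.le hl.le, inv_div,
          mul_div_left_comm, ← Real.rpow_sub hm]
        ring_nf
    _ = 2 * (l ^ ((σ - 1) / (σ + 1)) * m) ^ (1 + 1 / σ) := by
        rw [Real.mul_rpow (by positivity) hm.le, ← Real.rpow_mul hl.le]
        congr 3
        field_simp

theorem sum_rpow_le_rpow_sum {ι : Type*} (S : Finset ι) {x : ι → ℝ} (hx : ∀ i, 0 ≤ x i) {s : ℝ}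
    (hs : 1 ≤ s) : ∑ i ∈ S, x i ^ s ≤ (∑ i ∈ S, x i) ^ s := by
  have hsplit {t : ℝ} (ht : 0 ≤ t) : t ^ s = t * t ^ (s - 1) := by
    rw [← Real.rpow_one_add' ht (by linarith), add_sub_cancel]
  rw [hsplit (Finset.sum_nonneg fun i _ => hx i), Finset.sum_mul]
  refine Finset.sum_le_sum fun i hi => ?_
  rw [hsplit (hx i)]
  have := hx i
  gcongr
  exact Finset.single_le_sum (fun j _ => hx j) hi

theorem sum_sq_levelSize_le (hσ : 1 < σ) {ψ : Lp E 2 μ}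
    (hint : Integrable (fun x => ‖ψ x‖ ^ (2 * σ / (σ + 1))) μ)
    (hle : ∫ x, ‖ψ x‖ ^ (2 * σ / (σ + 1)) ∂μ ≤ 1) (S : Finset ℕ) :
    ∑ i ∈ S, levelSize μ ψ σ i ^ 2 ≤
      2 * (2 * (1 - 2⁻¹ ^ ((σ - 1) / (σ + 1)))⁻¹) ^ (1 + 1 / σ) := by
  have ha : 0 < (σ - 1) / (σ + 1) := div_pos (by linarith) (by linarith)
  have hexp : 2 * σ / (σ + 1) = (σ - 1) / (σ + 1) + 1 := by
    field_simp [show σ + 1 ≠ 0 by linarith]; ring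
  rw [hexp] at hint hle
  set a := (σ - 1) / (σ + 1)
  have hη : 0 < (1 - (2⁻¹ : ℝ) ^ a)⁻¹ :=
    inv_one_sub_rpow_pos (by norm_num) (by norm_num) ha
  have hm (i : ℕ) : 0 ≤ (2⁻¹ ^ i) ^ a * (1 + levelMass μ ψ i) := by
    have := levelMass_nonneg (μ := μ) ψ i
    positivity
  have hlevels : ∑ i ∈ S, ((2⁻¹ : ℝ) ^ i) ^ a ≤ (1 - 2⁻¹ ^ a)⁻¹ := by
    have h := sum_filter_pow_rpow_le (ρ := 2⁻¹) (by norm_num) (by norm_num) ha zero_le_one S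
    rwa [Real.one_rpow, mul_one, Finset.filter_true_of_mem fun i _ =>
      pow_le_one₀ (by norm_num) (by norm_num)] at h
  have hmass : ∑ i ∈ S, (2⁻¹ ^ i) ^ a * levelMass μ ψ i ≤ (1 - 2⁻¹ ^ a)⁻¹ :=
    (sum_rpow_mul_levelMass_le ψ ha hint S).trans (mul_le_of_le_one_right hη.le hle)
  simp only [sq_levelSize (show 0 < σ by linarith), ← Finset.mul_sum]
  gcongr
  refine (sum_rpow_le_rpow_sum S hm (by linarith [show 0 < 1 / σ by positivity])).trans
    (Real.rpow_le_rpow (Finset.sum_nonneg fun i _ => hm i) ?_ (by positivity))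
  simp only [mul_one_add, Finset.sum_add_distrib, two_mul]
  exact add_le_add hlevels hmass

variable {𝕜 : Type*} [RCLike 𝕜] [InnerProductSpace 𝕜 E] {U : Lp E 2 μ ≃ₗᵢ[𝕜] Lp E 2 μ}

/-- The powers of the unitary `U` of `L²` map `L¹` to `L^∞` with norms `‖U ^ k‖ ≤ |k| ^ (-σ)`;
this is expressed by duality, on `L¹ ∩ L²`. -/
def HasDispersiveDecay (U : Lp E 2 μ ≃ₗᵢ[𝕜] Lp E 2 μ) (σ : ℝ) : Prop :=
  ∀ g h : Lp E 2 μ, Integrable g μ → Integrable h μ → ∀ k : ℤ, k ≠ 0 →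
    ‖inner 𝕜 g ((U ^ k) h)‖ ≤ |(k : ℝ)| ^ (-σ) * ((∫ x, ‖g x‖ ∂μ) * ∫ x, ‖h x‖ ∂μ)

/-- The bound that dispersive decay of order `σ` gives for `∑ k, ‖⟪ψ, U ^ k ψ⟫‖` when `ψ` has norm
at most `1` both in `L²` and in `L^(2σ/(σ+1))`. -/
def dispersiveConst (σ : ℝ) : ℝ :=
  (3 + 2 * (2 ^ σ / (σ - 1))) *
    (2 * (1 - (2⁻¹ ^ (1 / (2 * σ))) ^ ((σ - 1) / (2 * σ - 1)))⁻¹) *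
    (2 * (2 * (1 - 2⁻¹ ^ ((σ - 1) / (σ + 1)))⁻¹) ^ (1 + 1 / σ))

theorem dispersiveConst_pos (hσ : 1 < σ) : 0 < dispersiveConst σ := by
  have hσ1 : 0 < σ - 1 := by linarith
  have : 0 < (2 : ℝ) ^ σ / (σ - 1) := by positivity
  have hρ : (2⁻¹ : ℝ) ^ (1 / (2 * σ)) < 1 :=
    Real.rpow_lt_one (by norm_num) (by norm_num) (by positivity)
  have h₁ := inv_one_sub_rpow_pos (by positivity) hρ
    (a := (σ - 1) / (2 * σ - 1)) (div_pos hσ1 (by linarith))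
  have h₂ := inv_one_sub_rpow_pos (ρ := 2⁻¹) (a := (σ - 1) / (σ + 1)) (by norm_num) (by norm_num)
    (by positivity)
  unfold dispersiveConst
  positivity

namespace HasDispersiveDecay

theorem isAtomFamily_levelAtom (hU : HasDispersiveDecay U σ) (hσ : 0 < σ) {ψ : Lp E 2 μ}
    (hψ : ‖ψ‖ ≤ 1) :
    IsAtomFamily U σ (levelAtom ψ) (levelSize μ ψ σ) (levelScale μ ψ σ) where
  nonneg := levelSize_nonneg ψ
  one_le_scale := one_le_levelScale hσ.le ψ
  norm_le i := by
    have hQ := zero_le_one.trans (one_le_levelScale (μ := μ) hσ.le ψ i)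
    refine abs_le_of_sq_le_sq' ?_ (div_nonneg (levelSize_nonneg ψ i) hQ) |>.2
    rw [sq_levelSize_div_levelScale hσ]
    exact sq_norm_levelAtom_le hψ i
  norm_inner_le i j k hk := by
    have hL1 (i : ℕ) : ∫ x, ‖levelAtom ψ i x‖ ∂μ ≤ √2 * (1 + levelMass μ ψ i) := calc
      _ ≤ levelMass μ ψ i := integral_norm_levelAtom_le ψ i
      _ ≤ 1 + levelMass μ ψ i := le_add_of_nonneg_left zero_le_one
      _ ≤ √2 * (1 + levelMass μ ψ i) := le_mul_of_one_le_left
        (add_nonneg zero_le_one (levelMass_nonneg ψ i)) (Real.one_le_sqrt.2 one_le_two)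
    have hnonneg : 0 ≤ √2 * (1 + levelMass μ ψ i) :=
      (integral_nonneg fun _ => norm_nonneg _).trans (hL1 i)
    rw [levelSize_mul_levelScale_rpow hσ.le, levelSize_mul_levelScale_rpow hσ.le]
    refine (hU _ _ (integrable_levelAtom ψ i) (integrable_levelAtom ψ j) k hk).trans ?_
    gcongr
    exacts [hL1 i, hL1 j]

theorem sum_norm_inner_zpow_self_le (hU : HasDispersiveDecay U σ) (hσ : 1 < σ) {ψ : Lp E 2 μ}
    (hψ : ‖ψ‖ ≤ 1) (hint : Integrable (fun x => ‖ψ x‖ ^ (2 * σ / (σ + 1))) μ)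
    (hle : ∫ x, ‖ψ x‖ ^ (2 * σ / (σ + 1)) ∂μ ≤ 1) (S : Finset ℤ) :
    ∑ k ∈ S, ‖inner 𝕜 ψ ((U ^ k) ψ)‖ ≤ dispersiveConst σ := by
  have hσ0 : 0 < σ := by linarith
  have hcont : Continuous fun x : Lp E 2 μ => ∑ k ∈ S, ‖inner 𝕜 x ((U ^ k) x)‖ :=
    continuous_finsetSum _ fun k _ => (continuous_id.inner (U ^ k).continuous).norm
  refine le_of_tendsto ((hcont.tendsto _).comp (tendsto_levelTrunc ψ)) (.of_forall fun N => ?_)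
  rw [Function.comp_apply, ← sum_range_levelAtom]
  have hρ1 : (2⁻¹ : ℝ) ^ (1 / (2 * σ)) < 1 :=
    Real.rpow_lt_one (by norm_num) (by norm_num) (by positivity)
  refine ((hU.isAtomFamily_levelAtom hσ0 hψ).sum_norm_inner_sum_le hσ (by positivity) hρ1
    (levelScale_le_mul_levelScale_succ hσ0.le ψ) _ S).trans ?_
  have hη := inv_one_sub_rpow_pos (by positivity) hρ1
    (a := (σ - 1) / (2 * σ - 1)) (div_pos (by linarith) (by linarith))
  have : 0 ≤ (2 : ℝ) ^ σ / (σ - 1) := div_nonneg (by positivity) (by linarith)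
  exact mul_le_mul_of_nonneg_left (sum_sq_levelSize_le hσ hint hle _) (by positivity)

theorem sum_norm_inner_zpow_self_le_of_eLpNorm_le_one (hU : HasDispersiveDecay U σ) (hσ : 1 < σ)
    {ψ : Lp E 2 μ} (hψ : ‖ψ‖ ≤ 1)
    (hψp : eLpNorm ψ (ENNReal.ofReal (2 * σ / (σ + 1))) μ ≤ 1) (S : Finset ℤ) :
    ∑ k ∈ S, ‖inner 𝕜 ψ ((U ^ k) ψ)‖ ≤ dispersiveConst σ := by
  have hp : 0 < 2 * σ / (σ + 1) := div_pos (by linarith) (by linarith)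
  have hp0 : ENNReal.ofReal (2 * σ / (σ + 1)) ≠ 0 := (ENNReal.ofReal_pos.2 hp).ne'
  have hmem : MemLp ψ (ENNReal.ofReal (2 * σ / (σ + 1))) μ :=
    ⟨Lp.aestronglyMeasurable ψ, hψp.trans_lt ENNReal.one_lt_top⟩
  have hint := hmem.integrable_norm_rpow hp0 ENNReal.ofReal_ne_top
  rw [hmem.eLpNorm_eq_integral_rpow_norm hp0 ENNReal.ofReal_ne_top, ENNReal.ofReal_le_one,
    ENNReal.toReal_ofReal hp.le] at hψp
  rw [ENNReal.toReal_ofReal hp.le] at hint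
  refine hU.sum_norm_inner_zpow_self_le hσ hψ hint (le_of_not_gt fun hlt => ?_) S
  exact hψp.not_gt (Real.one_lt_rpow hlt (inv_pos.2 hp))

theorem sum_norm_inner_zpow_self_le_mul_sq (hU : HasDispersiveDecay U σ) (hσ : 1 < σ)
    {ψ : Lp E 2 μ} (hψ : MemLp ψ (ENNReal.ofReal (2 * σ / (σ + 1))) μ) (S : Finset ℤ) :
    ∑ k ∈ S, ‖inner 𝕜 ψ ((U ^ k) ψ)‖ ≤ dispersiveConst σ *
      (‖ψ‖ + (eLpNorm ψ (ENNReal.ofReal (2 * σ / (σ + 1))) μ).toReal) ^ 2 := by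
  set p := ENNReal.ofReal (2 * σ / (σ + 1))
  obtain rfl | hψ0 := eq_or_ne ψ 0
  · simpa using mul_nonneg (dispersiveConst_pos hσ).le (sq_nonneg _)
  set r := ‖ψ‖ + (eLpNorm ψ p μ).toReal
  have hr : 0 < r := add_pos_of_pos_of_nonneg (norm_pos_iff.2 hψ0) ENNReal.toReal_nonneg
  set φ : Lp E 2 μ := ((r⁻¹ : ℝ) : 𝕜) • ψ
  have hψφ : ψ = (r : 𝕜) • φ := by
    rw [smul_smul, ← RCLike.ofReal_mul, mul_inv_cancel₀ hr.ne', RCLike.ofReal_one, one_smul]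
  have hφ : ‖φ‖ ≤ 1 := by
    rw [norm_smul, RCLike.norm_ofReal, abs_of_pos (inv_pos.2 hr)]
    exact inv_mul_le_one_of_le₀ (le_add_of_nonneg_right ENNReal.toReal_nonneg) hr.le
  have hφp : eLpNorm φ p μ ≤ 1 := by
    rw [eLpNorm_congr_ae (Lp.coeFn_smul _ ψ), eLpNorm_const_smul, ← ofReal_norm,
      RCLike.norm_ofReal, abs_of_pos (inv_pos.2 hr), ← ENNReal.ofReal_toReal hψ.eLpNorm_ne_top,
      ← ENNReal.ofReal_mul (inv_pos.2 hr).le, ENNReal.ofReal_le_one]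
    exact inv_mul_le_one_of_le₀ (le_add_of_nonneg_left (norm_nonneg _)) hr.le
  have hinner (k : ℤ) : ‖inner 𝕜 ψ ((U ^ k) ψ)‖ = r ^ 2 * ‖inner 𝕜 φ ((U ^ k) φ)‖ := by
    rw [hψφ, map_smul, inner_smul_left, inner_smul_right, norm_mul, norm_mul, RCLike.norm_conj,
      RCLike.norm_ofReal, abs_of_pos hr, ← mul_assoc, sq]
  simp only [hinner, ← Finset.mul_sum]
  rw [mul_comm]
  gcongr
  exact hU.sum_norm_inner_zpow_self_le_of_eLpNorm_le_one hσ hφ hφp S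

theorem tsum_sq_enorm_inner_zpow_le (hU : HasDispersiveDecay U σ) (hσ : 1 < σ) {ψ : Lp E 2 μ}
    (hψ : MemLp ψ (ENNReal.ofReal (2 * σ / (σ + 1))) μ) (x : Lp E 2 μ) :
    ∑' k : ℤ, ‖inner 𝕜 ψ ((U ^ k) x)‖ₑ ^ 2 ≤ ENNReal.ofReal (dispersiveConst σ) * ‖x‖ₑ ^ 2 *
      (‖ψ‖ₑ + eLpNorm ψ (ENNReal.ofReal (2 * σ / (σ + 1))) μ) ^ 2 := by
  rw [ENNReal.tsum_eq_iSup_sum]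
  refine iSup_le fun S => ?_
  have h := ENNReal.ofReal_le_ofReal
    (sum_sq_norm_inner_zpow_le (hU.sum_norm_inner_zpow_self_le_mul_sq hσ hψ) x S)
  have hC := (dispersiveConst_pos hσ).le
  rw [ENNReal.ofReal_sum_of_nonneg fun _ _ => sq_nonneg _, ENNReal.ofReal_mul (by positivity),
    ENNReal.ofReal_mul hC, ENNReal.ofReal_pow (by positivity),
    ENNReal.ofReal_add (norm_nonneg _) ENNReal.toReal_nonneg,
    ENNReal.ofReal_toReal hψ.eLpNorm_ne_top, mul_right_comm] at h
  simpa only [ENNReal.ofReal_pow (norm_nonneg _), ofReal_norm] using h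

end HasDispersiveDecay

end Dispersive

section Multiplication

variable {X : Type*} [TopologicalSpace X] [MeasurableSpace X] [OpensMeasurableSpace X]
  {μ : Measure X}

theorem memLp_circle_mul {p : ℝ≥0∞} (θ : C(X, Circle)) {x : X → ℂ} (hx : MemLp x p μ) :
    MemLp (fun ξ => θ ξ * x ξ) p μ := by
  refine hx.of_le (.mul ?_ hx.aestronglyMeasurable) (.of_forall fun ξ => ?_)
  · exact (continuous_subtype_val.comp θ.continuous).aestronglyMeasurable
  · rw [norm_mul, Circle.norm_coe, one_mul]

/-- Multiplication by a continuous unimodular function, as an isometry of `L²`. -/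
def circleMulIsometry (θ : C(X, Circle)) : Lp ℂ 2 μ →ₗᵢ[ℂ] Lp ℂ 2 μ where
  toFun x := (memLp_circle_mul θ (Lp.memLp x)).toLp _
  map_add' x y := by
    rw [← MemLp.toLp_add]
    refine MemLp.toLp_congr _ _ ?_
    filter_upwards [Lp.coeFn_add x y] with ξ h
    simp only [h, Pi.add_apply, mul_add]
  map_smul' c x := by
    rw [RingHom.id_apply, ← MemLp.toLp_const_smul]
    refine MemLp.toLp_congr _ _ ?_
    filter_upwards [Lp.coeFn_smul c x] with ξ h
    simp only [h, Pi.smul_apply, smul_eq_mul, mul_left_comm]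
  norm_map' x := by
    simp only [LinearMap.coe_mk, AddHom.coe_mk]
    rw [Lp.norm_toLp, Lp.norm_def]
    congr 1
    exact eLpNorm_congr_norm_ae (.of_forall fun ξ => by rw [norm_mul, Circle.norm_coe, one_mul])

theorem coeFn_circleMulIsometry (θ : C(X, Circle)) (x : Lp ℂ 2 μ) :
    circleMulIsometry θ x =ᵐ[μ] fun ξ => θ ξ * x ξ :=
  (memLp_circle_mul θ (Lp.memLp x)).coeFn_toLp

theorem circleMulIsometry_one (x : Lp ℂ 2 μ) : circleMulIsometry 1 x = x := by
  refine Lp.ext ?_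
  filter_upwards [coeFn_circleMulIsometry 1 x] with ξ h
  rw [h, ContinuousMap.one_apply, Circle.coe_one, one_mul]

theorem circleMulIsometry_mul (θ η : C(X, Circle)) (x : Lp ℂ 2 μ) :
    circleMulIsometry (θ * η) x = circleMulIsometry θ (circleMulIsometry η x) := by
  refine Lp.ext ?_
  filter_upwards [coeFn_circleMulIsometry (θ * η) x, coeFn_circleMulIsometry η x,
    coeFn_circleMulIsometry θ (circleMulIsometry η x)] with ξ hθη hη hθ
  rw [hθη, hθ, hη, ContinuousMap.mul_apply, Circle.coe_mul, mul_assoc]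

/-- Multiplication by continuous unimodular functions, as a unitary representation on `L²`. -/
def circleMul : C(X, Circle) →* (Lp ℂ 2 μ ≃ₗᵢ[ℂ] Lp ℂ 2 μ) where
  toFun θ := .ofSurjective (circleMulIsometry θ) fun x =>
    ⟨circleMulIsometry θ⁻¹ x, by rw [← circleMulIsometry_mul, mul_inv_cancel,
      circleMulIsometry_one]⟩
  map_one' := LinearIsometryEquiv.ext circleMulIsometry_one
  map_mul' θ η := LinearIsometryEquiv.ext (circleMulIsometry_mul θ η)

theorem coeFn_circleMul (θ : C(X, Circle)) (x : Lp ℂ 2 μ) :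
    circleMul θ x =ᵐ[μ] fun ξ => θ ξ * x ξ :=
  coeFn_circleMulIsometry θ x

theorem inner_circleMul (θ : C(X, Circle)) (x y : Lp ℂ 2 μ) :
    inner ℂ x (circleMul θ y) = ∫ ξ, θ ξ * y ξ * (starRingEnd ℂ) (x ξ) ∂μ := by
  rw [L2.inner_def]
  refine integral_congr_ae ?_
  filter_upwards [coeFn_circleMul θ y] with ξ h
  rw [h, RCLike.inner_apply]

end Multiplication

/-- The Schrödinger phase `e^{2πi|ξ|²}`. -/
def schrodingerPhase (V : Type*) [SeminormedAddCommGroup V] : C(V, Circle) where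
  toFun ξ := Real.fourierChar (‖ξ‖ ^ 2)
  continuous_toFun := Real.continuous_fourierChar.comp (by fun_prop)

theorem coe_schrodingerPhase_zpow {V : Type*} [SeminormedAddCommGroup V] (k : ℤ) (ξ : V) :
    ((schrodingerPhase V ^ k) ξ : ℂ) = cexp (2 * π * I * k * (‖ξ‖ ^ 2 : ℝ)) := by
  rw [ContinuousMap.zpow_apply, Circle.coe_zpow, schrodingerPhase, ContinuousMap.coe_mk,
    Real.fourierChar_apply, ← Complex.exp_int_mul]
  congr 1
  push_cast
  ring

section Fourier

variable {V : Type*} [NormedAddCommGroup V] [InnerProductSpace ℝ V] [FiniteDimensional ℝ V]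
  [MeasurableSpace V] [BorelSpace V]

theorem integral_fourier_mul_eq_integral_mul_fourier {g h : V → ℂ} (hg : Integrable g)
    (hh : Integrable h) : ∫ ξ, 𝓕 g ξ * h ξ = ∫ x, g x * 𝓕 h x := by
  simpa using! VectorFourier.integral_bilin_fourierIntegral_eq_flip (.mul ℂ ℂ) (L := innerₗ V)
    Real.continuous_fourierChar continuous_inner hg hh

theorem continuous_fourier_of_integrable {g : V → ℂ} (hg : Integrable g) : Continuous (𝓕 g) :=
  VectorFourier.fourierIntegral_continuous (L := innerₗ V) Real.continuous_fourierChar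
    continuous_inner hg

theorem norm_fourier_le_integral_norm (g : V → ℂ) (w : V) : ‖𝓕 g w‖ ≤ ∫ x, ‖g x‖ :=
  VectorFourier.norm_fourierIntegral_le_integral_norm _ _ _ _ _

theorem coeFn_fourier_toLp {g : V → ℂ} (hg : Integrable g) (hg2 : MemLp g 2) :
    (𝓕 (hg2.toLp g) : Lp ℂ 2 (volume : Measure V)) =ᵐ[volume] 𝓕 g := by
  refine ae_eq_of_integral_contDiff_smul_eq
    ((Lp.memLp _).locallyIntegrable (by norm_num))
    (continuous_fourier_of_integrable hg).locallyIntegrable fun φ hφ hφc => ?_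
  have hφ₁ : HasCompactSupport (Complex.ofRealCLM ∘ φ) := hφc.comp_left rfl
  have hφ₂ : ContDiff ℝ (⊤ : ℕ∞) (Complex.ofRealCLM ∘ φ) := by fun_prop
  set Φ : SchwartzMap V ℂ := hφ₁.toSchwartzMap hφ₂
  have hΦ (z : V → ℂ) : ∫ x, φ x • z x = ∫ x, Φ x * z x := by
    simp only [real_smul]
    rfl
  have hdual := congrArg (fun T => T Φ) (Lp.fourier_toTemperedDistribution_eq (hg2.toLp g))
  simp only [TemperedDistribution.fourier_apply, Lp.toTemperedDistribution_apply] at hdual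
  calc ∫ x, φ x • (𝓕 (hg2.toLp g) : Lp ℂ 2 (volume : Measure V)) x
      = ∫ x, Φ x * (𝓕 (hg2.toLp g) : Lp ℂ 2 (volume : Measure V)) x := hΦ _
    _ = ∫ x, 𝓕 Φ x • hg2.toLp g x := hdual.symm
    _ = ∫ x, 𝓕 (Φ : V → ℂ) x * g x := by
        refine integral_congr_ae ?_
        filter_upwards [hg2.coeFn_toLp] with x hx
        rw [hx, smul_eq_mul, SchwartzMap.fourier_coe]
    _ = ∫ x, Φ x * 𝓕 g x := integral_fourier_mul_eq_integral_mul_fourier Φ.integrable hg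
    _ = ∫ x, φ x • 𝓕 g x := (hΦ _).symm

theorem norm_integral_mul_le_mul_integral_norm {h m : V → ℂ} {A : ℝ} (hh : Integrable h)
    (hm : ∀ x, ‖m x‖ ≤ A) : ‖∫ x, h x * m x‖ ≤ A * ∫ x, ‖h x‖ := by
  rw [← integral_const_mul]
  refine norm_integral_le_of_norm_le (hh.norm.const_mul A) (.of_forall fun x => ?_)
  rw [norm_mul, mul_comm]
  gcongr
  exact hm x

theorem norm_exp_neg_ofReal_div_le_one {b : ℂ} (hb : 0 < b.re) {r : ℝ} (hr : 0 ≤ r) :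
    ‖cexp (-r / b)‖ ≤ 1 := by
  rw [Complex.norm_exp, Real.exp_le_one_iff, ← ofReal_neg, div_eq_mul_inv, re_ofReal_mul, inv_re]
  exact mul_nonpos_of_nonpos_of_nonneg (neg_nonpos.2 hr) (div_nonneg hb.le (normSq_nonneg b))

theorem norm_fourier_gaussian_le {b : ℂ} (hb : 0 < b.re) (x y : V) :
    ‖𝓕 (fun v : V => cexp (-b * ‖v‖ ^ 2 + 2 * π * I * (inner ℝ x v : ℝ))) y‖ ≤
      (π / ‖b‖) ^ (Module.finrank ℝ V / 2 : ℝ) := by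
  have hscale : ‖(π / b : ℂ) ^ (Module.finrank ℝ V / 2 : ℂ)‖ =
      (π / ‖b‖) ^ (Module.finrank ℝ V / 2 : ℝ) := by
    rw [show (Module.finrank ℝ V / 2 : ℂ) = ((Module.finrank ℝ V / 2 : ℝ) : ℂ) by push_cast; rfl,
      norm_cpow_real, norm_div, norm_real, Real.norm_of_nonneg Real.pi_pos.le]
  have hexp : (-π ^ 2 * ‖x - y‖ ^ 2 / b : ℂ) = -((π ^ 2 * ‖x - y‖ ^ 2 : ℝ) : ℂ) / b := by
    push_cast; ring
  rw [fourier_gaussian_innerProductSpace' hb, norm_mul, hscale, hexp]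
  exact mul_le_of_le_one_right (by positivity)
    (norm_exp_neg_ofReal_div_le_one hb (by positivity))

theorem integrable_gaussian_mul_conj_fourier {g : V → ℂ} (hg : Integrable g) {b : ℂ}
    (hb : 0 < b.re) : Integrable fun ξ => cexp (-b * ‖ξ‖ ^ 2) * (starRingEnd ℂ) (𝓕 g ξ) := by
  have hgauss : Integrable fun ξ : V => cexp (-b * ‖ξ‖ ^ 2) := by
    simpa using GaussianFourier.integrable_cexp_neg_mul_sq_norm_add hb 0 (0 : V)
  refine hgauss.mul_bdd (c := ∫ x, ‖g x‖)
    (Complex.continuous_conj.comp (continuous_fourier_of_integrable hg)).aestronglyMeasurable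
    (.of_forall fun ξ => ?_)
  rw [RCLike.norm_conj]
  exact norm_fourier_le_integral_norm g ξ

theorem norm_fourier_gaussian_mul_conj_fourier_le {g : V → ℂ} (hg : Integrable g) {b : ℂ}
    (hb : 0 < b.re) (x : V) :
    ‖𝓕 (fun ξ => cexp (-b * ‖ξ‖ ^ 2) * (starRingEnd ℂ) (𝓕 g ξ)) x‖ ≤
      (π / ‖b‖) ^ (Module.finrank ℝ V / 2 : ℝ) * ∫ y, ‖g y‖ := by
  have hb' : 0 < ((starRingEnd ℂ) b).re := hb
  have hconj : (starRingEnd ℂ) (𝓕 (fun ξ => cexp (-b * ‖ξ‖ ^ 2) * (starRingEnd ℂ) (𝓕 g ξ)) x) =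
      ∫ ξ, 𝓕 g ξ *
        cexp (-(starRingEnd ℂ) b * ‖ξ‖ ^ 2 + 2 * π * I * (inner ℝ x ξ : ℝ)) := by
    rw [Real.fourier_eq', ← integral_conj]
    refine integral_congr_ae (.of_forall fun ξ => ?_)
    simp only [smul_eq_mul, map_mul, ← Complex.exp_conj, Complex.conj_conj, map_neg,
      map_pow, Complex.conj_ofReal, Complex.conj_I, Complex.exp_add, real_inner_comm ξ x]
    push_cast
    ring_nf
  rw [← RCLike.norm_conj, hconj, integral_fourier_mul_eq_integral_mul_fourier hg
    (GaussianFourier.integrable_cexp_neg_mul_sq_norm_add hb' (2 * π * I) x), ← RCLike.norm_conj b]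
  exact norm_integral_mul_le_mul_integral_norm hg (norm_fourier_gaussian_le hb' x)

theorem norm_integral_gaussian_mul_fourier_le {g h : V → ℂ} (hg : Integrable g)
    (hh : Integrable h) {b : ℂ} (hb : 0 < b.re) :
    ‖∫ ξ, cexp (-b * ‖ξ‖ ^ 2) * (𝓕 h ξ * (starRingEnd ℂ) (𝓕 g ξ))‖ ≤
      (π / ‖b‖) ^ (Module.finrank ℝ V / 2 : ℝ) * (∫ x, ‖g x‖) * ∫ x, ‖h x‖ := by
  simp only [mul_left_comm (cexp _)]
  rw [integral_fourier_mul_eq_integral_mul_fourier hh (integrable_gaussian_mul_conj_fourier hg hb)]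
  exact norm_integral_mul_le_mul_integral_norm hh (norm_fourier_gaussian_mul_conj_fourier_le hg hb)

open Filter Topology in
theorem tendsto_integral_gaussian_mul {F : V → ℂ} (hF : Integrable F) (t : ℝ) :
    Tendsto (fun ε : ℝ => ∫ ξ, cexp (-(ε - t * I) * ‖ξ‖ ^ 2) * F ξ) (𝓝[>] 0)
      (𝓝 (∫ ξ, cexp (t * I * ‖ξ‖ ^ 2) * F ξ)) := by
  refine tendsto_integral_filter_of_dominated_convergence (fun ξ => ‖F ξ‖) (.of_forall fun ε => ?_)
    ?_ hF.norm (.of_forall fun ξ => ?_)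
  · exact Continuous.aestronglyMeasurable (by fun_prop) |>.mul hF.aestronglyMeasurable
  · filter_upwards [self_mem_nhdsWithin] with ε hε
    refine .of_forall fun ξ => ?_
    rw [norm_mul, Complex.norm_exp]
    refine mul_le_of_le_one_left (norm_nonneg _) (Real.exp_le_one_iff.2 ?_)
    rw [← ofReal_pow, re_mul_ofReal]
    simpa using mul_nonneg (le_of_lt hε) (sq_nonneg ‖ξ‖)
  · have hcont : Continuous fun ε : ℝ => cexp (-(ε - t * I) * ‖ξ‖ ^ 2) * F ξ := by fun_prop
    refine (hcont.tendsto' 0 _ ?_).mono_left nhdsWithin_le_nhds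
    rw [ofReal_zero, zero_sub, neg_neg]

theorem norm_integral_exp_mul_fourier_le {g h : V → ℂ} (hg : Integrable g) (hh : Integrable h)
    (hgh : Integrable fun ξ => 𝓕 h ξ * (starRingEnd ℂ) (𝓕 g ξ)) {t : ℝ} (ht : t ≠ 0) :
    ‖∫ ξ, cexp (t * I * ‖ξ‖ ^ 2) * (𝓕 h ξ * (starRingEnd ℂ) (𝓕 g ξ))‖ ≤
      (π / |t|) ^ (Module.finrank ℝ V / 2 : ℝ) * (∫ x, ‖g x‖) * ∫ x, ‖h x‖ := by
  refine le_of_tendsto (tendsto_integral_gaussian_mul hgh t).norm ?_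
  filter_upwards [self_mem_nhdsWithin] with ε hε
  refine (norm_integral_gaussian_mul_fourier_le hg hh (by simpa using hε)).trans ?_
  have ht' : |t| ≤ ‖(ε - t * I : ℂ)‖ := by
    simpa using Complex.abs_im_le_norm (ε - t * I)
  have := abs_pos.2 ht
  gcongr

theorem integrable_fourier_mul_conj_fourier {g h : V → ℂ} (hg : Integrable g) (hg2 : MemLp g 2)
    (hh : Integrable h) (hh2 : MemLp h 2) :
    Integrable fun ξ => 𝓕 h ξ * (starRingEnd ℂ) (𝓕 g ξ) :=
  MemLp.integrable_mul ((Lp.memLp _).ae_eq (coeFn_fourier_toLp hh hh2))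
    ((Lp.memLp _).ae_eq (coeFn_fourier_toLp hg hg2)).star

/-- The unitary `𝓕⁻¹ e^{2πi|ξ|²} 𝓕` of `L²`, which is the free Schrödinger propagator `e^{itΔ}` at
the time `t = -1/(2π)`. -/
def schrodinger (V : Type*) [NormedAddCommGroup V] [InnerProductSpace ℝ V]
    [FiniteDimensional ℝ V] [MeasurableSpace V] [BorelSpace V] :
    Lp ℂ 2 (volume : Measure V) ≃ₗᵢ[ℂ] Lp ℂ 2 (volume : Measure V) :=
  MulAut.conj (Lp.fourierTransformₗᵢ V ℂ)⁻¹ (circleMul (schrodingerPhase V))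

theorem schrodinger_zpow_apply (k : ℤ) (x : Lp ℂ 2 (volume : Measure V)) :
    (schrodinger V ^ k) x =
      (Lp.fourierTransformₗᵢ V ℂ).symm
        (circleMul (schrodingerPhase V ^ k) (Lp.fourierTransformₗᵢ V ℂ x)) := by
  rw [schrodinger, ← map_zpow, ← map_zpow, MulAut.conj_apply, inv_inv]
  rfl

theorem inner_schrodinger_zpow (k : ℤ) (x y : Lp ℂ 2 (volume : Measure V)) :
    inner ℂ x ((schrodinger V ^ k) y) =
      inner ℂ (𝓕 x) (circleMul (schrodingerPhase V ^ k) (𝓕 y)) := by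
  rw [schrodinger_zpow_apply, ← LinearIsometryEquiv.inner_map_map (Lp.fourierTransformₗᵢ V ℂ),
    LinearIsometryEquiv.apply_symm_apply]
  rfl

theorem inner_schrodinger_zpow_toLp {g h : V → ℂ} (hg : Integrable g) (hg2 : MemLp g 2)
    (hh : Integrable h) (hh2 : MemLp h 2) (k : ℤ) :
    inner ℂ (hg2.toLp g) ((schrodinger V ^ k) (hh2.toLp h)) =
      ∫ ξ, cexp (2 * π * I * k * (‖ξ‖ ^ 2 : ℝ)) * 𝓕 h ξ * (starRingEnd ℂ) (𝓕 g ξ) := by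
  rw [inner_schrodinger_zpow, inner_circleMul]
  refine integral_congr_ae ?_
  filter_upwards [coeFn_fourier_toLp hg hg2, coeFn_fourier_toLp hh hh2] with ξ hgξ hhξ
  rw [hgξ, hhξ, coe_schrodingerPhase_zpow]

theorem norm_inner_schrodinger_zpow_toLp_le {g h : V → ℂ} (hg : Integrable g) (hg2 : MemLp g 2)
    (hh : Integrable h) (hh2 : MemLp h 2) {k : ℤ} (hk : k ≠ 0) :
    ‖inner ℂ (hg2.toLp g) ((schrodinger V ^ k) (hh2.toLp h))‖ ≤
      |(k : ℝ)| ^ (-(Module.finrank ℝ V / 2 : ℝ)) * ((∫ x, ‖g x‖) * ∫ x, ‖h x‖) := by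
  have hk' : 0 < |(k : ℝ)| := abs_pos.2 (Int.cast_ne_zero.2 hk)
  have ht : 2 * π * k ≠ 0 := by positivity
  have hscale : π / |2 * π * k| ≤ |(k : ℝ)|⁻¹ := by
    rw [abs_mul, abs_of_pos Real.two_pi_pos, div_le_iff₀ (by positivity)]
    field_simp
    norm_num
  calc _ = ‖∫ ξ, cexp ((2 * π * k : ℝ) * I * ‖ξ‖ ^ 2) * (𝓕 h ξ * (starRingEnd ℂ) (𝓕 g ξ))‖ := by
        rw [inner_schrodinger_zpow_toLp hg hg2 hh hh2]
        refine congrArg _ (integral_congr_ae (.of_forall fun ξ => ?_))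
        push_cast
        ring_nf
    _ ≤ (π / |2 * π * k|) ^ (Module.finrank ℝ V / 2 : ℝ) * (∫ x, ‖g x‖) * ∫ x, ‖h x‖ :=
        norm_integral_exp_mul_fourier_le hg hh
          (integrable_fourier_mul_conj_fourier hg hg2 hh hh2) ht
    _ ≤ |(k : ℝ)|⁻¹ ^ (Module.finrank ℝ V / 2 : ℝ) * (∫ x, ‖g x‖) * ∫ x, ‖h x‖ := by gcongr
    _ = _ := by rw [Real.inv_rpow hk'.le, ← Real.rpow_neg hk'.le, mul_assoc]

theorem hasDispersiveDecay_schrodinger :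
    HasDispersiveDecay (schrodinger V) (Module.finrank ℝ V / 2) := fun g h hg hh k hk => by
  simpa only [Lp.toLp_coeFn] using
    norm_inner_schrodinger_zpow_toLp_le hg (Lp.memLp g) hh (Lp.memLp h) hk

end Fourier

theorem memLp_of_le_of_le {X E : Type*} [MeasurableSpace X] {μ : Measure X}
    [NormedAddCommGroup E] {f : X → E} {p q r : ℝ} (hp : 0 < p) (hpr : p ≤ r) (hrq : r ≤ q)
    (hfp : MemLp f (ENNReal.ofReal p) μ) (hfq : MemLp f (ENNReal.ofReal q) μ) :
    MemLp f (ENNReal.ofReal r) μ := by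
  have hint {s : ℝ} (hs : p ≤ s) (hfs : MemLp f (ENNReal.ofReal s) μ) :
      Integrable (fun x => ‖f x‖ ^ s) μ := by
    simpa only [ENNReal.toReal_ofReal (hp.le.trans hs)] using hfs.integrable_norm_rpow
      (ENNReal.ofReal_pos.2 (hp.trans_le hs)).ne' ENNReal.ofReal_ne_top
  have hr : 0 < r := hp.trans_le hpr
  rw [← integrable_norm_rpow_iff hfp.aestronglyMeasurable (ENNReal.ofReal_pos.2 hr).ne'
    ENNReal.ofReal_ne_top, ENNReal.toReal_ofReal hr.le]
  refine ((hint le_rfl hfp).add (hint (hpr.trans hrq) hfq)).mono'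
    (hfp.aestronglyMeasurable.norm.aemeasurable.pow_const r).aestronglyMeasurable
    (.of_forall fun x => ?_)
  rw [Real.norm_of_nonneg (by positivity), Pi.add_apply]
  obtain hle | hge := le_total ‖f x‖ 1
  · exact le_add_of_le_of_nonneg (Real.rpow_le_rpow_of_exponent_ge' (norm_nonneg _) hle hp.le hpr)
      (by positivity)
  · exact le_add_of_nonneg_of_le (by positivity) (Real.rpow_le_rpow_of_exponent_le hge hrq)

theorem discrete_kato_smoothing_sobolev_general (V : Type*) [NormedAddCommGroup V]
    [InnerProductSpace ℝ V] [FiniteDimensional ℝ V] [MeasurableSpace V] [BorelSpace V] {n : ℕ}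
    (hV : Module.finrank ℝ V = n) (hn : 3 ≤ n) :
    ∃ C : ℝ≥0, 0 < C ∧ ∀ f ψ : V → ℂ, Integrable f → MemLp f 2 → Integrable ψ → MemLp ψ 2 →
      (∑' k : ℤ, (‖∫ ξ : V, cexp (2 * (π : ℂ) * I * (k : ℂ) * ((‖ξ‖ ^ 2 : ℝ) : ℂ)) *
          𝓕 f ξ * (starRingEnd ℂ) (𝓕 ψ ξ)‖₊ : ℝ≥0∞) ^ 2) ≤
        (C : ℝ≥0∞) * eLpNorm f 2 volume ^ 2 *
          (eLpNorm ψ 2 volume +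
            eLpNorm ψ (ENNReal.ofReal (2 * (n : ℝ) / ((n : ℝ) + 2))) volume) ^ 2 := by
  have hn' : (3 : ℝ) ≤ n := mod_cast hn
  have hσ : 1 < (n / 2 : ℝ) := by linarith
  have hp : 2 * (n : ℝ) / (n + 2) = 2 * (n / 2) / (n / 2 + 1) := by field_simp
  refine ⟨(dispersiveConst (n / 2)).toNNReal, Real.toNNReal_pos.2 (dispersiveConst_pos hσ),
    fun f ψ hf hf2 hψ hψ2 => ?_⟩
  have hψp : MemLp ψ (ENNReal.ofReal (2 * n / (n + 2))) :=
    memLp_of_le_of_le (p := 1) (q := 2) one_pos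
      ((one_le_div (by positivity)).2 (by linarith)) ((div_le_iff₀ (by positivity)).2 (by linarith))
      (by simpa using memLp_one_iff_integrable.2 hψ) (by simpa using hψ2)
  have hdecay := hasDispersiveDecay_schrodinger (V := V)
  rw [hV] at hdecay
  have h := hdecay.tsum_sq_enorm_inner_zpow_le hσ (ψ := hψ2.toLp ψ)
    (by rw [← hp]; exact hψp.ae_eq hψ2.coeFn_toLp.symm) (hf2.toLp f)
  simp only [← hp, Lp.enorm_toLp, eLpNorm_congr_ae hψ2.coeFn_toLp,
    inner_schrodinger_zpow_toLp hψ hψ2 hf hf2] at h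
  exact h

/-- Discrete-time Kato smoothing bound with an unweighted right-hand
side built from `L²`, `L^{2n/(n+2)}` and the homogeneous Sobolev norm
`‖ψ‖_{Ẇ^{α, 2γ/(γ+2)}} = ‖F⁻¹(|ξ|^α ψ̂)‖_{L^{2γ/(γ+2)}}`. -/
theorem discrete_kato_smoothing_sobolev (n : ℕ) (hn : 3 ≤ n) (γ α : ℝ)
    (hγ₁ : ((n : ℝ) + 1) / 2 ≤ γ) (hγ₂ : γ ≤ (n : ℝ) + 1)
    (hα : 0 ≤ α) (hαγ : 1 < α + 1 / γ) :
    ∃ C : ℝ≥0, 0 < C ∧ ∀ f ψ : SchwartzMap (EuclideanSpace ℝ (Fin n)) ℂ,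
      (∑' k : ℤ, (‖∫ ξ : EuclideanSpace ℝ (Fin n),
          Complex.exp (2 * (π : ℂ) * I * (k : ℂ) * ((‖ξ‖ ^ 2 : ℝ) : ℂ)) *
            𝓕 (⇑f) ξ * (starRingEnd ℂ) (𝓕 (⇑ψ) ξ)‖₊ : ℝ≥0∞) ^ 2)
        ≤ (C : ℝ≥0∞) * eLpNorm (⇑f) 2 volume ^ 2 *
            (eLpNorm (⇑ψ) 2 volume
              + eLpNorm (⇑ψ) (ENNReal.ofReal (2 * (n : ℝ) / ((n : ℝ) + 2))) volume
              + eLpNorm (𝓕⁻ (fun ξ : EuclideanSpace ℝ (Fin n) =>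
                  ((‖ξ‖ ^ α : ℝ) : ℂ) * 𝓕 (⇑ψ) ξ))
                  (ENNReal.ofReal (2 * γ / (γ + 2))) volume) ^ 2 := by
  obtain ⟨C, hC0, hC⟩ := discrete_kato_smoothing_sobolev_general _ finrank_euclideanSpace_fin hn
  exact ⟨C, hC0, fun f ψ => (hC f ψ f.integrable (f.memLp 2) ψ.integrable (ψ.memLp 2)).trans
    (mul_le_mul_right (pow_le_pow_left₀ zero_le le_self_add 2) _)⟩
end
end
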